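/- arXiv:2508.12521 — 3 statements merged into one kernel-verified Lean document; each statement's English description precedes it below -/
import Mathlib

section
/- For n ≥ 1, the family of images in DR_n of the monomials ∏_{i=1}^n x_{σ_i}^{d_i(P)} y_{σ_i}^{a_i}, as P = (π, σ) ranges over all parking functions of semilength n (with a the area sequence of π and d(P) the dinv sequence of P), forms a ℂ-vector-space basis of DR_n. -/
open MvPolynomial

/-- The area sequence of a Dyck path of semilength `n`: a tuple
`a : Fin n → ℕ` with first entry zero and `a (i+1) ≤ a i + 1`. -/
def IsDyckArea {n : ℕ} (a : Fin n → ℕ) : Prop :=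
  (∀ i : Fin n, (i : ℕ) = 0 → a i = 0) ∧
  (∀ i j : Fin n, (j : ℕ) = (i : ℕ) + 1 → a j ≤ a i + 1)

/-- A parking function of semilength `n`: a Dyck path (given by its area
sequence `a`) together with a labelling permutation `σ` whose labels increase
up each vertical wall (`σ i < σ j` whenever `j = i + 1` and `a j = a i + 1`). -/
def IsParking {n : ℕ} (a : Fin n → ℕ) (σ : Equiv.Perm (Fin n)) : Prop :=
  IsDyckArea a ∧
    ∀ i j : Fin n, (j : ℕ) = (i : ℕ) + 1 → a j = a i + 1 → σ i < σ j

/-- The dinv sequence of a parking function `(a, σ)`: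
`d i = #{ j > i | (a i = a j ∧ σ i < σ j) ∨ (a i = a j + 1 ∧ σ i > σ j) }`. -/
def dinvPark {n : ℕ} (a : Fin n → ℕ) (σ : Equiv.Perm (Fin n)) (i : Fin n) : ℕ :=
  (Finset.univ.filter (fun j : Fin n => i < j ∧
    ((a i = a j ∧ σ i < σ j) ∨ (a i = a j + 1 ∧ σ j < σ i)))).card

/-- The ideal of `ℂ[x_1,…,x_n,y_1,…,y_n]` (with `x i = X (Sum.inl i)` and
`y i = X (Sum.inr i)`) generated by all polynomials invariant under the
diagonal `S_n`-action and with zero constant term.  The diagonal coinvariant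
ring `DR_n` is the quotient by this ideal. -/
noncomputable def invIdeal (n : ℕ) : Ideal (MvPolynomial (Fin n ⊕ Fin n) ℂ) :=
  Ideal.span {f | (∀ σ : Equiv.Perm (Fin n), rename (Sum.map σ σ) f = f) ∧
    constantCoeff f = 0}

/-- The monomial `∏ i, x_{σ i}^{d_i(P)} y_{σ i}^{a_i}` attached to a parking
function `P = (a, σ)`. -/
noncomputable def parkMonomial {n : ℕ} (a : Fin n → ℕ) (σ : Equiv.Perm (Fin n)) :
    MvPolynomial (Fin n ⊕ Fin n) ℂ :=
  ∏ i : Fin n,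
    (X (Sum.inl (σ i)) : MvPolynomial (Fin n ⊕ Fin n) ℂ) ^ dinvPark a σ i *
      (X (Sum.inr (σ i)) : MvPolynomial (Fin n ⊕ Fin n) ℂ) ^ a i

/-!
*Spanning.* Think of `y ^ b` as placing the letter `l` at height `n * b l - l`. Lowering and
raising letters by means of symmetric functions shows that, modulo the invariants and
configurations with a smaller sum of squared heights, certain window sums in the `x` variables
annihilate `y ^ b`. Division with remainder then pushes the exponent of `x l` below the number of
letters attacked by `l`, plus one if `l` has height at most `0`. Inserting the letters one at a
time in order of height, a pair `(α, b)` of exponents in these boxes is read off as the dinv and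
area sequences of a parking function.

*Independence.* It suffices that no proper subfamily of the parking monomials spans. Let the
variables act on the span of the affine permutations, by operators that commute up to lower order:
`x i` multiplies a window by its `i`-th entry and `y i` is the `i`-th translation of the extended
affine symmetric group, acting by Young's seminormal form with parameter `n + 1`. Since the
coefficient `1 + (n + 1) / (w p - w q)` vanishes at `w q - w p = n + 1`, the `(n + 1)`-restricted
windows span a stable subspace, and among its vectors the only alternating one, up to scalars, is
the alternating sum `v` of the finite permutations. An invariant of positive degree sends `v`, up to
lower order, to an alternating vector, hence to a multiple of `v`: its action on `v` drops order.
Normal ordering therefore carries every homogeneous family that spans modulo the invariants to a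
spanning set of the module generated by `v`. A descent on the squared displacement shows that this
module contains all restricted windows, and distinct parking functions give distinct restricted
windows.
-/

namespace DiagonalCoinvariant

open Finset

section Box

variable {ι 𝕜 : Type*} (e : ι → ℤ) (N : ℤ)

/-- The indices of `A` attacked by `k`: those of height in the open interval `(e k - N, e k)`. -/
def window (A : Finset ι) (k : ι) : Finset ι := {l ∈ A | e k - N < e l ∧ e l < e k}

/-- The indices of `A` that are at least as high as `k`. -/
def upper (A : Finset ι) (k : ι) : Finset ι := {m ∈ A | e k ≤ e m}

/-- The indicator of `k` lying below the level `θ`. -/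
def levelBit (θ : ℤ) (k : ι) : ℕ := if e k < θ then 1 else 0

/-- The relation attached to `k`: the polynomial
`t ^ levelBit e θ k * ∏ l ∈ window e N A k, (t - X l)` summed over `t = X m` with `m` at least as
high as `k`. Modulo these relations the monomials of
`boxMonomials (boxBound e N A θ)` span. -/
noncomputable def windowSum [CommRing 𝕜] (A : Finset ι) (θ : ℤ) (k : ι) : MvPolynomial ι 𝕜 :=
  ∑ m ∈ upper e A k, X m ^ levelBit e θ k * (Lagrange.nodal (window e N A k) X).eval (X m)

/-- The monomials all of whose exponents satisfy the strict bounds `w`. -/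
def boxMonomials (𝕜 : Type*) [CommSemiring 𝕜] (w : ι → ℕ) : Set (MvPolynomial ι 𝕜) :=
  (fun α => monomial α 1) '' {α : ι →₀ ℕ | ∀ i, α i < w i}

/-- `j` is the highest index of `A` below the level `θ`. -/
structure IsHighestBelow (A : Finset ι) (θ : ℤ) (j : ι) : Prop where
  mem : j ∈ A
  lt : e j < θ
  level_le : ∀ k ∈ A, e j < e k → θ ≤ e k

variable {e N} {A : Finset ι} {θ : ℤ} {j k l : ι}

theorem mem_window : l ∈ window e N A k ↔ l ∈ A ∧ e k - N < e l ∧ e l < e k := mem_filter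

theorem mem_upper : l ∈ upper e A k ↔ l ∈ A ∧ e k ≤ e l := mem_filter

theorem boxMonomials_mono [CommSemiring 𝕜] {w w' : ι → ℕ} (h : w ≤ w') :
    boxMonomials 𝕜 w ⊆ boxMonomials 𝕜 w' :=
  Set.image_mono fun _ hα i => (hα i).trans_le (h i)

theorem X_mul_mem_span_boxMonomials [DecidableEq ι] [CommSemiring 𝕜] {w : ι → ℕ} (j : ι)
    {p : MvPolynomial ι 𝕜} (hp : p ∈ Submodule.span 𝕜 (boxMonomials 𝕜 w)) :
    X j * p ∈ Submodule.span 𝕜 (boxMonomials 𝕜 (w + Pi.single j 1)) := by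
  induction hp using Submodule.span_induction with
  | mem p hp =>
    obtain ⟨α, hα, rfl⟩ := hp
    refine Submodule.subset_span ⟨Finsupp.single j 1 + α, fun i => ?_, ?_⟩
    · have := hα i
      rcases eq_or_ne i j with rfl | hij
      · simp only [Finsupp.add_apply, Finsupp.single_eq_same, Pi.add_apply, Pi.single_eq_same]
        lia
      · simpa [hij] using this
    · simp [X, monomial_mul]
  | zero => simp
  | add p q _ _ hp hq => rw [mul_add]; exact add_mem hp hq
  | smul a p _ hp => rw [mul_smul_comm]; exact Submodule.smul_mem _ a hp

theorem exists_upper_eq_erase [DecidableEq ι] (he : e.Injective) (hj : j ∈ A)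
    (h : upper e A j ≠ {j}) :
    ∃ k ∈ A, e j < e k ∧ upper e A k = (upper e A j).erase j ∧
      window e N A k ⊆ insert j (window e N A j) := by
  have hjU : j ∈ upper e A j := mem_upper.2 ⟨hj, le_rfl⟩
  have hne : ((upper e A j).erase j).Nonempty :=
    (nontrivial_iff_ne_singleton hjU |>.2 h).erase_nonempty
  obtain ⟨k, hk, hmin⟩ := exists_min_image _ e hne
  have mem_iff {l : ι} : l ∈ (upper e A j).erase j ↔ l ∈ A ∧ e j < e l := by
    rw [mem_erase, mem_upper, lt_iff_le_and_ne, he.ne_iff]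
    grind
  rw [mem_iff] at hk
  refine ⟨k, hk.1, hk.2, ?_, fun l hl => ?_⟩
  · ext m
    rw [mem_iff, mem_upper]
    exact and_congr_right fun hm => ⟨hk.2.trans_le, fun h => hmin m (mem_iff.2 ⟨hm, h⟩)⟩
  · rw [mem_window] at hl
    rw [mem_insert, mem_window]
    rcases lt_trichotomy (e j) (e l) with h | h | h
    · exact absurd (hmin l (mem_iff.2 ⟨hl.1, h⟩)) (by lia)
    · exact .inl (he h).symm
    · exact .inr ⟨hl.1, by lia, h⟩

theorem sum_upper_eval_mem [CommRing 𝕜] (he : e.Injective) {K : Ideal (MvPolynomial ι 𝕜)}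
    (hK : ∀ k ∈ A, windowSum e N A θ k ∈ K) {j : ι} (hj : j ∈ A) (hθ : ∀ k ∈ A, e j < e k → θ ≤ e k)
    {φ : Polynomial (MvPolynomial ι 𝕜)}
    (hφ : (Polynomial.X - Polynomial.C (X j)) * Lagrange.nodal (window e N A j) X ∣ φ) :
    ∑ m ∈ upper e A j, φ.eval (X m) ∈ K := by
  classical
  have hφj : φ.eval (X j) = 0 := Polynomial.dvd_iff_isRoot.1 (dvd_of_mul_right_dvd hφ)
  by_cases hU : upper e A j = {j}
  · simp [hU, hφj]
  obtain ⟨k, hk, hjk, hUk, hWk⟩ := exists_upper_eq_erase (N := N) he hj hU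
  have hWφ : Lagrange.nodal (window e N A k) X ∣ φ := by
    refine (prod_dvd_prod_of_subset _ _ _ hWk).trans ?_
    rwa [prod_insert (by simp [mem_window])]
  obtain ⟨r, rfl⟩ := hWφ
  obtain ⟨s, hs⟩ := Polynomial.X_sub_C_dvd_sub_C_eval (a := (X k : MvPolynomial ι 𝕜)) (p := r)
  have hlevel : levelBit e θ k = 0 := if_neg (hθ k hk hjk).not_gt
  set P := Lagrange.nodal (window e N A k) (X : ι → MvPolynomial ι 𝕜)
  have hr : P * r = Polynomial.C (r.eval (X k)) * P
      + (Polynomial.X - Polynomial.C (X k)) * P * s := by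
    linear_combination P * hs
  have hsplit : ∑ m ∈ upper e A j, (P * r).eval (X m) = r.eval (X k) * windowSum e N A θ k
      + ∑ m ∈ upper e A k, ((Polynomial.X - Polynomial.C (X k)) * P * s).eval (X m) := by
    rw [← sum_erase (f := fun m => (P * r).eval (X m)) _ hφj, ← hUk, hr, windowSum, hlevel, mul_sum,
      ← sum_add_distrib]
    simp [P]
  have : #(upper e A k) < #(upper e A j) :=
    hUk ▸ card_erase_lt_of_mem (mem_upper.2 ⟨hj, le_rfl⟩)
  rw [hsplit]
  exact K.add_mem (K.mul_mem_left _ (hK k hk))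
    (sum_upper_eval_mem he hK hk (fun k' hk' h => hθ k' hk' (hjk.trans h)) (dvd_mul_right _ _))
termination_by #(upper e A j)

namespace IsHighestBelow

theorem exists_of_nonempty (h : (A.filter (e · < θ)).Nonempty) : ∃ j, IsHighestBelow e A θ j := by
  obtain ⟨j, hj, hmax⟩ := exists_max_image _ e h
  simp only [mem_filter] at hj hmax
  exact ⟨j, hj.1, hj.2, fun k hk hjk => not_lt.1 fun hkθ => hjk.not_ge (hmax k ⟨hk, hkθ⟩)⟩

theorem levelBit_self (hj : IsHighestBelow e A θ j) : levelBit e θ j = 1 := if_pos hj.lt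

theorem levelBit_height (hj : IsHighestBelow e A θ j) (he : e.Injective) (hk : k ∈ A)
    (hkj : k ≠ j) : levelBit e (e j) k = levelBit e θ k := by
  have := he.ne hkj
  have := hj.level_le k hk
  have := hj.lt
  grind [levelBit]

theorem levelBit_height_add (hj : IsHighestBelow e A θ j) (he : e.Injective) (hN : 0 ≤ N)
    (hk : k ∈ A) (hkj : k ≠ j) (hjk : j ∉ window e N A k) :
    levelBit e (e j + N) k = levelBit e θ k := by
  have := he.ne hkj
  have := hj.level_le k hk
  have := hj.lt
  have := hj.mem
  grind [levelBit, mem_window]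

theorem levelBit_of_mem_window (hj : IsHighestBelow e A θ j) (hk : k ∈ A)
    (hjk : j ∈ window e N A k) : levelBit e (e j + N) k = 1 ∧ levelBit e θ k = 0 := by
  obtain ⟨_, h₁, h₂⟩ := mem_window.1 hjk
  exact ⟨if_pos (by lia), if_neg (hj.level_le k hk h₂).not_gt⟩

theorem X_mul_windowSum_mem [CommRing 𝕜] (hj : IsHighestBelow e A θ j) (he : e.Injective)
    {K : Ideal (MvPolynomial ι 𝕜)} (hK : ∀ k ∈ A, windowSum e N A θ k ∈ K) :
    X j * windowSum e N A (e j) j ∈ K := by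
  have hdiff := sum_upper_eval_mem he hK hj.mem hj.level_le dvd_rfl
  have heq : X j * windowSum e N A (e j) j = windowSum e N A θ j - ∑ m ∈ upper e A j,
      ((Polynomial.X - Polynomial.C (X j)) * Lagrange.nodal (window e N A j) X).eval
        (X m : MvPolynomial ι 𝕜) := by
    have h₀ : levelBit e (e j) j = 0 := if_neg (lt_irrefl _)
    rw [windowSum, windowSum, hj.levelBit_self, h₀, mul_sum, ← sum_sub_distrib]
    refine sum_congr rfl fun m _ => ?_
    simp only [Polynomial.eval_mul, Polynomial.eval_sub, Polynomial.eval_X, Polynomial.eval_C]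
    ring
  rw [heq]
  exact K.sub_mem (hK j hj.mem) hdiff

variable [DecidableEq ι]

theorem windowSum_erase_mem [CommRing 𝕜] (hj : IsHighestBelow e A θ j) (he : e.Injective)
    (hN : 0 ≤ N) {K : Ideal (MvPolynomial ι 𝕜)} (hXj : X j ∈ K) (hk : k ∈ A.erase j)
    (hfk : windowSum e N A θ k ∈ K) : windowSum e N (A.erase j) (e j + N) k ∈ K := by
  obtain ⟨hkj, hkA⟩ := mem_erase.1 hk
  have hU : upper e (A.erase j) k = (upper e A k).erase j := filter_erase ..
  have hW : window e N (A.erase j) k = (window e N A k).erase j := filter_erase ..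
  by_cases hjW : j ∈ window e N A k
  · obtain ⟨hnew, hold⟩ := hj.levelBit_of_mem_window hkA hjW
    have hjU : j ∉ upper e A k := fun h =>
      (mem_window.1 hjW).2.2.not_ge (mem_upper.1 h).2
    have heq : windowSum e N (A.erase j) (e j + N) k = windowSum e N A θ k
        + X j * ∑ m ∈ upper e A k,
          (Lagrange.nodal ((window e N A k).erase j) X).eval (X m : MvPolynomial ι 𝕜) := by
      rw [windowSum, windowSum, hnew, hold, hU, erase_eq_of_notMem hjU, hW, mul_sum,
        ← sum_add_distrib]
      refine sum_congr rfl fun m _ => ?_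
      rw [Lagrange.nodal_eq_mul_nodal_erase hjW, Polynomial.eval_mul]
      simp only [Polynomial.eval_sub, Polynomial.eval_X, Polynomial.eval_C]
      ring
    rw [heq]
    exact K.add_mem hfk (K.mul_mem_right _ hXj)
  · have hlevel := hj.levelBit_height_add he hN hkA hkj hjW
    by_cases hjU : j ∈ upper e A k
    · have hbit : levelBit e θ k = 1 := if_pos ((mem_upper.1 hjU).2.trans_lt hj.lt)
      have heq : windowSum e N (A.erase j) (e j + N) k = windowSum e N A θ k
          - X j * (Lagrange.nodal (window e N A k) X).eval (X j : MvPolynomial ι 𝕜) := by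
        rw [windowSum, windowSum, hlevel, hbit, hU, hW, erase_eq_of_notMem hjW,
          ← add_sum_erase _ _ hjU, pow_one, add_sub_cancel_left]
      rw [heq]
      exact K.sub_mem hfk (K.mul_mem_right _ hXj)
    · rwa [windowSum, hlevel, hU, hW, erase_eq_of_notMem hjU, erase_eq_of_notMem hjW]

end IsHighestBelow

/-- The strict bounds on the exponents of the monomials that span modulo the relations
`windowSum e N A θ k`; an index outside `A` gets exponent `0`. -/
def boxBound [DecidableEq ι] (e : ι → ℤ) (N : ℤ) (A : Finset ι) (θ : ℤ) (k : ι) : ℕ :=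
  if k ∈ A then #(window e N A k) + levelBit e θ k else 1

theorem boxBound_erase_le [DecidableEq ι] (he : e.Injective) (hN : 0 ≤ N)
    (hj : IsHighestBelow e A θ j) :
    boxBound e N (A.erase j) (e j + N) ≤ boxBound e N A θ := by
  intro k
  by_cases hkA : k ∈ A
  · rcases eq_or_ne k j with rfl | hkj
    · simp [boxBound, hkA, hj.levelBit_self]
    · rw [boxBound, boxBound, if_pos hkA, if_pos (mem_erase.2 ⟨hkj, hkA⟩), window, filter_erase,
        ← window]
      by_cases hjW : j ∈ window e N A k
      · obtain ⟨hnew, hold⟩ := hj.levelBit_of_mem_window hkA hjW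
        rw [hnew, hold, card_erase_add_one hjW, add_zero]
      · rw [erase_eq_of_notMem hjW, hj.levelBit_height_add he hN hkA hkj hjW]
  · simp [boxBound, hkA]

theorem boxBound_height_add_single [DecidableEq ι] (he : e.Injective)
    (hj : IsHighestBelow e A θ j) :
    boxBound e N A (e j) + Pi.single j 1 = boxBound e N A θ := by
  funext k
  rcases eq_or_ne k j with rfl | hkj
  · simp [boxBound, hj.mem, hj.lt, levelBit]
  · by_cases hkA : k ∈ A <;> simp [boxBound, hkA, hkj, hj.levelBit_height he]

theorem sub_C_constantCoeff_mem [CommRing 𝕜] {K : Ideal (MvPolynomial ι 𝕜)} (hX : ∀ i, X i ∈ K)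
    (p : MvPolynomial ι 𝕜) : p - C (constantCoeff p) ∈ K := by
  rw [← Ideal.Quotient.eq]
  induction p using MvPolynomial.induction_on with
  | C a => simp
  | add p q hp hq => simp only [map_add, hp, hq]
  | mul_X p i => simp [Ideal.Quotient.eq_zero_iff_mem.2 (hX i)]

theorem eq_top_of_windowSum_mem [Field 𝕜] [CharZero 𝕜] {K : Ideal (MvPolynomial ι 𝕜)}
    (hK : ∀ k ∈ A, windowSum e N A θ k ∈ K) (hA : A.Nonempty) (hθ : ∀ k ∈ A, θ ≤ e k) :
    K = ⊤ := by
  obtain ⟨j, hj, hmin⟩ := exists_min_image A e hA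
  have hU : upper e A j = A := filter_true_of_mem hmin
  have hW : window e N A j = ∅ := filter_false_of_mem fun m hm h => h.2.not_ge (hmin m hm)
  have hlevel : levelBit e θ j = 0 := if_neg (hθ j hj).not_gt
  have hcard : windowSum e N A θ j = C (#A : 𝕜) := by simp [windowSum, hU, hW, hlevel]
  have hunit : IsUnit (C (#A : 𝕜) : MvPolynomial ι 𝕜) :=
    (IsUnit.mk0 _ (Nat.cast_ne_zero.2 hA.card_pos.ne')).map C
  exact K.eq_top_of_isUnit_mem (hcard ▸ hK j hj) hunit

theorem mem_sup_span_boxMonomials [DecidableEq ι] [Field 𝕜] [CharZero 𝕜] (he : e.Injective)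
    (hN : 0 ≤ N) {A : Finset ι} {θ : ℤ} {K : Ideal (MvPolynomial ι 𝕜)}
    (hK : ∀ k ∈ A, windowSum e N A θ k ∈ K) (hX : ∀ i ∉ A, X i ∈ K) (p : MvPolynomial ι 𝕜) :
    p ∈ K.restrictScalars 𝕜 ⊔ Submodule.span 𝕜 (boxMonomials 𝕜 (boxBound e N A θ)) := by
  rcases (A.filter (e · < θ)).eq_empty_or_nonempty with hlow | hlow
  · rcases A.eq_empty_or_nonempty with rfl | hA
    · refine Submodule.mem_sup.2 ⟨_, sub_C_constantCoeff_mem (fun i => hX i (by simp)) p,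
        C (constantCoeff p), ?_, sub_add_cancel _ _⟩
      rw [← mul_one (C _), C_mul']
      exact Submodule.smul_mem _ _ (Submodule.subset_span ⟨0, by simp [boxBound], rfl⟩)
    · refine Submodule.mem_sup_left ?_
      rw [eq_top_of_windowSum_mem hK hA fun k hk => not_lt.1 (filter_eq_empty_iff.1 hlow hk)]
      trivial
  obtain ⟨j, hj⟩ := IsHighestBelow.exists_of_nonempty hlow
  -- Reduce `p` modulo `X j` first; the quotient by `X j` is then reduced modulo `K : X j`.
  have hKj {f} (hf : f ∈ K) : f ∈ K ⊔ Ideal.span {X j} := Ideal.mem_sup_left hf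
  have hXj : X j ∈ K ⊔ Ideal.span {X j} := Ideal.mem_sup_right (Ideal.mem_span_singleton_self _)
  have : #(A.erase j) < #A := card_erase_lt_of_mem hj.mem
  obtain ⟨c, hc, b, hb, rfl⟩ := Submodule.mem_sup.1 <| mem_sup_span_boxMonomials
    (A := A.erase j) (θ := e j + N) (K := K ⊔ Ideal.span {X j}) he hN
    (fun k hk => hj.windowSum_erase_mem he hN hXj hk (hKj (hK k (mem_of_mem_erase hk))))
    (fun i hi => if hij : i = j then hij ▸ hXj else hKj (hX i (by grind))) p
  obtain ⟨f, hf, _, hdvd, rfl⟩ := Submodule.mem_sup.1 hc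
  obtain ⟨q, rfl⟩ := Ideal.mem_span_singleton.1 hdvd
  have : #(A.filter (e · < e j)) < #(A.filter (e · < θ)) :=
    card_lt_card ⟨fun k => by grind [hj.lt], fun h => by
      simpa using h (mem_filter.2 ⟨hj.mem, hj.lt⟩)⟩
  have hcolon {f} : f ∈ K.colon {X j} ↔ X j * f ∈ K := by
    rw [Submodule.mem_colon_singleton, smul_eq_mul, mul_comm]
  obtain ⟨g, hg, b', hb', rfl⟩ := Submodule.mem_sup.1 <| mem_sup_span_boxMonomials
    (A := A) (θ := e j) (K := K.colon {X j}) he hN (fun k hk => hcolon.2 <| by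
      rcases eq_or_ne k j with rfl | hkj
      · exact hj.X_mul_windowSum_mem he hK
      · rw [windowSum, hj.levelBit_height he hk hkj]
        exact K.mul_mem_left _ (hK k hk))
    (fun i hi => hcolon.2 (K.mul_mem_left _ (hX i hi))) q
  refine Submodule.mem_sup.2 ⟨f + X j * g, K.add_mem hf (hcolon.1 hg), X j * b' + b, ?_, by ring⟩
  refine add_mem ?_ (Submodule.span_mono (boxMonomials_mono (boxBound_erase_le he hN hj)) hb)
  exact boxBound_height_add_single (N := N) he hj ▸ X_mul_mem_span_boxMonomials j hb'
termination_by (#A, #(A.filter (e · < θ)))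

end Box

section ElementarySymmetric

variable {ι R : Type*} [CommRing R] {G : Finset ι} {k : ι}

theorem sum_powersetCard_succ_prod [DecidableEq ι] (Y : ι → R) (hk : k ∈ G) (s : ℕ) :
    ∑ S ∈ G.powersetCard (s + 1), ∏ i ∈ S, Y i =
      ∑ S ∈ (G.erase k).powersetCard (s + 1), ∏ i ∈ S, Y i +
        Y k * ∑ S ∈ (G.erase k).powersetCard s, ∏ i ∈ S, Y i := by
  have hnot {t : ℕ} {S} (hS : S ∈ (G.erase k).powersetCard t) : k ∉ S := fun h =>
    notMem_erase k G ((mem_powersetCard.1 hS).1 h)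
  conv_lhs => rw [← insert_erase hk, powersetCard_succ_insert (notMem_erase k G)]
  rw [sum_union, sum_image, mul_sum]
  · exact congrArg _ (sum_congr rfl fun S hS => prod_insert (hnot hS))
  · intro S hS T hT h
    rw [← erase_insert (hnot hS), ← erase_insert (hnot hT), h]
  · refine disjoint_left.2 fun S hS hS' => ?_
    obtain ⟨T, _, rfl⟩ := mem_image.1 hS'
    exact hnot hS (mem_insert_self _ _)

theorem sum_powersetCard_succ_sum_mul_prod [DecidableEq ι] (φ Y : ι → R) (G : Finset ι) (s : ℕ) :
    ∑ S ∈ G.powersetCard (s + 1), (∑ k ∈ S, φ k) * ∏ i ∈ S, Y i =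
      ∑ k ∈ G, φ k * Y k * ∑ S ∈ (G.erase k).powersetCard s, ∏ i ∈ S, Y i := by
  simp only [sum_mul, mul_sum, sum_sigma']
  refine sum_bij' (fun x _ => ⟨x.2, x.1.erase x.2⟩) (fun x _ => ⟨insert x.1 x.2, x.1⟩)
    ?_ ?_ ?_ ?_ ?_ <;> simp only [mem_sigma, mem_powersetCard, Sigma.forall, and_imp]
  · intro S k hS hcard hk
    exact ⟨hS hk, erase_subset_erase _ hS, by rw [card_erase_of_mem hk, hcard, Nat.add_sub_cancel]⟩
  · intro k S hk hS hcard
    have hkS : k ∉ S := fun h => notMem_erase k G (hS h)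
    exact ⟨⟨insert_subset hk (hS.trans (erase_subset _ _)), by
      rw [card_insert_of_notMem hkS, hcard]⟩, mem_insert_self _ _⟩
  · intro S k _ _ hk
    rw [insert_erase hk]
  · intro k S _ hS _
    rw [erase_insert fun h => notMem_erase k G (hS h)]
  · intro S k _ _ hk
    rw [mul_assoc, mul_prod_erase S Y hk]

theorem sum_powersetCard_succ_sum_mul_prod_mem {I : Ideal R} {φ Y : ι → R}
    (h : ∀ j, 1 ≤ j → ∑ k ∈ G, φ k * Y k ^ j ∈ I) (s : ℕ) :
    ∑ S ∈ G.powersetCard (s + 1), (∑ k ∈ S, φ k) * ∏ i ∈ S, Y i ∈ I := by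
  classical
  suffices H : ∀ s j, 1 ≤ j →
      ∑ k ∈ G, φ k * Y k ^ j * ∑ S ∈ (G.erase k).powersetCard s, ∏ i ∈ S, Y i ∈ I by
    simpa only [sum_powersetCard_succ_sum_mul_prod, pow_one] using H s 1 le_rfl
  intro s
  induction s with
  | zero => simpa using h
  | succ s ih =>
    intro j hj
    rw [show ∑ k ∈ G, φ k * Y k ^ j * ∑ S ∈ (G.erase k).powersetCard (s + 1), ∏ i ∈ S, Y i =
        (∑ S ∈ G.powersetCard (s + 1), ∏ i ∈ S, Y i) * ∑ k ∈ G, φ k * Y k ^ j -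
          ∑ k ∈ G, φ k * Y k ^ (j + 1) * ∑ S ∈ (G.erase k).powersetCard s, ∏ i ∈ S, Y i by
      rw [mul_sum, ← sum_sub_distrib]
      refine sum_congr rfl fun k hk => ?_
      rw [sum_powersetCard_succ_prod Y hk]
      ring]
    exact I.sub_mem (I.mul_mem_left _ (h j hj)) (ih (j + 1) (by lia))

end ElementarySymmetric

theorem sum_shift_sq_lt {ι : Type*} [Fintype ι] [DecidableEq ι] {e : ι → ℤ} {N c : ℤ} (hN : 0 < N)
    {U S : Finset ι} (hU : ∀ i ∈ U, c ≤ e i) (hS : ∀ i ∈ S, i ∉ U → e i < c - N)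
    (hcard : #S = #U) (hne : S ≠ U) :
    ∑ i, (e i + N * ((if i ∈ S then 1 else 0) - if i ∈ U then 1 else 0)) ^ 2 <
      ∑ i, e i ^ 2 := by
  have hstep (i) (hiS : i ∈ S) (hiU : i ∉ U) :
      (e i + N * ((if i ∈ S then 1 else 0) - if i ∈ U then 1 else 0)) ^ 2 <
        e i ^ 2 + ((if i ∈ S then 1 else 0) - if i ∈ U then 1 else 0) * (N * (2 * c - N)) := by
    simp only [hiS, hiU, if_true, if_false]
    nlinarith [hS i hiS hiU]
  obtain ⟨q, hqS, hqU⟩ : ∃ q ∈ S, q ∉ U :=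
    not_subset.1 fun h => hne (eq_of_subset_of_card_le h hcard.ge)
  calc _ < ∑ i, (e i ^ 2 +
        ((if i ∈ S then 1 else 0) - if i ∈ U then 1 else 0) * (N * (2 * c - N))) := by
        refine sum_lt_sum (fun i _ => ?_) ⟨q, mem_univ q, hstep q hqS hqU⟩
        by_cases hiS : i ∈ S <;> by_cases hiU : i ∈ U
        · simp [hiS, hiU]
        · exact (hstep i hiS hiU).le
        · simp only [hiS, hiU, if_true, if_false]
          nlinarith [hU i hiU]
        · simp [hiS, hiU]
    _ = ∑ i, e i ^ 2 := by
        rw [sum_add_distrib, ← sum_mul, sum_sub_distrib]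
        simp [hcard]

section Spanning

variable {n : ℕ}

/-- The height of the letter `l` in the configuration placing it at level `b l`: the letters are
ordered by level, ties being broken in favour of the smaller letter. -/
def height (b : Fin n → ℕ) (l : Fin n) : ℤ := n * b l - l

/-- The monomial `∏ i, y_i ^ b i`. -/
noncomputable def yMonomial (b : Fin n → ℕ) : MvPolynomial (Fin n ⊕ Fin n) ℂ :=
  ∏ i, X (Sum.inr i) ^ b i

/-- The configuration obtained from `b` by lowering the letters of `U` and raising those of `S`. -/
def shiftLevel (b : Fin n → ℕ) (U S : Finset (Fin n)) (i : Fin n) : ℕ :=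
  b i - (if i ∈ U then 1 else 0) + if i ∈ S then 1 else 0

/-- The invariant ideal together with the monomials `x ^ α * y ^ b` with `α` in the box attached
to `b`. -/
noncomputable def boxSpan (n : ℕ) : Submodule ℂ (MvPolynomial (Fin n ⊕ Fin n) ℂ) :=
  (invIdeal n).restrictScalars ℂ ⊔ Submodule.span ℂ
    {f | ∃ b, ∃ g ∈ boxMonomials ℂ (boxBound (height b) n univ 1),
      f = rename Sum.inl g * yMonomial b}

variable {b : Fin n → ℕ} {l q : Fin n} {U S : Finset (Fin n)}

theorem fin_eq_of_dvd_sub (h : (n : ℤ) ∣ (l : ℤ) - q) : l = q := by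
  have := Int.eq_zero_of_abs_lt_dvd h (by
    rw [abs_lt]
    constructor <;> omega)
  omega

theorem height_injective (b : Fin n → ℕ) : (height b).Injective := fun l q h =>
  fin_eq_of_dvd_sub ⟨b l - b q, by simp only [height] at h; linarith⟩

theorem height_ne_sub (b : Fin n → ℕ) (l q : Fin n) : height b q ≠ height b l - n := by
  intro h
  have hn := l.pos
  obtain rfl : l = q := fin_eq_of_dvd_sub ⟨b l - b q - 1, by simp only [height] at h; linarith⟩
  lia

theorem height_lt_one_iff : height b l < 1 ↔ b l = 0 := by
  refine ⟨fun h => by_contra fun hb => ?_, fun h => by simp only [height, h]; lia⟩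
  simp only [height] at h
  nlinarith [l.isLt, Nat.one_le_iff_ne_zero.2 hb]

theorem neg_lt_height (b : Fin n → ℕ) (l : Fin n) : -(n : ℤ) < height b l := by
  have : (0 : ℤ) ≤ n * b l := by positivity
  simp only [height]
  omega

theorem height_shiftLevel (hU : ∀ i ∈ U, 1 ≤ b i) (i : Fin n) :
    height (shiftLevel b U S) i =
      height b i + n * ((if i ∈ S then 1 else 0) - if i ∈ U then 1 else 0) := by
  have : (if i ∈ U then 1 else 0) ≤ b i := by split_ifs with hi <;> simp [hU, hi]
  simp only [height, shiftLevel]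
  push_cast [this]
  ring

theorem shiftLevel_self (hU : ∀ i ∈ U, 1 ≤ b i) : shiftLevel b U U = b := by
  funext i
  by_cases hi : i ∈ U <;> simp [shiftLevel, hi, hU]

theorem prod_mul_yMonomial (b : Fin n → ℕ) (U S : Finset (Fin n)) :
    (∏ i ∈ S, X (Sum.inr i)) * yMonomial (fun i => b i - if i ∈ U then 1 else 0) =
      yMonomial (shiftLevel b U S) := by
  simp only [yMonomial, shiftLevel, pow_add, prod_mul_distrib, pow_ite, pow_one, pow_zero,
    prod_ite_mem, univ_inter, mul_comm]

theorem sum_pow_mul_pow_mem_invIdeal {r j : ℕ} (h : 1 ≤ r + j) :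
    ∑ k : Fin n, (X (Sum.inl k) ^ r * X (Sum.inr k) ^ j) ∈ invIdeal n := by
  refine Ideal.subset_span ⟨fun σ => ?_, ?_⟩
  · simpa using Equiv.sum_comp σ fun k =>
      (X (Sum.inl k) ^ r * X (Sum.inr k) ^ j : MvPolynomial (Fin n ⊕ Fin n) ℂ)
  · simp only [map_sum, map_mul, map_pow, constantCoeff_X, ← pow_add]
    rw [zero_pow (Nat.ne_of_gt h), sum_const_zero]

theorem sum_pow_mul_eval_mul_pow_mem_invIdeal
    (φ : Polynomial (MvPolynomial (Fin n ⊕ Fin n) ℂ)) {r j : ℕ} (h : 1 ≤ r + j) :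
    ∑ k : Fin n, X (Sum.inl k) ^ r * φ.eval (X (Sum.inl k)) * X (Sum.inr k) ^ j ∈ invIdeal n := by
  simp only [Polynomial.eval_eq_sum_range, mul_sum, sum_mul]
  rw [sum_comm]
  refine Ideal.sum_mem _ fun i _ => ?_
  convert (invIdeal n).mul_mem_left (φ.coeff i)
    (sum_pow_mul_pow_mem_invIdeal (r := r + i) (j := j) (by lia)) using 1
  rw [mul_sum]
  exact sum_congr rfl fun k _ => by ring

theorem rename_eval_nodal {ι τ R : Type*} [CommRing R] (f : ι → τ) (W : Finset ι) (k : ι) :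
    rename f ((Lagrange.nodal W X).eval (X k : MvPolynomial ι R)) =
      (Lagrange.nodal W fun i => (X (f i) : MvPolynomial τ R)).eval (X (f k)) := by
  simp [Lagrange.eval_nodal]

theorem rename_windowSum_mem_invIdeal (hl : b l = 0) :
    rename Sum.inl (windowSum (height b) n univ 1 l) ∈ invIdeal n := by
  have hwindow (k) (hk : k ∉ upper (height b) univ l) : k ∈ window (height b) n univ l := by
    have hk' : height b k < height b l := not_le.1 fun h => hk (mem_upper.2 ⟨mem_univ k, h⟩)
    have := height_lt_one_iff.2 hl
    have := neg_lt_height b k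
    exact mem_window.2 ⟨mem_univ k, by lia, hk'⟩
  convert sum_pow_mul_eval_mul_pow_mem_invIdeal (j := 0) (Lagrange.nodal
    (window (height b) n univ l) fun k => X (Sum.inl k)) (le_refl 1) using 1
  rw [windowSum, map_sum, levelBit, if_pos (height_lt_one_iff.2 hl)]
  simp only [map_mul, map_pow, rename_X, rename_eval_nodal, pow_zero, mul_one]
  exact sum_subset (subset_univ _) fun k _ hk => by
    rw [Lagrange.eval_nodal_at_node (v := fun k => X (Sum.inl k)) (hwindow k hk), mul_zero]

/-- The potential of a configuration; it decreases in the spanning algorithm. -/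
def potential (b : Fin n → ℕ) : ℤ := ∑ i, height b i ^ 2

theorem potential_shiftLevel_lt (hUb : ∀ i ∈ U, 1 ≤ b i) (hU : ∀ i ∈ U, height b l ≤ height b i)
    (hS : ∀ i ∈ S, i ∉ U → height b i ≤ height b l - n) (hcard : #S = #U) (hne : S ≠ U) :
    potential (shiftLevel b U S) < potential b := by
  simp only [potential, height_shiftLevel hUb]
  exact sum_shift_sq_lt (by exact_mod_cast l.pos) hU
    (fun i hiS hiU => (hS i hiS hiU).lt_of_ne (height_ne_sub b l i)) hcard hne

theorem sum_powersetCard_nodal_mem_invIdeal (W : Finset (Fin n)) (s : ℕ) :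
    ∑ S ∈ Wᶜ.powersetCard (s + 1),
      rename Sum.inl (∑ k ∈ S, (Lagrange.nodal W X).eval (X k)) * ∏ i ∈ S, X (Sum.inr i) ∈
        invIdeal n := by
  simp only [map_sum, rename_eval_nodal]
  refine sum_powersetCard_succ_sum_mul_prod_mem (fun j hj => ?_) s
  convert sum_pow_mul_eval_mul_pow_mem_invIdeal (r := 0)
    (Lagrange.nodal W fun i => X (Sum.inl i)) (by lia : 1 ≤ 0 + j) using 1
  simp only [pow_zero, one_mul]
  exact sum_subset (subset_univ _) fun k _ hk => by
    rw [Lagrange.eval_nodal_at_node (v := fun k => X (Sum.inl k)) (by simpa using hk), zero_mul]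

theorem rename_mul_windowSum_mul_yMonomial_mem {M : Submodule ℂ (MvPolynomial (Fin n ⊕ Fin n) ℂ)}
    (hI : (invIdeal n).restrictScalars ℂ ≤ M) (hl : b l ≠ 0)
    (ih : ∀ b', potential b' < potential b → ∀ g, rename Sum.inl g * yMonomial b' ∈ M)
    (h : MvPolynomial (Fin n) ℂ) :
    rename Sum.inl (h * windowSum (height b) n univ 1 l) * yMonomial b ∈ M := by
  set W := window (height b) n univ l with hW
  set U := upper (height b) univ l with hU
  have hlow : ¬height b l < 1 := height_lt_one_iff.not.2 hl
  have hUl (p) (hp : p ∈ U) : height b l ≤ height b p := (mem_upper.1 hp).2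
  have hUb (p) (hp : p ∈ U) : 1 ≤ b p :=
    Nat.one_le_iff_ne_zero.2 (height_lt_one_iff.not.1 fun h => hlow ((hUl p hp).trans_lt h))
  have hUpos : 0 < #U := card_pos.2 ⟨l, mem_upper.2 ⟨mem_univ l, le_rfl⟩⟩
  have hUW : U ∈ Wᶜ.powersetCard #U := mem_powersetCard.2
    ⟨fun q hq => mem_compl.2 fun hqW => (mem_window.1 hqW).2.2.not_ge (hUl q hq), rfl⟩
  have hshift (S : Finset (Fin n)) (g : MvPolynomial (Fin n) ℂ) :
      rename Sum.inl h * yMonomial (fun i => b i - if i ∈ U then 1 else 0) *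
        (rename Sum.inl g * ∏ i ∈ S, X (Sum.inr i)) =
      rename Sum.inl (h * g) * yMonomial (shiftLevel b U S) := by
    rw [← prod_mul_yMonomial, map_mul]
    ring
  have hrel := (invIdeal n).mul_mem_left
    (rename Sum.inl h * yMonomial fun i => b i - if i ∈ U then 1 else 0)
    (sum_powersetCard_nodal_mem_invIdeal W (#U - 1))
  rw [Nat.sub_add_cancel hUpos, mul_sum, ← add_sum_erase _ _ hUW] at hrel
  simp only [hshift, shiftLevel_self hUb] at hrel
  -- the summand at `S = U` is the wanted element, all the others have smaller potential
  convert M.sub_mem (hI hrel) (M.sum_mem fun S hS => ?_) using 1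
  · rw [add_sub_cancel_right, windowSum, levelBit, if_neg hlow, ← hU, ← hW]
    simp only [pow_zero, one_mul]
  · obtain ⟨hne, hSW, hcard⟩ := by simpa only [mem_erase, mem_powersetCard] using hS
    refine ih _ (potential_shiftLevel_lt hUb hUl (fun q hq hqU => ?_) hcard hne) _
    have hqW := mem_compl.1 (hSW hq)
    simp only [hW, hU, mem_window, mem_upper, mem_univ, true_and] at hqW hqU
    lia

/-- The largest ideal contained in the submodule `M`. -/
def idealCore {k R : Type*} [CommSemiring k] [CommSemiring R] [Algebra k R] (M : Submodule k R) :
    Ideal R where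
  carrier := {g | ∀ h, h * g ∈ M}
  add_mem' hf hg h := by simpa only [mul_add] using M.add_mem (hf h) (hg h)
  zero_mem' h := by simp
  smul_mem' c f hf h := by simpa only [smul_eq_mul, mul_assoc] using hf (h * c)

theorem idealCore_le {k R : Type*} [CommSemiring k] [CommSemiring R] [Algebra k R]
    (M : Submodule k R) : (idealCore M).restrictScalars k ≤ M := fun g hg => by
  simpa using hg 1

theorem rename_mul_yMonomial_mem_boxSpan (b : Fin n → ℕ) (g : MvPolynomial (Fin n) ℂ) :
    rename Sum.inl g * yMonomial b ∈ boxSpan n := by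
  have hI : (invIdeal n).restrictScalars ℂ ≤ boxSpan n := le_sup_left
  induction hp : (potential b).toNat using Nat.strong_induction_on generalizing b g with
  | _ p ih =>
  let M : Submodule ℂ (MvPolynomial (Fin n) ℂ) := (boxSpan n).comap
    (LinearMap.mulRight ℂ (yMonomial b) ∘ₗ (rename Sum.inl).toLinearMap)
  change g ∈ M
  have hK (l) (_ : l ∈ univ) : windowSum (height b) n univ 1 l ∈ idealCore M := fun h => by
    by_cases hl : b l = 0
    · refine hI (Ideal.mul_mem_right _ _ ?_)
      simpa using (invIdeal n).mul_mem_left _ (rename_windowSum_mem_invIdeal hl)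
    · refine rename_mul_windowSum_mul_yMonomial_mem hI hl (fun b' hb' g' => ?_) h
      have : 0 ≤ potential b' := sum_nonneg fun i _ => sq_nonneg _
      exact ih _ (by lia) b' g' rfl
  refine (sup_le (idealCore_le M) (Submodule.span_le.2 fun f hf => ?_))
    (mem_sup_span_boxMonomials (height_injective b) (by positivity) hK (by simp) g)
  exact Submodule.mem_sup_right (Submodule.subset_span ⟨b, f, hf, rfl⟩)

theorem boxSpan_eq_top (n : ℕ) : boxSpan n = ⊤ := by
  refine eq_top_iff.2 fun p _ => ?_
  induction p using MvPolynomial.induction_on' with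
  | monomial u a =>
    convert rename_mul_yMonomial_mem_boxSpan (fun i => u (Sum.inr i))
      (C a * ∏ i, X i ^ u (Sum.inl i)) using 1
    rw [monomial_eq, Finsupp.prod_fintype _ _ (by simp), Fintype.prod_sum_type]
    simp [yMonomial, mul_assoc]
  | add p q hp hq => exact add_mem (hp trivial) (hq trivial)

end Spanning

section Reading

variable {ι : Type*} [DecidableEq ι]

/-- Every entry `l` of the list is followed by exactly `α l` elements of `W l`. -/
def HasAttackCounts (W : ι → Finset ι) (α : ι → ℕ) : List ι → Prop
  | [] => True
  | l :: L => L.countP (· ∈ W l) = α l ∧ HasAttackCounts W α L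

/-- `L` lists the elements of `A` in an order that can be read off a parking function: `α` counts
the attacked later entries, and heights rise by less than `N` from one entry to the next. -/
structure IsReading [Fintype ι] (e : ι → ℤ) (N : ℤ) (α : ι → ℕ) (A : Finset ι) (L : List ι) :
    Prop where
  nodup : L.Nodup
  mem_iff : ∀ x, x ∈ L ↔ x ∈ A
  counts : HasAttackCounts (window e N univ) α L
  chain : L.IsChain fun i j => e j < e i + N
  head_lt : ∀ h ∈ L.head?, e h < 1

theorem HasAttackCounts.insert {W : ι → Finset ι} {α : ι → ℕ} {l : ι} {L₁ L₂ : List ι}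
    (h : HasAttackCounts W α (L₁ ++ L₂)) (hL₁ : ∀ x ∈ L₁, l ∉ W x)
    (hl : L₂.countP (· ∈ W l) = α l) : HasAttackCounts W α (L₁ ++ l :: L₂) := by
  induction L₁ with
  | nil => exact ⟨hl, h⟩
  | cons x L₁ ih =>
    refine ⟨?_, ih h.2 fun y hy => hL₁ y (List.mem_cons_of_mem _ hy)⟩
    change (L₁ ++ l :: L₂).countP _ = _
    rw [← h.1]
    change _ = (L₁ ++ L₂).countP _
    simp [List.countP_append, hL₁ x List.mem_cons_self]

theorem countP_ofFn {κ : Type*} (p : κ → Bool) {m : ℕ} (s : Fin m → κ) :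
    (List.ofFn s).countP p = #{j | p (s j)} := by
  induction m with
  | zero => simp
  | succ m ih =>
    rw [List.ofFn_succ, List.countP_cons, ih, Fin.card_filter_univ_succ]
    split_ifs <;> rfl

theorem HasAttackCounts.card_filter {W : ι → Finset ι} {α : ι → ℕ} {m : ℕ} {s : Fin m → ι}
    (h : HasAttackCounts W α (List.ofFn s)) (i : Fin m) :
    #{j | i < j ∧ s j ∈ W (s i)} = α (s i) := by
  induction m with
  | zero => exact i.elim0
  | succ m ih =>
    rw [List.ofFn_succ] at h
    rw [Fin.card_filter_univ_succ, if_neg (by simp)]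
    cases i using Fin.cases with
    | zero => simp [← h.1, countP_ofFn, Fin.succ_pos]
    | succ i => simpa [Fin.succ_lt_succ_iff] using ih h.2 i

theorem exists_eq_append_cons_countP {κ : Type*} {p : κ → Bool} {k : ℕ} {L : List κ}
    (h : k < L.countP p) :
    ∃ L₁ q L₂, L = L₁ ++ q :: L₂ ∧ p q ∧ L₂.countP p = k := by
  induction L with
  | nil => simp at h
  | cons x L ih =>
    by_cases hk : k < L.countP p
    · obtain ⟨L₁, q, L₂, rfl, hq, hL₂⟩ := ih hk
      exact ⟨x :: L₁, q, L₂, rfl, hq, hL₂⟩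
    · rw [List.countP_cons] at h
      by_cases hp : p x
      · rw [if_pos hp] at h
        exact ⟨[], x, L, rfl, hp, by lia⟩
      · rw [if_neg hp] at h
        exact absurd h hk

variable [Fintype ι] {e : ι → ℤ} {N : ℤ} {α : ι → ℕ} {A : Finset ι} {L L₁ L₂ : List ι} {l q : ι}

theorem IsReading.cons (hL : IsReading e N α A L) (hN : 0 ≤ N) (hl : ∀ x ∈ A, e x < e l)
    (hcount : L.countP (· ∈ window e N univ l) = α l) (hl_lt : e l < 1) :
    IsReading e N α (insert l A) (l :: L) where
  nodup := List.nodup_cons.2 ⟨fun h => (hl l ((hL.mem_iff l).1 h)).false, hL.nodup⟩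
  mem_iff x := by rw [List.mem_cons, mem_insert, hL.mem_iff]
  counts := ⟨hcount, hL.counts⟩
  chain := List.isChain_cons.2 ⟨fun y hy => by
    have := hl y ((hL.mem_iff y).1 (List.mem_of_mem_head? hy))
    lia, hL.chain⟩
  head_lt := by simpa using hl_lt

theorem IsReading.insert_after (hL : IsReading e N α A (L₁ ++ q :: L₂)) (hN : 0 ≤ N)
    (hl : ∀ x ∈ A, e x < e l) (hcount : L₂.countP (· ∈ window e N univ l) = α l)
    (hq : q ∈ window e N univ l) : IsReading e N α (insert l A) (L₁ ++ q :: l :: L₂) := by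
  have hlL {x} (hx : x ∈ L₁ ++ q :: L₂) : e x < e l := hl x ((hL.mem_iff x).1 hx)
  have happ (L : List ι) : L₁ ++ q :: L = (L₁ ++ [q]) ++ L := by simp
  obtain ⟨hchain₁, hchain₂⟩ := List.isChain_split.1 hL.chain
  refine ⟨?_, fun x => ?_, ?_, ?_, ?_⟩
  · rw [happ, List.nodup_middle, List.nodup_cons, ← happ]
    exact ⟨fun h => (hlL h).false, hL.nodup⟩
  · rw [mem_insert, ← hL.mem_iff]
    simp only [List.mem_append, List.mem_cons]
    tauto
  · rw [happ]
    refine HasAttackCounts.insert (happ L₂ ▸ hL.counts) (fun x hx => ?_) hcount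
    have := hlL (happ L₂ ▸ List.mem_append_left L₂ hx)
    simp only [mem_window, not_and, not_lt]
    lia
  · refine List.isChain_append_cons_cons.2 ⟨hchain₁, by have := (mem_window.1 hq).2.1; lia, ?_⟩
    refine List.isChain_cons.2 ⟨fun y hy => ?_, (List.isChain_cons.1 hchain₂).2⟩
    have := hlL (x := y) (by simp [List.mem_of_mem_head? hy])
    lia
  · cases L₁ <;> exact fun h hh => hL.head_lt h (by simpa using hh)

theorem exists_isReading (he : e.Injective) (hN : 0 ≤ N)
    (hα : ∀ l, α l < boxBound e N univ 1 l) (A : Finset ι)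
    (hA : ∀ l ∈ A, ∀ j, e j < e l → j ∈ A) : ∃ L, IsReading e N α A L := by
  induction A using Finset.induction_on_max_value e with
  | empty => exact ⟨[], by simp, by simp, trivial, by simp, by simp⟩
  | insert l A hlA hmax ih =>
    have hlt (x) (hx : x ∈ A) : e x < e l := (hmax x hx).lt_of_ne fun h => hlA (he h ▸ hx)
    have hlow (j) (hj : e j < e l) : j ∈ A :=
      mem_of_mem_insert_of_ne (hA l (mem_insert_self l A) j hj) fun h => (h ▸ hj).false
    obtain ⟨L, hL⟩ := ih fun x hx j hj => hlow j (hj.trans (hlt x hx))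
    have hcount : L.countP (· ∈ window e N univ l) = #(window e N univ l) := by
      rw [List.countP_eq_length_filter, ← List.toFinset_card_of_nodup (hL.nodup.filter _)]
      congr 1
      ext j
      simp only [List.mem_toFinset, List.mem_filter, decide_eq_true_eq, hL.mem_iff,
        and_iff_right_iff_imp]
      exact fun hj => hlow j (mem_window.1 hj).2.2
    by_cases hk : α l < L.countP (· ∈ window e N univ l)
    · obtain ⟨L₁, q, L₂, rfl, hq, hL₂⟩ := exists_eq_append_cons_countP hk
      exact ⟨_, hL.insert_after hN hlt hL₂ (by simpa using hq)⟩
    · have hl := hα l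
      rw [boxBound, if_pos (mem_univ l), levelBit, ← hcount] at hl
      split_ifs at hl with hl_lt
      · exact ⟨_, hL.cons hN hlt (by lia) hl_lt⟩
      · exact absurd hl hk

end Reading

section BoxParking

variable {n : ℕ} {b : Fin n → ℕ} {i j : Fin n}

theorem mul_sub_lt_mul_sub_iff {u v : ℤ} :
    (n : ℤ) * u - i < n * v - j ↔ u < v ∨ u = v ∧ j < i := by
  rcases lt_trichotomy u v with h | rfl | h
  · have : (n : ℤ) * (u + 1) ≤ n * v := mul_le_mul_of_nonneg_left h (by positivity)
    simp only [h, true_or, iff_true]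
    grind
  · grind
  · have : (n : ℤ) * (v + 1) ≤ n * u := mul_le_mul_of_nonneg_left h (by positivity)
    grind

theorem height_lt_height_add_iff :
    height b j < height b i + n ↔ b j ≤ b i ∨ b j = b i + 1 ∧ i < j := by
  rw [show height b i + n = n * ((b i : ℤ) + 1) - i by rw [height]; ring, height,
    mul_sub_lt_mul_sub_iff]
  lia

theorem mem_window_height :
    j ∈ window (height b) n univ i ↔ (b i = b j ∧ i < j) ∨ (b i = b j + 1 ∧ j < i) := by
  rw [mem_window, sub_lt_iff_lt_add, height_lt_height_add_iff, height, height,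
    mul_sub_lt_mul_sub_iff, and_iff_right (mem_univ j)]
  lia

theorem IsReading.isParking {α : Fin n → ℕ} {σ : Equiv.Perm (Fin n)}
    (h : IsReading (height b) n α univ (List.ofFn σ)) : IsParking (fun i => b (σ i)) σ := by
  have hchain (i j : Fin n) (hij : (j : ℕ) = i + 1) :
      b (σ j) ≤ b (σ i) ∨ b (σ j) = b (σ i) + 1 ∧ σ i < σ j := by
    rw [← height_lt_height_add_iff]
    convert List.isChain_ofFn.1 h.chain i (by lia)
  refine ⟨⟨fun i hi => height_lt_one_iff.1 (h.head_lt _ ?_), fun i j hij => ?_⟩,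
    fun i j hij hb => ?_⟩
  · obtain ⟨m, rfl⟩ : ∃ m, n = m + 1 := ⟨n - 1, by have := i.pos; lia⟩
    obtain rfl : i = 0 := Fin.ext hi
    simp [List.ofFn_succ]
  · have := hchain i j hij
    lia
  · have := hchain i j hij
    lia

theorem IsReading.parkMonomial_eq {α : Fin n →₀ ℕ} {σ : Equiv.Perm (Fin n)}
    (h : IsReading (height b) n α univ (List.ofFn σ)) :
    parkMonomial (fun i => b (σ i)) σ = rename Sum.inl (monomial α 1) * yMonomial b := by
  have hdinv (i) : dinvPark (fun i => b (σ i)) σ i = α (σ i) := by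
    simp only [← h.counts.card_filter, mem_window_height, dinvPark]
  simp only [parkMonomial, hdinv]
  rw [Equiv.prod_comp σ fun k => (X (Sum.inl k) ^ α k * X (Sum.inr k) ^ b k :
      MvPolynomial (Fin n ⊕ Fin n) ℂ), prod_mul_distrib, yMonomial, monomial_eq,
    Finsupp.prod_fintype _ _ (by simp)]
  simp

theorem IsReading.exists_perm {e : Fin n → ℤ} {N : ℤ} {α : Fin n → ℕ} {L : List (Fin n)}
    (h : IsReading e N α univ L) : ∃ σ : Equiv.Perm (Fin n), L = List.ofFn σ := by
  have hlen : L.length = n := by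
    rw [← List.toFinset_card_of_nodup h.nodup, show L.toFinset = univ by ext x; simp [h.mem_iff],
      card_fin]
  have hL : L = List.ofFn fun i => L.get (i.cast hlen.symm) :=
    List.ext_get (by simp [hlen]) fun i _ _ => by simp
  exact ⟨Equiv.ofBijective _ (Finite.injective_iff_bijective.1
    (List.nodup_ofFn.1 (hL ▸ h.nodup))), hL⟩

theorem exists_isParking_of_mem_boxMonomials {g : MvPolynomial (Fin n) ℂ}
    (hg : g ∈ boxMonomials ℂ (boxBound (height b) n univ 1)) :
    ∃ a σ, IsParking (n := n) a σ ∧ rename Sum.inl g * yMonomial b = parkMonomial a σ := by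
  obtain ⟨α, hα, rfl⟩ := hg
  obtain ⟨L, hL⟩ := exists_isReading (height_injective b) (by positivity) hα univ (by simp)
  obtain ⟨σ, rfl⟩ := hL.exists_perm
  exact ⟨_, σ, hL.isParking, hL.parkMonomial_eq.symm⟩

theorem sup_span_parkMonomial_eq_top (n : ℕ) : (invIdeal n).restrictScalars ℂ ⊔
    Submodule.span ℂ (Set.range
      fun P : {p : (Fin n → ℕ) × Equiv.Perm (Fin n) // IsParking p.1 p.2} =>
        parkMonomial P.1.1 P.1.2) = ⊤ := by
  refine top_unique ((boxSpan_eq_top n).ge.trans (sup_le_sup_left (Submodule.span_mono ?_) _))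
  rintro _ ⟨b, g, hg, rfl⟩
  obtain ⟨a, σ, hP, h⟩ := exists_isParking_of_mem_boxMonomials hg
  exact ⟨⟨(a, σ), hP⟩, h.symm⟩

end BoxParking

section AffineRelations

/-- The Coxeter relations of the symmetric group `S_n` for a sequence of elements of a monoid;
only `S 0, …, S (n - 2)` are constrained. -/
structure CoxeterRelations {A : Type*} [Monoid A] (n : ℕ) (S : ℕ → A) : Prop where
  sq : ∀ i, i + 1 < n → S i * S i = 1
  braid : ∀ i, i + 2 < n → S i * S (i + 1) * S i = S (i + 1) * S i * S (i + 1)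
  far : ∀ i j, i + 1 < j → j + 1 < n → S i * S j = S j * S i

/-- The relations of the extended affine symmetric group, generated by the finite simple
reflections `S i` and the length-zero rotation `Ω`. The affine reflection, which would be
`Ω * S (n - 2) * Ω⁻¹`, is eliminated: its relation to `S 0` is encoded in `rotate_sq`. -/
structure ExtendedAffineRelations {A : Type*} [Monoid A] (n : ℕ) (S : ℕ → A) (Ω : A) : Prop
    extends CoxeterRelations n S where
  rotate : ∀ j, j + 2 < n → S (j + 1) * Ω = Ω * S j
  rotate_sq : 2 ≤ n → S 0 * (Ω * Ω) = Ω * Ω * S (n - 2)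

variable {A : Type*} [Monoid A] {n : ℕ} {S : ℕ → A} {Ω : A}

/-- The descending product `S (k - 1) * ⋯ * S 1 * S 0`, a Coxeter element of `S_{k + 1}`. -/
def descProd (S : ℕ → A) : ℕ → A
  | 0 => 1
  | k + 1 => S k * descProd S k

/-- The pairwise commuting translations of the extended affine symmetric group, in terms of the
generators: the rotation times a Coxeter element, and its conjugates by simple reflections. -/
def translation (n : ℕ) (S : ℕ → A) (Ω : A) : ℕ → A
  | 0 => Ω * descProd S (n - 1)
  | k + 1 => S k * translation n S Ω k * S k

theorem CoxeterRelations.mul_descProd_of_lt (h : CoxeterRelations n S) {k j : ℕ} (hkj : k < j)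
    (hj : j + 1 < n) : S j * descProd S k = descProd S k * S j := by
  induction k with
  | zero => simp [descProd]
  | succ k ih => rw [descProd, ← mul_assoc, ← h.far k j hkj hj, mul_assoc, ih (by lia), mul_assoc]

theorem CoxeterRelations.mul_descProd_of_succ_lt (h : CoxeterRelations n S) {k j : ℕ}
    (hjk : j + 1 < k) (hk : k < n) : S j * descProd S k = descProd S k * S (j + 1) := by
  induction k with
  | zero => lia
  | succ k ih =>
    rcases Nat.lt_or_ge (j + 1) k with hlt | hge
    · rw [descProd, ← mul_assoc, h.far j k hlt hk, mul_assoc, ih hlt (by lia), mul_assoc]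
    · obtain rfl : k = j + 1 := by lia
      simp only [descProd]
      rw [← mul_assoc, ← mul_assoc, h.braid j hk, mul_assoc _ (S (j + 1)),
        h.mul_descProd_of_lt j.lt_succ_self hk]
      simp only [mul_assoc]

theorem descProd_succ' (S : ℕ → A) (k : ℕ) :
    descProd S (k + 1) = descProd (fun i => S (i + 1)) k * S 0 := by
  induction k with
  | zero => simp [descProd]
  | succ k ih => rw [descProd, ih, descProd, mul_assoc]

theorem CoxeterRelations.descProd_mul_descProd_shift (h : CoxeterRelations n S) {k i : ℕ}
    (hki : k < i) (hi : i < n) :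
    descProd S i * descProd (fun j => S (j + 1)) k = descProd S k * descProd S i := by
  induction k with
  | zero => simp [descProd]
  | succ k ih =>
    rw [descProd, descProd, ← mul_assoc, ← h.mul_descProd_of_succ_lt hki hi, mul_assoc,
      ih (by lia), mul_assoc]

theorem ExtendedAffineRelations.descProd_shift_mul (h : ExtendedAffineRelations n S Ω) {k : ℕ}
    (hk : k + 1 < n) : descProd (fun j => S (j + 1)) k * Ω = Ω * descProd S k := by
  induction k with
  | zero => simp [descProd]
  | succ k ih =>
    rw [descProd, descProd, mul_assoc, ih (by lia), ← mul_assoc, h.rotate k (by lia), mul_assoc]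

theorem ExtendedAffineRelations.commute_translation_zero (h : ExtendedAffineRelations n S Ω)
    {j : ℕ} (hj : j + 2 < n) : Commute (S (j + 1)) (translation n S Ω 0) := by
  rw [Commute, SemiconjBy, translation, ← mul_assoc, h.rotate j hj, mul_assoc,
    h.mul_descProd_of_succ_lt (by lia) (by lia), mul_assoc]

theorem ExtendedAffineRelations.commute_translation_zero_mul (h : ExtendedAffineRelations n S Ω)
    (hn : 2 ≤ n) : Commute (S 0) (translation n S Ω 0 * S 0 * (translation n S Ω 0 * S 0)) := by
  obtain ⟨k, rfl⟩ : ∃ k, n = k + 2 := ⟨n - 2, by lia⟩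
  set D := descProd (fun j => S (j + 1)) k with hD
  have translation_mul : translation (k + 2) S Ω 0 * S 0 = Ω * D := by
    rw [translation, show k + 2 - 1 = k + 1 from rfl, descProd_succ', mul_assoc, mul_assoc,
      h.sq 0 (by lia), mul_one]
  have square : Ω * D * (Ω * D) = Ω * Ω * (descProd S k * D) := by
    rw [mul_assoc Ω D, ← mul_assoc D, hD, h.descProd_shift_mul (by lia)]
    simp only [mul_assoc]
  rw [translation_mul, square, Commute, SemiconjBy]
  calc S 0 * (Ω * Ω * (descProd S k * D))
      = Ω * Ω * (descProd S (k + 1) * D) := by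
        rw [← mul_assoc, h.rotate_sq hn, descProd]
        simp only [mul_assoc, Nat.add_sub_cancel]
    _ = Ω * Ω * (descProd S k * D) * S 0 := by
        rw [h.descProd_mul_descProd_shift k.lt_succ_self (by lia), descProd_succ']
        simp only [mul_assoc, hD]

theorem ExtendedAffineRelations.commute_translation_zero_one
    (h : ExtendedAffineRelations n S Ω) (hn : 2 ≤ n) :
    Commute (translation n S Ω 0) (translation n S Ω 1) := by
  have hcomm := h.commute_translation_zero_mul hn
  have hsq := h.sq 0 hn
  have translation_one : translation n S Ω 1 = S 0 * translation n S Ω 0 * S 0 := rfl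
  rw [translation_one]
  set T := translation n S Ω 0
  calc T * (S 0 * T * S 0)
      = S 0 * (S 0 * (T * S 0 * (T * S 0))) := by
        rw [← mul_assoc (S 0) (S 0), hsq, one_mul]; simp only [mul_assoc]
    _ = S 0 * (T * S 0 * (T * S 0) * S 0) := by rw [hcomm.eq]
    _ = S 0 * T * S 0 * T * (S 0 * S 0) := by simp only [mul_assoc]
    _ = S 0 * T * S 0 * T := by rw [hsq, mul_one]

theorem ExtendedAffineRelations.commute_translation_of_lt (h : ExtendedAffineRelations n S Ω)
    {i j : ℕ} (hji : j < i) (hi : i + 1 < n) : Commute (S i) (translation n S Ω j) := by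
  induction j with
  | zero =>
    obtain ⟨k, rfl⟩ : ∃ k, i = k + 1 := ⟨i - 1, by lia⟩
    exact h.commute_translation_zero hi
  | succ j ih =>
    have hcomm : Commute (S i) (S j) := (h.far j i hji hi).symm
    exact (hcomm.mul_right (ih (by lia))).mul_right hcomm

theorem ExtendedAffineRelations.commute_translation_add_two (h : ExtendedAffineRelations n S Ω)
    {i : ℕ} (hi : i + 2 < n) : Commute (S i) (translation n S Ω (i + 2)) := by
  have hbraid := h.braid i hi
  have hcomm : S (i + 1) * translation n S Ω i = translation n S Ω i * S (i + 1) :=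
    h.commute_translation_of_lt i.lt_succ_self hi
  rw [Commute, SemiconjBy, translation, translation]
  set T := translation n S Ω i
  calc S i * (S (i + 1) * (S i * T * S i) * S (i + 1))
      = S i * S (i + 1) * S i * T * S i * S (i + 1) := by simp only [mul_assoc]
    _ = S (i + 1) * S i * (S (i + 1) * T) * S i * S (i + 1) := by
        rw [hbraid]; simp only [mul_assoc]
    _ = S (i + 1) * S i * T * (S (i + 1) * S i * S (i + 1)) := by
        rw [hcomm]; simp only [mul_assoc]
    _ = S (i + 1) * (S i * T * S i) * S (i + 1) * S i := by
        rw [← hbraid]; simp only [mul_assoc]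

theorem ExtendedAffineRelations.commute_translation_of_succ_lt
    (h : ExtendedAffineRelations n S Ω) {i j : ℕ} (hij : i + 1 < j) (hj : j < n) :
    Commute (S i) (translation n S Ω j) := by
  induction j with
  | zero => lia
  | succ j ih =>
    rcases Nat.lt_or_ge (i + 1) j with hlt | hge
    · have hcomm : Commute (S i) (S j) := h.far i j hlt hj
      exact (hcomm.mul_right (ih hlt (by lia))).mul_right hcomm
    · obtain rfl : j = i + 1 := by lia
      exact h.commute_translation_add_two hj

theorem ExtendedAffineRelations.commute_translation_translation
    (h : ExtendedAffineRelations n S Ω) {i j : ℕ} (hij : i < j) (hj : j < n) :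
    Commute (translation n S Ω i) (translation n S Ω j) := by
  induction i generalizing j with
  | zero =>
    induction j with
    | zero => lia
    | succ j ih =>
      rcases Nat.eq_zero_or_pos j with rfl | hpos
      · exact h.commute_translation_zero_one hj
      · have hcomm : Commute (translation n S Ω 0) (S j) :=
          (h.commute_translation_of_lt hpos hj).symm
        exact (hcomm.mul_right (ih hpos (by lia))).mul_right hcomm
  | succ i ih =>
    have hcomm : Commute (S i) (translation n S Ω j) := h.commute_translation_of_succ_lt hij hj
    exact (hcomm.mul_left (ih (by lia) hj)).mul_left hcomm

end AffineRelations

section Antisymmetrizer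

variable {A : Type*} [Ring A] {n : ℕ} {S : ℕ → A}

/-- The signed minimal coset representative `(-1)^j S (k - j + 1) * ⋯ * S (k - 1) * S k` of
`S_{k + 1}` in `S_{k + 2}`. -/
def signedCosetRep (S : ℕ → A) (k : ℕ) : ℕ → A
  | 0 => 1
  | j + 1 => -(S (k - j) * signedCosetRep S k j)

/-- The antisymmetrizer `∑ w, sign w • w` over `S_{k + 1} = ⟨S 0, …, S (k - 1)⟩`, factored
through the chain of parabolic subgroups `S_1 ⊂ S_2 ⊂ ⋯ ⊂ S_{k + 1}`. -/
def antisymmetrizer (S : ℕ → A) : ℕ → A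
  | 0 => 1
  | k + 1 => (∑ j ∈ range (k + 2), signedCosetRep S k j) * antisymmetrizer S k

theorem CoxeterRelations.mul_signedCosetRep_of_lt (h : CoxeterRelations n S) {k j i : ℕ}
    (hk : k + 1 < n) (hi : i + j < k) :
    S i * signedCosetRep S k j = signedCosetRep S k j * S i := by
  induction j with
  | zero => simp [signedCosetRep]
  | succ j ih =>
    rw [signedCosetRep, mul_neg, neg_mul, ← mul_assoc, h.far i (k - j) (by lia) (by lia),
      mul_assoc, ih (by lia), mul_assoc]

theorem CoxeterRelations.mul_signedCosetRep_of_gt (h : CoxeterRelations n S) {k j i : ℕ}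
    (hk : k + 1 < n) (hj : j ≤ k + 1) (hi : k + 1 < i + j) (hik : i ≤ k) :
    S i * signedCosetRep S k j = signedCosetRep S k j * S (i - 1) := by
  induction j with
  | zero => lia
  | succ j ih =>
    rcases Nat.lt_or_ge (k + 1) (i + j) with hlt | hge
    · rw [signedCosetRep, mul_neg, neg_mul, ← mul_assoc, ← h.far (k - j) i (by lia) (by lia),
        mul_assoc, ih (by lia) hlt, mul_assoc]
    · obtain ⟨i, rfl⟩ : ∃ i', i = i' + 1 := ⟨i - 1, by lia⟩
      obtain ⟨j, rfl⟩ : ∃ j', j = j' + 1 := ⟨j - 1, by lia⟩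
      simp only [signedCosetRep, show k - (j + 1) = i by lia, show k - j = i + 1 by lia,
        Nat.add_sub_cancel, mul_neg, neg_neg]
      rw [← mul_assoc, ← mul_assoc, ← h.braid i (by lia), mul_assoc _ (S i),
        h.mul_signedCosetRep_of_lt hk (by lia)]
      simp only [mul_assoc]

theorem CoxeterRelations.mul_signedCosetRep_mul (h : CoxeterRelations n S) {k j i : ℕ}
    (hk : k + 1 < n) (hj : j ≤ k + 1) (hi : i ≤ k) {E : A}
    (hE : ∀ i < k, S i * E = -E) :
    S i * (signedCosetRep S k j * E) =
      -(signedCosetRep S k (Equiv.swap (k - i) (k - i + 1) j) * E) := by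
  rcases Nat.lt_trichotomy (i + j) k with hlt | heq | hgt
  · rw [Equiv.swap_apply_of_ne_of_ne (by lia) (by lia), ← mul_assoc,
      h.mul_signedCosetRep_of_lt hk hlt, mul_assoc, hE i (by lia), mul_neg]
  · obtain rfl : j = k - i := by lia
    rw [Equiv.swap_apply_left, signedCosetRep, show k - (k - i) = i by lia, neg_mul, neg_neg,
      mul_assoc]
  rcases Nat.lt_or_ge (k + 1) (i + j) with hgt | hle
  · rw [Equiv.swap_apply_of_ne_of_ne (by lia) (by lia), ← mul_assoc,
      h.mul_signedCosetRep_of_gt hk hj hgt hi, mul_assoc, hE (i - 1) (by lia), mul_neg]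
  · obtain rfl : j = k - i + 1 := by lia
    rw [Equiv.swap_apply_right, signedCosetRep, show k - (k - i) = i by lia, neg_mul, mul_neg,
      mul_assoc, ← mul_assoc (S i) (S i), h.sq i (by lia), one_mul]

theorem CoxeterRelations.mul_antisymmetrizer (h : CoxeterRelations n S) {k i : ℕ} (hk : k < n)
    (hi : i < k) : S i * antisymmetrizer S k = -antisymmetrizer S k := by
  induction k generalizing i with
  | zero => lia
  | succ k ih =>
    have swap_lt {j : ℕ} (hj : j ∈ range (k + 2)) :
        Equiv.swap (k - i) (k - i + 1) j ∈ range (k + 2) := by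
      rw [mem_range] at hj ⊢
      rw [Equiv.swap_apply_def]
      split_ifs <;> lia
    rw [antisymmetrizer, sum_mul, mul_sum, ← sum_neg_distrib]
    refine sum_bij' (fun j _ => Equiv.swap (k - i) (k - i + 1) j)
      (fun j _ => Equiv.swap (k - i) (k - i + 1) j) (fun _ => swap_lt) (fun _ => swap_lt)
      (fun j _ => Equiv.swap_apply_self _ _ j) (fun j _ => Equiv.swap_apply_self _ _ j)
      fun j hj => ?_
    rw [mem_range] at hj
    exact h.mul_signedCosetRep_mul hk (by lia) (by lia) fun i => ih (by lia)

end Antisymmetrizer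

section AffineWindows

/-- The window `(w 1, …, w n)`, indexed from `0`, of an affine permutation of `ℤ`: pairwise
incongruent modulo `n`, with the same sum as the identity. -/
@[ext] structure AffineWindow (n : ℕ) where
  toFun : Fin n → ℤ
  eq_of_dvd_sub {i j : Fin n} : (n : ℤ) ∣ toFun i - toFun j → i = j
  sum_eq : ∑ i, toFun i = ∑ i : Fin n, (i : ℤ)

instance {n : ℕ} : CoeFun (AffineWindow n) fun _ => Fin n → ℤ := ⟨AffineWindow.toFun⟩

variable {n : ℕ}

theorem dvd_sub_coe_sub [NeZero n] (i c : Fin n) : (n : ℤ) ∣ (i : ℤ) - (i - c : Fin n) - c := by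
  have hc := c.isLt
  have hdiv := Nat.div_add_mod (n - c + i) n
  refine ⟨((n - c + i) / n : ℕ) - 1, ?_⟩
  rw [Fin.val_sub, mul_sub]
  push_cast [hc.le] at hdiv ⊢
  zify [hc.le] at hdiv
  lia

namespace AffineWindow

theorem injective (w : AffineWindow n) : Function.Injective w := fun i j hij =>
  w.eq_of_dvd_sub (by simp [hij])

/-- The window of the composite of an affine permutation with a permutation of its indices. -/
def comp (w : AffineWindow n) (σ : Equiv.Perm (Fin n)) : AffineWindow n where
  toFun i := w (σ i)
  eq_of_dvd_sub h := σ.injective (w.eq_of_dvd_sub h)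
  sum_eq := (Equiv.sum_comp σ w).trans w.sum_eq

/-- The window of a finite permutation. -/
def ofPerm (σ : Equiv.Perm (Fin n)) : AffineWindow n where
  toFun i := (σ i : ℕ)
  eq_of_dvd_sub h := σ.injective (fin_eq_of_dvd_sub h)
  sum_eq := Equiv.sum_comp σ fun i : Fin n => (i : ℤ)

/-- The window of the conjugate of an affine permutation by the translation of `ℤ` by `c`: the
displacements `w i - i` are rotated by `c` positions. -/
def rotate [NeZero n] (c : Fin n) (w : AffineWindow n) : AffineWindow n where
  toFun i := w (i - c) + (i - (i - c : Fin n))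
  eq_of_dvd_sub {i j} h := by
    have key : (n : ℤ) ∣ w (i - c) - w (j - c) := by
      have := (dvd_sub h (dvd_sub_coe_sub i c)).add (dvd_sub_coe_sub j c)
      ring_nf at this ⊢
      exact this
    exact sub_left_injective (w.eq_of_dvd_sub key)
  sum_eq := by
    have sum_sub (f : Fin n → ℤ) : ∑ i, f (i - c) = ∑ i, f i := Equiv.sum_comp (Equiv.subRight c) f
    rw [sum_add_distrib, sum_sub_distrib, sum_sub w, sum_sub fun i => (i : ℤ), w.sum_eq,
      sub_self, add_zero]

theorem comp_apply (w : AffineWindow n) (σ : Equiv.Perm (Fin n)) (i : Fin n) :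
    w.comp σ i = w (σ i) := rfl

theorem comp_comp (w : AffineWindow n) (σ τ : Equiv.Perm (Fin n)) :
    (w.comp σ).comp τ = w.comp (σ * τ) := rfl

theorem comp_one (w : AffineWindow n) : w.comp 1 = w := rfl

theorem comp_swap_swap (w : AffineWindow n) (p q : Fin n) :
    (w.comp (Equiv.swap p q)).comp (Equiv.swap p q) = w := by
  rw [comp_comp, Equiv.swap_mul_self, comp_one]

theorem ofPerm_comp (σ τ : Equiv.Perm (Fin n)) : (ofPerm σ).comp τ = ofPerm (σ * τ) := rfl

theorem ofPerm_injective : Function.Injective (ofPerm (n := n)) := fun σ τ h => by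
  ext i
  have := congrArg (fun w : AffineWindow n => w i) h
  simpa [ofPerm] using this

theorem rotate_apply [NeZero n] (c : Fin n) (w : AffineWindow n) (i : Fin n) :
    w.rotate c i = w (i - c) + (i - (i - c : Fin n)) := rfl

theorem rotate_rotate [NeZero n] (c d : Fin n) (w : AffineWindow n) :
    (w.rotate d).rotate c = w.rotate (c + d) := by
  ext i
  simp only [rotate_apply, sub_sub]
  ring

theorem rotate_zero [NeZero n] (w : AffineWindow n) : w.rotate 0 = w := by
  ext i
  simp [rotate_apply]

theorem rotate_comp_swap [NeZero n] {p q c : Fin n}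
    (h : (p : ℤ) - (p - c : Fin n) = q - (q - c : Fin n)) (w : AffineWindow n) :
    (w.rotate c).comp (Equiv.swap p q) = (w.comp (Equiv.swap (p - c) (q - c))).rotate c := by
  ext i
  simp only [comp_apply, rotate_apply]
  rw [Equiv.swap_apply_def, Equiv.swap_apply_def]
  simp only [sub_left_inj]
  split_ifs with hp hq
  · rw [hp, h]
  · rw [hq, h]
  · rfl

end AffineWindow

end AffineWindows

section Representation

variable {n : ℕ}

/-- The scattering coefficient `(n + 1) / (w p - w q)` of the exchange operators. -/
noncomputable def scattering (w : AffineWindow n) (p q : Fin n) : ℂ := (n + 1) / (w p - w q)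

/-- Multiplication by the `i`-th entry of the window, one half of the operators representing the
polynomial variables on the space spanned by the affine permutations. -/
noncomputable def coordinateOp (i : Fin n) : Module.End ℂ (AffineWindow n →₀ ℂ) :=
  Finsupp.linearCombination ℂ fun w => (w i : ℂ) • Finsupp.single w 1

/-- Young's seminormal form, at parameter `n + 1`, of the transposition of the positions `p`
and `q` of a window. -/
noncomputable def exchangeOp (p q : Fin n) : Module.End ℂ (AffineWindow n →₀ ℂ) :=
  Finsupp.linearCombination ℂ fun w =>
    -scattering w p q • Finsupp.single w 1 +
      (1 + scattering w p q) • Finsupp.single (w.comp (Equiv.swap p q)) 1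

/-- The linear extension of `AffineWindow.rotate`. -/
noncomputable def rotationOp [NeZero n] (c : Fin n) : Module.End ℂ (AffineWindow n →₀ ℂ) :=
  Finsupp.linearCombination ℂ fun w => Finsupp.single (w.rotate c) 1

theorem coordinateOp_single (i : Fin n) (w : AffineWindow n) :
    coordinateOp i (Finsupp.single w 1) = (w i : ℂ) • Finsupp.single w 1 := by
  rw [coordinateOp, Finsupp.linearCombination_single, one_smul]

theorem exchangeOp_single (p q : Fin n) (w : AffineWindow n) :
    exchangeOp p q (Finsupp.single w 1) = -scattering w p q • Finsupp.single w 1 +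
      (1 + scattering w p q) • Finsupp.single (w.comp (Equiv.swap p q)) 1 := by
  rw [exchangeOp, Finsupp.linearCombination_single, one_smul]

theorem rotationOp_single [NeZero n] (c : Fin n) (w : AffineWindow n) :
    rotationOp c (Finsupp.single w 1) = Finsupp.single (w.rotate c) 1 := by
  rw [rotationOp, Finsupp.linearCombination_single, one_smul]

theorem end_ext_single {ι R : Type*} [CommSemiring R] {f g : Module.End R (ι →₀ R)}
    (h : ∀ i, f (Finsupp.single i 1) = g (Finsupp.single i 1)) : f = g :=
  Finsupp.lhom_ext' fun i => LinearMap.ext_ring (h i)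

theorem scattering_swap (w : AffineWindow n) (p q : Fin n) :
    scattering w q p = -scattering w p q := by
  rw [scattering, scattering, ← div_neg, neg_sub]

theorem scattering_comp (w : AffineWindow n) (σ : Equiv.Perm (Fin n)) (p q : Fin n) :
    scattering (w.comp σ) p q = scattering w (σ p) (σ q) := rfl

theorem scattering_rotate [NeZero n] {p q c : Fin n}
    (h : (p : ℤ) - (p - c : Fin n) = q - (q - c : Fin n)) (w : AffineWindow n) :
    scattering (w.rotate c) p q = scattering w (p - c) (q - c) := by
  have key : (w.rotate c p : ℂ) - w.rotate c q = w (p - c) - w (q - c) := by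
    exact_mod_cast show w.rotate c p - w.rotate c q = w (p - c) - w (q - c) by
      rw [AffineWindow.rotate_apply, AffineWindow.rotate_apply, h, add_sub_add_right_eq_sub]
  rw [scattering, scattering, key]

theorem coe_sub_coe_ne_zero (w : AffineWindow n) {p q : Fin n} (h : p ≠ q) :
    (w p : ℂ) - w q ≠ 0 :=
  sub_ne_zero.2 fun heq => h (w.injective (Int.cast_injective heq))

theorem exchangeOp_mul_self {p q : Fin n} : exchangeOp p q * exchangeOp p q = 1 := by
  refine end_ext_single fun w => ?_
  simp only [Module.End.mul_apply, Module.End.one_apply, exchangeOp_single, map_add, map_smul,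
    scattering_comp, w.comp_swap_swap, Equiv.swap_apply_left, Equiv.swap_apply_right,
    scattering_swap w p q]
  module

theorem exchangeOp_mul_exchangeOp_of_disjoint {p q r s : Fin n} (hpr : p ≠ r) (hps : p ≠ s)
    (hqr : q ≠ r) (hqs : q ≠ s) :
    exchangeOp p q * exchangeOp r s = exchangeOp r s * exchangeOp p q := by
  have swap_comm : Equiv.swap r s * Equiv.swap p q = Equiv.swap p q * Equiv.swap r s :=
    (Equiv.Perm.Disjoint.commute fun x => by
      by_cases hx : x = r ∨ x = s
      · right
        rcases hx with rfl | rfl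
        · exact Equiv.swap_apply_of_ne_of_ne hpr.symm hqr.symm
        · exact Equiv.swap_apply_of_ne_of_ne hps.symm hqs.symm
      · rw [not_or] at hx
        exact .inl (Equiv.swap_apply_of_ne_of_ne hx.1 hx.2)).eq
  refine end_ext_single fun w => ?_
  simp only [Module.End.mul_apply, exchangeOp_single, map_add, map_smul, scattering_comp,
    AffineWindow.comp_comp, swap_comm,
    Equiv.swap_apply_of_ne_of_ne hpr hps, Equiv.swap_apply_of_ne_of_ne hqr hqs,
    Equiv.swap_apply_of_ne_of_ne hpr.symm hqr.symm,
    Equiv.swap_apply_of_ne_of_ne hps.symm hqs.symm]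
  module

theorem scattering_mul_scattering (w : AffineWindow n) {p q r : Fin n} (hpq : p ≠ q)
    (hpr : p ≠ r) (hqr : q ≠ r) :
    scattering w p q * scattering w q r =
      scattering w p r * (scattering w p q + scattering w q r) := by
  have dpq := coe_sub_coe_ne_zero w hpq
  have dpr := coe_sub_coe_ne_zero w hpr
  have dqr := coe_sub_coe_ne_zero w hqr
  simp only [scattering]
  field_simp
  ring

theorem exchangeOp_braid {p q r : Fin n} (hpq : p ≠ q) (hpr : p ≠ r) (hqr : q ≠ r) :
    exchangeOp p q * exchangeOp q r * exchangeOp p q =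
      exchangeOp q r * exchangeOp p q * exchangeOp q r := by
  have swap_braid : Equiv.swap p q * Equiv.swap q r * Equiv.swap p q =
      Equiv.swap q r * Equiv.swap p q * Equiv.swap q r := by
    rw [Equiv.swap_mul_swap_mul_swap hpq hpr, Equiv.swap_comm p q, Equiv.swap_comm q r,
      Equiv.swap_mul_swap_mul_swap hqr.symm hpr.symm, Equiv.swap_comm]
  refine end_ext_single fun w => ?_
  have triangle := scattering_mul_scattering w hpq hpr hqr
  have comp_braid : ((w.comp (Equiv.swap p q)).comp (Equiv.swap q r)).comp (Equiv.swap p q) =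
      ((w.comp (Equiv.swap q r)).comp (Equiv.swap p q)).comp (Equiv.swap q r) := by
    simp only [AffineWindow.comp_comp, swap_braid]
  simp only [Module.End.mul_apply, exchangeOp_single, map_add, map_smul, scattering_comp,
    AffineWindow.comp_swap_swap, comp_braid, Equiv.swap_apply_left, Equiv.swap_apply_right,
    Equiv.swap_apply_of_ne_of_ne hpr.symm hqr.symm, Equiv.swap_apply_of_ne_of_ne hpq hpr,
    scattering_swap w p q, scattering_swap w q r]
  match_scalars
  · linear_combination (scattering w q r - scattering w p q) * triangle
  · linear_combination (1 + scattering w p q) * triangle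
  · linear_combination (-1 - scattering w q r) * triangle
  all_goals ring

theorem exchangeOp_mul_coordinateOp {p q : Fin n} (h : p ≠ q) :
    exchangeOp p q * coordinateOp q = coordinateOp p * exchangeOp p q + (n + 1 : ℂ) • 1 := by
  refine end_ext_single fun w => ?_
  have key : scattering w p q * (w p - w q) = n + 1 :=
    div_mul_cancel₀ _ (coe_sub_coe_ne_zero w h)
  simp only [Module.End.mul_apply, LinearMap.add_apply, LinearMap.smul_apply,
    Module.End.one_apply, exchangeOp_single, coordinateOp_single, map_add, map_smul,
    AffineWindow.comp_apply, Equiv.swap_apply_left]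
  match_scalars
  · linear_combination key
  · ring

theorem exchangeOp_mul_coordinateOp_of_ne {p q r : Fin n} (hp : r ≠ p) (hq : r ≠ q) :
    exchangeOp p q * coordinateOp r = coordinateOp r * exchangeOp p q := by
  refine end_ext_single fun w => ?_
  simp only [Module.End.mul_apply, exchangeOp_single, coordinateOp_single, map_add, map_smul,
    AffineWindow.comp_apply, Equiv.swap_apply_of_ne_of_ne hp hq]
  module

theorem commute_coordinateOp (p q : Fin n) : Commute (coordinateOp p) (coordinateOp q) := by
  refine end_ext_single fun w => ?_
  simp only [Module.End.mul_apply, coordinateOp_single, map_smul]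
  module

variable [NeZero n]

theorem coordinateOp_mul_rotationOp (i c : Fin n) :
    coordinateOp i * rotationOp c =
      rotationOp c * (coordinateOp (i - c) + ((i : ℂ) - (i - c : Fin n)) • 1) := by
  refine end_ext_single fun w => ?_
  simp only [Module.End.mul_apply, LinearMap.add_apply, LinearMap.smul_apply,
    Module.End.one_apply, rotationOp_single, coordinateOp_single, map_add, map_smul,
    AffineWindow.rotate_apply]
  push_cast
  module

theorem rotationOp_mul_rotationOp (c d : Fin n) :
    rotationOp c * rotationOp d = rotationOp (c + d) := by
  refine end_ext_single fun w => ?_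
  simp only [Module.End.mul_apply, rotationOp_single, AffineWindow.rotate_rotate]

theorem exchangeOp_mul_rotationOp {p q c : Fin n}
    (h : (p : ℤ) - (p - c : Fin n) = q - (q - c : Fin n)) :
    exchangeOp p q * rotationOp c = rotationOp c * exchangeOp (p - c) (q - c) := by
  refine end_ext_single fun w => ?_
  simp only [Module.End.mul_apply, rotationOp_single, exchangeOp_single, map_add, map_smul,
    scattering_rotate h, AffineWindow.rotate_comp_swap h]

end Representation

section Generators

theorem mul_eq_mul_add_neg_smul_one {R A : Type*} [CommRing R] [Ring A] [Algebra R A]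
    {S X Y : A} {c : R} (hS : S * S = 1) (h : S * Y = X * S + c • 1) :
    S * X = Y * S + (-c) • 1 :=
  calc S * X = S * (X * S + c • 1) * S - c • 1 := by simp [mul_add, add_mul, mul_assoc, hS]
    _ = Y * S + (-c) • 1 := by rw [← h, ← mul_assoc, hS, one_mul, neg_smul, sub_eq_add_neg]

variable {n : ℕ} [NeZero n]

/-- The transposition of the `k`-th and `(k + 1)`-st elements of `Fin n`, counted from `0`. -/
def simpleSwap (n : ℕ) [NeZero n] (k : ℕ) : Equiv.Perm (Fin n) :=
  Equiv.swap (Fin.ofNat n k) (Fin.ofNat n (k + 1))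

/-- The operator representing `simpleSwap n k` on the span of the windows. -/
noncomputable def simpleOp (n : ℕ) [NeZero n] (k : ℕ) : Module.End ℂ (AffineWindow n →₀ ℂ) :=
  exchangeOp (Fin.ofNat n k) (Fin.ofNat n (k + 1))

/-- The operator representing the `i`-th translation, the second half of the operators
representing the polynomial variables. -/
noncomputable def translationOp (i : Fin n) : Module.End ℂ (AffineWindow n →₀ ℂ) :=
  translation n (simpleOp n) (rotationOp 1) i

/-- The operators representing the variables: `x i` acts by `coordinateOp i` and `y i` by
`translationOp i`. They satisfy the relations of the polynomial ring up to terms of lower degree. -/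
noncomputable def varOp : Fin n ⊕ Fin n → Module.End ℂ (AffineWindow n →₀ ℂ) :=
  Sum.elim coordinateOp translationOp

theorem val_ofNat_of_lt {k : ℕ} (h : k < n) : (Fin.ofNat n k : ℕ) = k := Nat.mod_eq_of_lt h

theorem ofNat_ne_ofNat {k l : ℕ} (hk : k < n) (hl : l < n) (h : k ≠ l) :
    Fin.ofNat n k ≠ Fin.ofNat n l := fun heq =>
  h (by rw [← val_ofNat_of_lt hk, heq, val_ofNat_of_lt hl])

theorem ofNat_succ_sub_one (k : ℕ) : Fin.ofNat n (k + 1) - 1 = Fin.ofNat n k :=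
  sub_eq_of_eq_add (Fin.ext (Nat.add_mod k 1 n))

theorem simpleOp_succ_mul_rotationOp {j : ℕ} (hj : j + 2 < n) :
    simpleOp n (j + 1) * rotationOp 1 = rotationOp 1 * simpleOp n j := by
  have key := exchangeOp_mul_rotationOp (p := Fin.ofNat n (j + 1)) (q := Fin.ofNat n (j + 2))
    (c := 1)
  rw [ofNat_succ_sub_one, ofNat_succ_sub_one] at key
  refine key ?_
  rw [val_ofNat_of_lt hj, val_ofNat_of_lt (by lia), val_ofNat_of_lt (by lia)]
  push_cast
  ring

theorem simpleOp_zero_mul_rotationOp_sq (hn : 2 ≤ n) :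
    simpleOp n 0 * (rotationOp 1 * rotationOp 1) =
      rotationOp 1 * rotationOp 1 * simpleOp n (n - 2) := by
  obtain ⟨m, rfl⟩ : ∃ m, n = m + 2 := ⟨n - 2, by lia⟩
  have zero_sub : Fin.ofNat (m + 2) 0 - (1 + 1) = Fin.ofNat (m + 2) m := by
    rw [← sub_sub, show Fin.ofNat (m + 2) 0 = Fin.ofNat (m + 2) (m + 2) from
      (Fin.ofNat_self (n := m + 2)).symm, ofNat_succ_sub_one, ofNat_succ_sub_one]
  have one_sub : Fin.ofNat (m + 2) (0 + 1) - (1 + 1) = Fin.ofNat (m + 2) (m + 1) := by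
    rw [← sub_sub, ofNat_succ_sub_one, show Fin.ofNat (m + 2) 0 = Fin.ofNat (m + 2) (m + 2) from
      (Fin.ofNat_self (n := m + 2)).symm, ofNat_succ_sub_one]
  have key := exchangeOp_mul_rotationOp (p := Fin.ofNat (m + 2) 0) (q := Fin.ofNat (m + 2) (0 + 1))
    (c := 1 + 1)
  rw [zero_sub, one_sub] at key
  rw [rotationOp_mul_rotationOp]
  refine key ?_
  rw [val_ofNat_of_lt (by lia), val_ofNat_of_lt (by lia), val_ofNat_of_lt (by lia),
    val_ofNat_of_lt (by lia)]
  push_cast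
  ring

theorem extendedAffineRelations_simpleOp :
    ExtendedAffineRelations n (simpleOp n) (rotationOp 1) where
  sq _ _ := exchangeOp_mul_self
  braid _ _ := exchangeOp_braid (ofNat_ne_ofNat (by lia) (by lia) (by lia))
    (ofNat_ne_ofNat (by lia) (by lia) (by lia)) (ofNat_ne_ofNat (by lia) (by lia) (by lia))
  far _ _ _ _ := exchangeOp_mul_exchangeOp_of_disjoint
    (ofNat_ne_ofNat (by lia) (by lia) (by lia)) (ofNat_ne_ofNat (by lia) (by lia) (by lia))
    (ofNat_ne_ofNat (by lia) (by lia) (by lia)) (ofNat_ne_ofNat (by lia) (by lia) (by lia))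
  rotate _ := simpleOp_succ_mul_rotationOp
  rotate_sq := simpleOp_zero_mul_rotationOp_sq

theorem simpleOp_mul_self (k : ℕ) : simpleOp n k * simpleOp n k = 1 := exchangeOp_mul_self

theorem exists_simpleOp_mul_coordinateOp {k : ℕ} (hk : k + 1 < n) (i : Fin n) :
    ∃ c : ℂ, simpleOp n k * coordinateOp i =
      coordinateOp (simpleSwap n k i) * simpleOp n k + c • 1 := by
  have cross : simpleOp n k * coordinateOp (Fin.ofNat n (k + 1)) =
      coordinateOp (Fin.ofNat n k) * simpleOp n k + (n + 1 : ℂ) • 1 :=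
    exchangeOp_mul_coordinateOp (ofNat_ne_ofNat (by lia) hk (by lia))
  rcases eq_or_ne i (Fin.ofNat n k) with rfl | hik
  · refine ⟨-(n + 1), ?_⟩
    rw [simpleSwap, Equiv.swap_apply_left]
    exact mul_eq_mul_add_neg_smul_one (R := ℂ) (S := simpleOp n k) (simpleOp_mul_self k) cross
  rcases eq_or_ne i (Fin.ofNat n (k + 1)) with rfl | hik'
  · exact ⟨n + 1, by rw [simpleSwap, Equiv.swap_apply_right, cross]⟩
  · refine ⟨0, ?_⟩
    rw [simpleSwap, Equiv.swap_apply_of_ne_of_ne hik hik', zero_smul, add_zero]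
    exact exchangeOp_mul_coordinateOp_of_ne hik hik'

theorem simpleOp_mul_translationOp {k : ℕ} (hk : k + 1 < n) (i : Fin n) :
    simpleOp n k * translationOp i = translationOp (simpleSwap n k i) * simpleOp n k := by
  have hsq := simpleOp_mul_self (n := n) k
  have hval : (Fin.ofNat n k : ℕ) = k := val_ofNat_of_lt (by lia)
  have hval' : (Fin.ofNat n (k + 1) : ℕ) = k + 1 := val_ofNat_of_lt hk
  rcases eq_or_ne i (Fin.ofNat n k) with rfl | hik
  · rw [simpleSwap, Equiv.swap_apply_left, translationOp, translationOp, hval, hval', translation,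
      mul_assoc _ _ (simpleOp n k), hsq, mul_one]
  rcases eq_or_ne i (Fin.ofNat n (k + 1)) with rfl | hik'
  · rw [simpleSwap, Equiv.swap_apply_right, translationOp, translationOp, hval, hval', translation,
      ← mul_assoc, ← mul_assoc, hsq, one_mul]
  · rw [simpleSwap, Equiv.swap_apply_of_ne_of_ne hik hik']
    have hne : (i : ℕ) ≠ k := fun h => hik (Fin.ext (h.trans hval.symm))
    have hne' : (i : ℕ) ≠ k + 1 := fun h => hik' (Fin.ext (h.trans hval'.symm))
    rcases Nat.lt_or_ge i k with hlt | hge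
    · exact extendedAffineRelations_simpleOp.commute_translation_of_lt hlt hk
    · exact extendedAffineRelations_simpleOp.commute_translation_of_succ_lt (by lia) i.isLt

theorem exists_simpleOp_mul_varOp {k : ℕ} (hk : k + 1 < n) (a : Fin n ⊕ Fin n) :
    ∃ c : ℂ, simpleOp n k * varOp a =
      varOp (Sum.map (simpleSwap n k) (simpleSwap n k) a) * simpleOp n k + c • 1 := by
  rcases a with i | i
  · exact exists_simpleOp_mul_coordinateOp hk i
  · exact ⟨0, by rw [zero_smul, add_zero]; exact simpleOp_mul_translationOp hk i⟩

theorem commute_translationOp (i j : Fin n) : Commute (translationOp i) (translationOp j) := by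
  rcases lt_trichotomy i j with h | rfl | h
  · exact extendedAffineRelations_simpleOp.commute_translation_translation h j.isLt
  · exact .refl _
  · exact (extendedAffineRelations_simpleOp.commute_translation_translation h i.isLt).symm

theorem val_descProd_simpleSwap {k : ℕ} (hk : k < n) (i : Fin n) :
    (descProd (simpleSwap n) k i : ℕ) =
      if (i : ℕ) = 0 then k else if (i : ℕ) ≤ k then i - 1 else i := by
  induction k with
  | zero => split_ifs <;> simp_all [descProd]
  | succ k ih =>
    have ih := ih (by lia)
    have hval : (Fin.ofNat n k : ℕ) = k := val_ofNat_of_lt (by lia)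
    have hval' : (Fin.ofNat n (k + 1) : ℕ) = k + 1 := val_ofNat_of_lt hk
    rw [descProd, Equiv.Perm.mul_apply, simpleSwap, Equiv.swap_apply_def]
    simp only [Fin.ext_iff, hval, hval']
    split_ifs at * <;> omega

theorem descProd_simpleSwap_last (i : Fin n) :
    descProd (simpleSwap n) (n - 1) i = i - 1 := by
  obtain ⟨m, rfl⟩ : ∃ m, n = m + 1 := ⟨n - 1, by have := NeZero.pos n; lia⟩
  ext
  have hi := i.isLt
  rw [val_descProd_simpleSwap (by lia), Fin.coe_sub_one]
  simp only [Fin.ext_iff, Fin.val_zero]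
  split_ifs <;> lia

end Generators

section WordFiltration

variable {R V ι : Type*} [CommRing R] [AddCommGroup V] [Module R V]

/-- The result of applying a word in the operators `O` to the vector `v`. -/
def wordVector (O : ι → Module.End R V) (v : V) (l : List ι) : V := l.foldr (fun a u => O a u) v

/-- The filtration by word length: the span of the vectors obtained from `v` by words of length
less than `d`. The strict inequality makes the terms of degree lower than `d` available without
subtraction. -/
def wordSpan (O : ι → Module.End R V) (v : V) (d : ℕ) : Submodule R V :=
  Submodule.span R {u | ∃ l : List ι, l.length < d ∧ u = wordVector O v l}

/-- The operator `A` raises the degree in the filtration `wordSpan O v` by at most `k`. -/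
def HasDegreeLE (O : ι → Module.End R V) (v : V) (k : ℕ) (A : Module.End R V) : Prop :=
  ∀ d, ∀ u ∈ wordSpan O v d, A u ∈ wordSpan O v (d + k)

/-- The linear map replacing the variables of a polynomial by the operators `O`, multiplied in an
arbitrary order, and applying the result to `v`. -/
noncomputable def normalOrder (O : ι → Module.End R V) (v : V) : MvPolynomial ι R →ₗ[R] V :=
  (basisMonomials ι R).constr R fun m => wordVector O v (Finsupp.toMultiset m).toList

variable {O : ι → Module.End R V} {v : V}

theorem wordVector_cons (a : ι) (l : List ι) :
    wordVector O v (a :: l) = O a (wordVector O v l) := rfl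

theorem wordVector_mem {U : Submodule R V} (hv : v ∈ U) (hU : ∀ a, ∀ u ∈ U, O a u ∈ U)
    (l : List ι) : wordVector O v l ∈ U := by
  induction l with
  | nil => exact hv
  | cons a l ih => exact hU a _ ih

theorem wordVector_mem_wordSpan {l : List ι} {d : ℕ} (h : l.length < d) :
    wordVector O v l ∈ wordSpan O v d :=
  Submodule.subset_span ⟨l, h, rfl⟩

theorem wordSpan_mono : Monotone (wordSpan O v) := fun _ _ h =>
  Submodule.span_mono fun _ ⟨l, hl, hu⟩ => ⟨l, hl.trans_le h, hu⟩

theorem wordSpan_le {d : ℕ} {U : Submodule R V}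
    (h : ∀ l : List ι, l.length < d → wordVector O v l ∈ U) : wordSpan O v d ≤ U :=
  Submodule.span_le.2 fun _ ⟨l, hl, hu⟩ => hu ▸ h l hl

theorem HasDegreeLE.add {k : ℕ} {A B : Module.End R V} (hA : HasDegreeLE O v k A)
    (hB : HasDegreeLE O v k B) : HasDegreeLE O v k (A + B) := fun d u hu =>
  add_mem (hA d u hu) (hB d u hu)

theorem HasDegreeLE.neg {k : ℕ} {A : Module.End R V} (hA : HasDegreeLE O v k A) :
    HasDegreeLE O v k (-A) := fun d u hu => neg_mem (hA d u hu)

theorem HasDegreeLE.sub {k : ℕ} {A B : Module.End R V} (hA : HasDegreeLE O v k A)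
    (hB : HasDegreeLE O v k B) : HasDegreeLE O v k (A - B) := fun d u hu =>
  sub_mem (hA d u hu) (hB d u hu)

theorem HasDegreeLE.smul {k : ℕ} {A : Module.End R V} (c : R) (hA : HasDegreeLE O v k A) :
    HasDegreeLE O v k (c • A) := fun d u hu => Submodule.smul_mem _ c (hA d u hu)

theorem HasDegreeLE.mul {k l : ℕ} {A B : Module.End R V} (hA : HasDegreeLE O v k A)
    (hB : HasDegreeLE O v l B) : HasDegreeLE O v (l + k) (A * B) := fun d u hu => by
  rw [← add_assoc]
  exact hA _ _ (hB d u hu)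

theorem hasDegreeLE_zero_one : HasDegreeLE O v 0 (1 : Module.End R V) := fun _ _ hu => hu

theorem hasDegreeLE_zero (k : ℕ) : HasDegreeLE O v k (0 : Module.End R V) := fun _ _ _ =>
  zero_mem _

theorem hasDegreeLE_generator (a : ι) : HasDegreeLE O v 1 (O a) := fun d _ hu =>
  (wordSpan_le (U := (wordSpan O v (d + 1)).comap (O a)) fun l hl =>
    wordVector_mem_wordSpan (l := a :: l) (Nat.succ_lt_succ hl)) hu

section Intertwiner

variable {S : Module.End R V} {f : ι → ι}

theorem apply_wordVector_add_mem (hv : S v = -v)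
    (hS : ∀ a, ∃ c : R, S * O a = O (f a) * S + c • 1) (l : List ι) :
    S (wordVector O v l) + wordVector O v (l.map f) ∈ wordSpan O v l.length := by
  induction l with
  | nil => simp [wordVector, hv]
  | cons a l ih =>
    obtain ⟨c, hc⟩ := hS a
    have cross : S (O a (wordVector O v l)) =
        O (f a) (S (wordVector O v l)) + c • wordVector O v l :=
      LinearMap.congr_fun hc (wordVector O v l)
    have regroup : S (wordVector O v (a :: l)) + wordVector O v ((a :: l).map f) =
        O (f a) (S (wordVector O v l) + wordVector O v (l.map f)) + c • wordVector O v l := by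
      rw [List.map_cons, wordVector_cons, wordVector_cons, cross, map_add]
      abel
    rw [regroup]
    exact add_mem (hasDegreeLE_generator _ _ _ ih)
      (Submodule.smul_mem _ _ (wordVector_mem_wordSpan (by simp)))

theorem hasDegreeLE_zero_of_intertwines (hv : S v = -v)
    (hS : ∀ a, ∃ c : R, S * O a = O (f a) * S + c • 1) : HasDegreeLE O v 0 S := fun d _ hu =>
  (wordSpan_le (U := (wordSpan O v d).comap S) fun l hl =>
    (Submodule.add_mem_iff_left _ (wordVector_mem_wordSpan (by simpa using hl))).1
      (wordSpan_mono hl.le (apply_wordVector_add_mem hv hS l))) hu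

end Intertwiner

theorem wordVector_sub_mem_of_perm (hO : ∀ a b, HasDegreeLE O v 1 (O a * O b - O b * O a))
    {l l' : List ι} (h : l.Perm l') :
    wordVector O v l - wordVector O v l' ∈ wordSpan O v l.length := by
  induction h with
  | nil => simp
  | cons a h ih =>
    rw [wordVector_cons, wordVector_cons, ← map_sub]
    exact hasDegreeLE_generator a _ _ ih
  | swap a b l => exact hO b a (l.length + 1) (wordVector O v l) (wordVector_mem_wordSpan (by simp))
  | trans h₁ h₂ ih₁ ih₂ =>
    rw [← h₁.length_eq] at ih₂
    rw [← sub_add_sub_cancel]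
    exact add_mem ih₁ ih₂

theorem normalOrder_monomial (m : ι →₀ ℕ) :
    normalOrder O v (monomial m 1) = wordVector O v (Finsupp.toMultiset m).toList := by
  have h := (basisMonomials ι R).constr_basis R
    (fun m => wordVector O v (Finsupp.toMultiset m).toList) m
  rwa [coe_basisMonomials] at h

theorem length_toList_toMultiset (m : ι →₀ ℕ) :
    (Finsupp.toMultiset m).toList.length = m.degree := by
  rw [Multiset.length_toList, Finsupp.card_toMultiset]
  rfl

theorem normalOrder_monomial_sub_mem (hO : ∀ a b, HasDegreeLE O v 1 (O a * O b - O b * O a))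
    {m : ι →₀ ℕ} {l : List ι} (h : (l : Multiset ι) = Finsupp.toMultiset m) :
    normalOrder O v (monomial m 1) - wordVector O v l ∈ wordSpan O v m.degree := by
  rw [normalOrder_monomial, ← length_toList_toMultiset]
  refine wordVector_sub_mem_of_perm hO ?_
  rw [← Multiset.coe_eq_coe, h, Multiset.coe_toList]

theorem map_mem_of_support {A : MvPolynomial ι R →ₗ[R] V} {U : Submodule R V}
    {p : MvPolynomial ι R} (h : ∀ m ∈ p.support, A (monomial m 1) ∈ U) : A p ∈ U := by
  rw [p.as_sum, map_sum]
  refine sum_mem fun m hm => ?_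
  rw [← mul_one (coeff m p), ← smul_eq_mul, ← smul_monomial, map_smul]
  exact U.smul_mem _ (h m hm)

theorem map_mem_of_isHomogeneous {A : MvPolynomial ι R →ₗ[R] V} {U : Submodule R V} {d : ℕ}
    (h : ∀ m : ι →₀ ℕ, m.degree = d → A (monomial m 1) ∈ U) {p : MvPolynomial ι R}
    (hp : p.IsHomogeneous d) : A p ∈ U :=
  map_mem_of_support fun m hm => h m (by
    rw [Finsupp.degree_eq_weight_one]
    exact hp (mem_support_iff.1 hm))

theorem normalOrder_mem {U : Submodule R V} (hv : v ∈ U) (hU : ∀ a, ∀ u ∈ U, O a u ∈ U)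
    (p : MvPolynomial ι R) : normalOrder O v p ∈ U :=
  map_mem_of_support fun m _ => normalOrder_monomial (O := O) (v := v) m ▸ wordVector_mem hv hU _

theorem normalOrder_X_mul_sub_mem (hO : ∀ a b, HasDegreeLE O v 1 (O a * O b - O b * O a))
    (j : ι) {d : ℕ} {p : MvPolynomial ι R} (hp : p.IsHomogeneous d) :
    normalOrder O v (X j * p) - O j (normalOrder O v p) ∈ wordSpan O v (d + 1) := by
  refine map_mem_of_isHomogeneous
    (A := normalOrder O v ∘ₗ LinearMap.mulLeft R (X j) - O j ∘ₗ normalOrder O v)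
    (fun m hm => ?_) hp
  have X_mul : (X j * monomial m 1 : MvPolynomial ι R) = monomial (Finsupp.single j 1 + m) 1 := by
    rw [X, monomial_mul, one_mul]
  simp only [LinearMap.sub_apply, LinearMap.comp_apply, LinearMap.mulLeft_apply]
  have degree_add : (Finsupp.single j 1 + m).degree = d + 1 := by
    rw [map_add, Finsupp.degree_single, hm, add_comm]
  rw [X_mul, normalOrder_monomial m, ← wordVector_cons, ← degree_add]
  refine normalOrder_monomial_sub_mem hO ?_
  rw [← Multiset.cons_coe, Multiset.coe_toList, map_add, Finsupp.toMultiset_single, one_smul]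
  rfl

theorem apply_normalOrder_add_mem (hO : ∀ a b, HasDegreeLE O v 1 (O a * O b - O b * O a))
    {S : Module.End R V} {f : ι → ι} (hv : S v = -v)
    (hS : ∀ a, ∃ c : R, S * O a = O (f a) * S + c • 1) {d : ℕ} {p : MvPolynomial ι R}
    (hp : p.IsHomogeneous d) :
    S (normalOrder O v p) + normalOrder O v (rename f p) ∈ wordSpan O v d := by
  refine map_mem_of_isHomogeneous
    (A := S ∘ₗ normalOrder O v + normalOrder O v ∘ₗ (rename f).toLinearMap) (fun m hm => ?_) hp
  have hword := apply_wordVector_add_mem hv hS (Finsupp.toMultiset m).toList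
  have hrename := normalOrder_monomial_sub_mem hO (m := m.mapDomain f)
    (l := (Finsupp.toMultiset m).toList.map f)
    (by rw [← Multiset.map_coe, Multiset.coe_toList, Finsupp.toMultiset_map])
  rw [length_toList_toMultiset, hm] at hword
  rw [Finsupp.degree_mapDomain, hm] at hrename
  simp only [LinearMap.add_apply, LinearMap.comp_apply, AlgHom.toLinearMap_apply, rename_monomial]
  rw [normalOrder_monomial m]
  convert add_mem hword hrename using 1
  abel

theorem homogeneousComponent_mem_span {B : Set (MvPolynomial ι R)}
    (hB : ∀ b ∈ B, ∃ d, b.IsHomogeneous d) {p : MvPolynomial ι R} (hp : p ∈ Submodule.span R B)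
    (e : ℕ) : homogeneousComponent e p ∈ Submodule.span R B := by
  refine (Submodule.span_le (p := (Submodule.span R B).comap (homogeneousComponent e))).2
    (fun b hb => ?_) hp
  obtain ⟨k, hk⟩ := hB b hb
  rw [Submodule.comap_coe, Set.mem_preimage, homogeneousComponent_of_mem hk]
  split_ifs
  · exact Submodule.subset_span hb
  · exact zero_mem _

theorem wordSpan_le_span_image_normalOrder
    (hO : ∀ a b, HasDegreeLE O v 1 (O a * O b - O b * O a)) {I : Submodule R (MvPolynomial ι R)}
    (hI : ∀ f ∈ I, ∀ d, normalOrder O v (homogeneousComponent d f) ∈ wordSpan O v d)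
    {B : Set (MvPolynomial ι R)} (hB : ∀ b ∈ B, ∃ d, b.IsHomogeneous d)
    (hIB : I ⊔ Submodule.span R B = ⊤) (d : ℕ) :
    wordSpan O v d ≤ Submodule.span R (normalOrder O v '' B) := by
  induction d with
  | zero => exact wordSpan_le fun l hl => absurd hl l.length.not_lt_zero
  | succ d ih =>
    refine wordSpan_le fun l hl => ?_
    rcases Nat.lt_succ_iff_lt_or_eq.1 hl with hlt | hld
    · exact ih (wordVector_mem_wordSpan hlt)
    classical
    obtain ⟨m, hml⟩ : ∃ m, Finsupp.toMultiset m = (l : Multiset ι) :=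
      ⟨Multiset.toFinsupp l, Multiset.toFinsupp_toMultiset _⟩
    have hmd : m.degree = d := by
      rw [← length_toList_toMultiset, hml, Multiset.length_toList, Multiset.coe_card, hld]
    obtain ⟨f, hf, b, hb, hfb⟩ :=
      Submodule.mem_sup.1 (hIB ▸ Submodule.mem_top : monomial m 1 ∈ I ⊔ Submodule.span R B)
    have component : homogeneousComponent d f + homogeneousComponent d b = monomial m 1 := by
      rw [← map_add, hfb, homogeneousComponent_eq_self (isHomogeneous_monomial 1 hmd)]
    have hmono : normalOrder O v (monomial m 1) ∈ Submodule.span R (normalOrder O v '' B) := by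
      rw [← component, map_add, ← Submodule.map_span]
      refine add_mem ?_ (Submodule.mem_map_of_mem (homogeneousComponent_mem_span hB hb d))
      rw [Submodule.map_span]
      exact ih (hI f hf d)
    have hdiff := normalOrder_monomial_sub_mem hO hml.symm
    rw [hmd] at hdiff
    exact (Submodule.sub_mem_iff_right _ hmono).1 (ih hdiff)

end WordFiltration

section SignProjection

variable {R V : Type*} [CommRing R] [AddCommGroup V] [Module R V] {S : ℕ → Module.End R V}
  {F : Submodule R V} {k : ℕ} {u : V}

theorem signedCosetRep_apply_mem (hF : ∀ i ≤ k, ∀ u ∈ F, S i u ∈ F) (hu : u ∈ F) (j : ℕ) :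
    signedCosetRep S k j u ∈ F := by
  induction j with
  | zero => exact hu
  | succ j ih => exact neg_mem (hF _ (Nat.sub_le k j) _ ih)

theorem signedCosetRep_apply_sub_mem (hF : ∀ i ≤ k, ∀ u ∈ F, S i u ∈ F)
    (hu : ∀ i ≤ k, S i u + u ∈ F) (j : ℕ) : signedCosetRep S k j u - u ∈ F := by
  induction j with
  | zero => simp [signedCosetRep]
  | succ j ih =>
    have hstep := neg_mem (add_mem (hF _ (Nat.sub_le k j) _ ih) (hu _ (Nat.sub_le k j)))
    rw [map_sub] at hstep
    convert hstep using 1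
    rw [signedCosetRep, LinearMap.neg_apply, Module.End.mul_apply]
    abel

theorem antisymmetrizer_apply_mem (hF : ∀ i < k, ∀ u ∈ F, S i u ∈ F) (hu : u ∈ F) :
    antisymmetrizer S k u ∈ F := by
  induction k with
  | zero => exact hu
  | succ k ih =>
    rw [antisymmetrizer, Module.End.mul_apply, LinearMap.sum_apply]
    exact sum_mem fun j _ => signedCosetRep_apply_mem (fun i hi => hF i (by lia))
      (ih fun i hi => hF i (by lia)) j

theorem antisymmetrizer_apply_sub_mem (hF : ∀ i < k, ∀ u ∈ F, S i u ∈ F)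
    (hu : ∀ i < k, S i u + u ∈ F) :
    antisymmetrizer S k u - (Nat.factorial (k + 1) : R) • u ∈ F := by
  induction k with
  | zero => simp [antisymmetrizer]
  | succ k ih =>
    have ih := ih (fun i hi => hF i (by lia)) fun i hi => hu i (by lia)
    have hF' : ∀ i ≤ k, ∀ u ∈ F, S i u ∈ F := fun i hi => hF i (by lia)
    have hu' : ∀ i ≤ k, S i u + u ∈ F := fun i hi => hu i (by lia)
    set c := (Nat.factorial (k + 1) : R) with hc
    have term (j : ℕ) : signedCosetRep S k j (antisymmetrizer S k u) - c • u ∈ F := by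
      convert add_mem (signedCosetRep_apply_mem hF' ih j)
        (F.smul_mem c (signedCosetRep_apply_sub_mem hF' hu' j)) using 1
      rw [map_sub, map_smul, smul_sub]
      abel
    convert sum_mem (t := range (k + 2)) fun j _ => term j using 1
    rw [antisymmetrizer, Module.End.mul_apply, LinearMap.sum_apply, sum_sub_distrib, sum_const,
      card_range, ← Nat.cast_smul_eq_nsmul R, smul_smul, hc, ← Nat.cast_mul,
      ← Nat.factorial_succ]

/-- The antisymmetrizer projects `u`, modulo `F`, to an alternating vector of `U`. -/
theorem CoxeterRelations.mem_of_apply_add_mem {𝕜 V : Type*} [Field 𝕜] [CharZero 𝕜]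
    [AddCommGroup V] [Module 𝕜 V] {S : ℕ → Module.End 𝕜 V} {k : ℕ}
    (h : CoxeterRelations (k + 1) S) {F U : Submodule 𝕜 V}
    (hF : ∀ i < k, ∀ u ∈ F, S i u ∈ F) (hU : ∀ i < k, ∀ u ∈ U, S i u ∈ U)
    (alternating_mem : ∀ u ∈ U, (∀ i < k, S i u = -u) → u ∈ F) {u : V} (huU : u ∈ U)
    (hu : ∀ i < k, S i u + u ∈ F) : u ∈ F := by
  have hproj : antisymmetrizer S k u ∈ F :=
    alternating_mem _ (antisymmetrizer_apply_mem hU huU) fun i hi =>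
      LinearMap.congr_fun (h.mul_antisymmetrizer k.lt_succ_self hi) u
  have hfac : (Nat.factorial (k + 1) : 𝕜) ≠ 0 := Nat.cast_ne_zero.2 (Nat.factorial_ne_zero _)
  exact (F.smul_mem_iff hfac).1
    ((Submodule.sub_mem_iff_right _ hproj).1 (antisymmetrizer_apply_sub_mem hF hu))

end SignProjection

section RestrictedWindows

variable {n : ℕ}

namespace AffineWindow

/-- The windows of the `(n + 1)`-restricted affine permutations, those whose inverse `ω` satisfies
`ω m < ω (m + n + 1)` for all `m`. They span a submodule stable under all the operators. -/
def IsRestricted (w : AffineWindow n) : Prop :=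
  ∀ i j : Fin n, (n : ℤ) ∣ w i + 1 - w j → w j - j < w i - i + n + 1

theorem isRestricted_ofPerm (σ : Equiv.Perm (Fin n)) : (ofPerm σ).IsRestricted := by
  rintro i j ⟨t, ht⟩
  simp only [ofPerm] at ht ⊢
  have ht0 : 0 ≤ t := by
    by_contra hc
    have : (n : ℤ) * t ≤ n * (-1) := mul_le_mul_of_nonneg_left (by omega) (by omega)
    omega
  have : 0 ≤ (n : ℤ) * t := mul_nonneg (by omega) ht0
  omega

theorem IsRestricted.rotate [NeZero n] {w : AffineWindow n} (hw : w.IsRestricted) (c : Fin n) :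
    (w.rotate c).IsRestricted := by
  intro i j hij
  simp only [rotate_apply] at hij ⊢
  have := hw (i - c) (j - c) (by
    have := (dvd_sub hij (dvd_sub_coe_sub i c)).add (dvd_sub_coe_sub j c)
    ring_nf at this ⊢
    exact this)
  linarith

theorem IsRestricted.ne_add {w : AffineWindow n} (hw : w.IsRestricted) {p q : Fin n}
    (hpq : (q : ℕ) = p + 1) : w p ≠ w q + n + 1 := by
  intro h
  have := hw q p ⟨-1, by linarith⟩
  omega

theorem IsRestricted.eq_add_of_not_comp_swap {w : AffineWindow n} (hw : w.IsRestricted)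
    {p q : Fin n} (hpq : (q : ℕ) = p + 1) (hswap : ¬ (w.comp (Equiv.swap p q)).IsRestricted) :
    w q = w p + n + 1 := by
  unfold IsRestricted at hswap
  push Not at hswap
  obtain ⟨i, j, ⟨t, ht⟩, hlt⟩ := hswap
  simp only [comp_apply] at ht hlt
  have hlt' := hw _ _ ⟨t, ht⟩
  have ht1 : t = -1 := by
    have : t < 0 := by
      by_contra hc
      have : 0 ≤ (n : ℤ) * t := mul_nonneg (by omega) (by omega)
      omega
    have : -2 < t := by
      by_contra hc
      have : (n : ℤ) * t ≤ n * (-2) := mul_le_mul_of_nonneg_left (by omega) (by omega)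
      omega
    omega
  subst ht1
  have hij : (Equiv.swap p q i : ℕ) < Equiv.swap p q j := by omega
  have hmoved : i = q ∧ j = p := by
    rw [Equiv.swap_apply_def, Equiv.swap_apply_def] at hij
    simp only [Fin.ext_iff] at hij ⊢
    split_ifs at hij <;> omega
  obtain ⟨rfl, rfl⟩ := hmoved
  rw [Equiv.swap_apply_left, Equiv.swap_apply_right] at ht
  linarith

theorem exists_dvd_sub (w : AffineWindow n) [NeZero n] (c : ℤ) : ∃ j, (n : ℤ) ∣ c - w j := by
  have hinj : Function.Injective fun j : Fin n => (w j : ZMod n) := fun i j hij =>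
    (w.eq_of_dvd_sub ((ZMod.intCast_eq_intCast_iff_dvd_sub _ _ n).1 hij)).symm
  obtain ⟨j, hj⟩ :=
    ((Fintype.bijective_iff_injective_and_card _).2 ⟨hinj, by simp [ZMod.card]⟩).2 (c : ZMod n)
  exact ⟨j, (ZMod.intCast_eq_intCast_iff_dvd_sub _ _ n).1 hj⟩

theorem eq_ofPerm_of_forall_eq_add {w : AffineWindow n} {σ : Equiv.Perm (Fin n)} {c : ℤ}
    (h : ∀ i, w i = c + (σ i : ℕ)) : w = ofPerm σ := by
  have hsum := w.sum_eq
  simp only [h] at hsum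
  rw [sum_add_distrib, Equiv.sum_comp σ fun i : Fin n => ((i : ℕ) : ℤ), sum_const, card_univ,
    Fintype.card_fin, add_eq_right, nsmul_eq_mul, mul_eq_zero] at hsum
  ext i
  have hc : c = 0 := hsum.resolve_left (by have := i.pos; omega)
  rw [h, hc, zero_add]
  rfl

theorem le_add_one_of_forall_isRestricted_comp {w : AffineWindow n}
    (h : ∀ σ, (w.comp σ).IsRestricted) {i j : Fin n} (hij : (n : ℤ) ∣ w i + 1 - w j) :
    w j ≤ w i + 1 := by
  rcases eq_or_ne i j with rfl | hne
  · lia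
  have hn : 2 ≤ n := by
    have := i.isLt
    have := j.isLt
    have : (i : ℕ) ≠ j := Fin.val_ne_of_ne hne
    lia
  obtain ⟨σ, hi, hj⟩ := MulAction.is_two_pretransitive_iff.1
    (Equiv.Perm.isMultiplyPretransitive (Fin n) 2)
    (show (⟨n - 1, by lia⟩ : Fin n) ≠ ⟨0, by lia⟩ by simp only [ne_eq, Fin.mk.injEq]; lia) hne
  rw [Equiv.Perm.smul_def] at hi hj
  have := h σ ⟨n - 1, by lia⟩ ⟨0, by lia⟩ (by simpa only [comp_apply, hi, hj] using hij)
  simp only [comp_apply, hi, hj] at this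
  lia

theorem exists_eq_ofPerm_of_forall_isRestricted_comp [NeZero n] {w : AffineWindow n}
    (h : ∀ σ, (w.comp σ).IsRestricted) : ∃ σ, w = ofPerm σ := by
  obtain ⟨b, -, hb⟩ := exists_min_image univ w univ_nonempty
  have interval : ∀ t < n, ∃ i, w i = w b + t := by
    intro t
    induction t with
    | zero => exact fun _ => ⟨b, by simp⟩
    | succ t ih =>
      intro ht
      obtain ⟨i, hi⟩ := ih (by lia)
      obtain ⟨j, hj⟩ := w.exists_dvd_sub (w i + 1)
      have hle := le_add_one_of_forall_isRestricted_comp h hj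
      have hge := hb j (mem_univ _)
      have := Int.eq_zero_of_abs_lt_dvd hj (by rw [abs_lt]; lia)
      exact ⟨j, by push_cast; lia⟩
  choose f hf using fun t : Fin n => interval t t.isLt
  have hinj : Function.Injective f := fun s t hst => by
    have := hf s
    rw [hst, hf t] at this
    exact Fin.ext (by lia)
  let τ := Equiv.ofBijective f (Finite.injective_iff_bijective.1 hinj)
  refine ⟨τ.symm, eq_ofPerm_of_forall_eq_add (c := w b) fun i => ?_⟩
  rw [← hf, show f (τ.symm i) = i from τ.apply_symm_apply i]

end AffineWindow

open AffineWindow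

theorem map_mem_of_mem_supported {ι R M : Type*} [Semiring R] [AddCommMonoid M] [Module R M]
    {s : Set ι} {A : (ι →₀ R) →ₗ[R] M} {U : Submodule R M}
    (h : ∀ i ∈ s, A (Finsupp.single i 1) ∈ U) {u : ι →₀ R} (hu : u ∈ Finsupp.supported R R s) :
    A u ∈ U := by
  rw [Finsupp.supported_eq_span_single] at hu
  refine Submodule.span_le (p := U.comap A).2 ?_ hu
  rintro _ ⟨i, hi, rfl⟩
  exact h i hi

/-- The span of the restricted windows. -/
noncomputable def restrictedSpan (n : ℕ) : Submodule ℂ (AffineWindow n →₀ ℂ) :=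
  Finsupp.supported ℂ ℂ {w | w.IsRestricted}

theorem single_mem_restrictedSpan {w : AffineWindow n} (hw : w.IsRestricted) :
    Finsupp.single w 1 ∈ restrictedSpan n := Finsupp.single_mem_supported ℂ 1 hw

theorem isRestricted_of_apply_ne_zero {u : AffineWindow n →₀ ℂ} (hu : u ∈ restrictedSpan n)
    {w : AffineWindow n} (h : u w ≠ 0) : w.IsRestricted :=
  (Finsupp.mem_supported ℂ u).1 hu (Finsupp.mem_support_iff.2 h)

theorem coordinateOp_mem_restrictedSpan (i : Fin n) {u : AffineWindow n →₀ ℂ}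
    (hu : u ∈ restrictedSpan n) : coordinateOp i u ∈ restrictedSpan n := by
  refine map_mem_of_mem_supported (fun w hw => ?_) hu
  rw [coordinateOp_single]
  exact Submodule.smul_mem _ _ (single_mem_restrictedSpan hw)

theorem one_add_scattering_eq_zero {w : AffineWindow n} {p q : Fin n} (h : w q = w p + n + 1) :
    1 + scattering w p q = 0 := by
  rw [scattering, h]
  push_cast
  rw [show (w p : ℂ) - (w p + n + 1) = -(n + 1) by ring, div_neg,
    div_self (Nat.cast_add_one_ne_zero n), add_neg_cancel]

theorem exchangeOp_mem_restrictedSpan {p q : Fin n} (hpq : (q : ℕ) = p + 1)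
    {u : AffineWindow n →₀ ℂ} (hu : u ∈ restrictedSpan n) :
    exchangeOp p q u ∈ restrictedSpan n := by
  refine map_mem_of_mem_supported (fun w hw => ?_) hu
  rw [exchangeOp_single]
  refine add_mem (Submodule.smul_mem _ _ (single_mem_restrictedSpan hw)) ?_
  by_cases hswap : (w.comp (Equiv.swap p q)).IsRestricted
  · exact Submodule.smul_mem _ _ (single_mem_restrictedSpan hswap)
  · rw [one_add_scattering_eq_zero (IsRestricted.eq_add_of_not_comp_swap hw hpq hswap), zero_smul]
    exact zero_mem _

theorem exchangeOp_apply (p q : Fin n) (u : AffineWindow n →₀ ℂ) (w : AffineWindow n) :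
    exchangeOp p q u w =
      -scattering w p q * u w + (1 - scattering w p q) * u (w.comp (Equiv.swap p q)) := by
  classical
  induction u using Finsupp.induction_linear with
  | zero => simp
  | add u v hu hv =>
    rw [map_add, Finsupp.add_apply, hu, hv, Finsupp.add_apply, Finsupp.add_apply]
    ring
  | single w' b =>
    have swap_eq_iff : w'.comp (Equiv.swap p q) = w ↔ w' = w.comp (Equiv.swap p q) :=
      ⟨fun h => by rw [← h, comp_swap_swap], fun h => by rw [h, comp_swap_swap]⟩
    rw [← mul_one b, ← smul_eq_mul, ← Finsupp.smul_single, map_smul, exchangeOp_single]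
    simp only [Finsupp.smul_apply, Finsupp.add_apply, Finsupp.single_apply, smul_eq_mul,
      swap_eq_iff]
    split_ifs with h h' h'
    · have := scattering_comp w (Equiv.swap p q) p q
      rw [← h', h, Equiv.swap_apply_left, Equiv.swap_apply_right, scattering_swap w p q] at this
      rw [h]
      linear_combination b * this
    · rw [h]; ring
    · rw [h', scattering_comp, Equiv.swap_apply_left, Equiv.swap_apply_right, scattering_swap]
      ring
    · ring

/-- The alternating sum of the windows of the finite permutations, on which every `exchangeOp`
acts by `-1`. -/
noncomputable def signVector (n : ℕ) : AffineWindow n →₀ ℂ :=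
  ∑ σ : Equiv.Perm (Fin n), ((Equiv.Perm.sign σ : ℤ) : ℂ) • Finsupp.single (ofPerm σ) 1

theorem signVector_mem_restrictedSpan : signVector n ∈ restrictedSpan n :=
  sum_mem fun σ _ => Submodule.smul_mem _ _ (single_mem_restrictedSpan (isRestricted_ofPerm σ))

theorem signVector_ofPerm (σ : Equiv.Perm (Fin n)) :
    signVector n (ofPerm σ) = (Equiv.Perm.sign σ : ℤ) := by
  classical
  simp [signVector, Finsupp.finsetSum_apply, Finsupp.single_apply, ofPerm_injective.eq_iff]

theorem signVector_apply_of_forall_ne {w : AffineWindow n} (hw : ∀ σ, ofPerm σ ≠ w) :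
    signVector n w = 0 := by
  classical
  simp [signVector, Finsupp.finsetSum_apply, hw]

theorem signVector_comp_swap {p q : Fin n} (h : p ≠ q) (w : AffineWindow n) :
    signVector n (w.comp (Equiv.swap p q)) = -signVector n w := by
  by_cases hw : ∃ σ, ofPerm σ = w
  · obtain ⟨σ, rfl⟩ := hw
    rw [ofPerm_comp, signVector_ofPerm, signVector_ofPerm, Equiv.Perm.sign_mul,
      Equiv.Perm.sign_swap h]
    simp
  · rw [not_exists] at hw
    rw [signVector_apply_of_forall_ne hw, signVector_apply_of_forall_ne fun σ hσ => ?_, neg_zero]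
    exact hw _ (by rw [← ofPerm_comp, hσ, comp_swap_swap])

theorem exchangeOp_signVector {p q : Fin n} (h : p ≠ q) :
    exchangeOp p q (signVector n) = -signVector n := by
  ext w
  rw [exchangeOp_apply, signVector_comp_swap h, Finsupp.neg_apply]
  ring

theorem apply_comp_swap_of_exchangeOp_eq_neg {p q : Fin n} {u : AffineWindow n →₀ ℂ}
    (hu : exchangeOp p q u = -u) (w : AffineWindow n) :
    u (w.comp (Equiv.swap p q)) = -u w := by
  have h := exchangeOp_apply p q u w
  have h' := exchangeOp_apply p q u (w.comp (Equiv.swap p q))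
  rw [comp_swap_swap, scattering_comp, Equiv.swap_apply_left, Equiv.swap_apply_right,
    scattering_swap, hu, Finsupp.neg_apply] at h'
  rw [hu, Finsupp.neg_apply] at h
  linear_combination (-1 / 2) * h - (1 / 2) * h'

variable [NeZero n]

theorem apply_comp_of_simpleOp_eq_neg {u : AffineWindow n →₀ ℂ}
    (hu : ∀ k, k + 1 < n → simpleOp n k u = -u) (σ : Equiv.Perm (Fin n)) :
    ∀ w : AffineWindow n, u (w.comp σ) = (Equiv.Perm.sign σ : ℤ) * u w := by
  obtain ⟨m, rfl⟩ : ∃ m, n = m + 1 := ⟨n - 1, by have := NeZero.pos n; lia⟩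
  have hσ : σ ∈ Submonoid.closure (Set.range fun i : Fin m => Equiv.swap i.castSucc i.succ) :=
    Equiv.Perm.mclosure_swap_castSucc_succ m ▸ Submonoid.mem_top σ
  induction hσ using Submonoid.closure_induction with
  | mem _ hσ =>
    obtain ⟨i, rfl⟩ := hσ
    intro w
    have hi : simpleOp (m + 1) i = exchangeOp i.castSucc i.succ := by
      rw [simpleOp]
      congr <;> exact Fin.ext (val_ofNat_of_lt (by lia))
    rw [apply_comp_swap_of_exchangeOp_eq_neg (hi ▸ hu i (by lia)),
      Equiv.Perm.sign_swap i.castSucc_lt_succ.ne]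
    simp
  | one => simp [comp_one]
  | mul σ τ _ _ hσ hτ =>
    intro w
    rw [← comp_comp, hτ, hσ, Equiv.Perm.sign_mul]
    push_cast
    ring

theorem mem_span_signVector_of_simpleOp_eq_neg {u : AffineWindow n →₀ ℂ}
    (hres : u ∈ restrictedSpan n) (hu : ∀ k, k + 1 < n → simpleOp n k u = -u) :
    u ∈ Submodule.span ℂ {signVector n} := by
  have hcomp := apply_comp_of_simpleOp_eq_neg hu
  rw [Submodule.mem_span_singleton]
  refine ⟨u (ofPerm 1), ?_⟩
  ext w
  rw [Finsupp.smul_apply, smul_eq_mul]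
  by_cases hw : ∃ σ, ofPerm σ = w
  · obtain ⟨σ, rfl⟩ := hw
    rw [signVector_ofPerm, ← one_mul σ, ← ofPerm_comp, hcomp, one_mul, mul_comm]
  · rw [signVector_apply_of_forall_ne (not_exists.1 hw), mul_zero]
    by_contra h0
    have hsupp (σ : Equiv.Perm (Fin n)) : (w.comp σ).IsRestricted := by
      refine isRestricted_of_apply_ne_zero hres ?_
      rw [hcomp]
      exact mul_ne_zero (Int.cast_ne_zero.2 (Units.ne_zero _)) (Ne.symm h0)
    obtain ⟨σ, hσ⟩ := exists_eq_ofPerm_of_forall_isRestricted_comp hsupp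
    exact hw ⟨σ, hσ.symm⟩

theorem simpleOp_signVector {k : ℕ} (hk : k + 1 < n) :
    simpleOp n k (signVector n) = -signVector n :=
  exchangeOp_signVector (ofNat_ne_ofNat (by lia) hk (by lia))

theorem simpleOp_mem_restrictedSpan {k : ℕ} (hk : k + 1 < n) {u : AffineWindow n →₀ ℂ}
    (hu : u ∈ restrictedSpan n) : simpleOp n k u ∈ restrictedSpan n := by
  refine exchangeOp_mem_restrictedSpan ?_ hu
  rw [val_ofNat_of_lt hk, val_ofNat_of_lt (by lia)]

theorem rotationOp_mem_restrictedSpan (c : Fin n) {u : AffineWindow n →₀ ℂ}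
    (hu : u ∈ restrictedSpan n) : rotationOp c u ∈ restrictedSpan n := by
  refine map_mem_of_mem_supported (fun w hw => ?_) hu
  rw [rotationOp_single]
  exact single_mem_restrictedSpan (IsRestricted.rotate hw c)

theorem descProd_simpleOp_mem_restrictedSpan {k : ℕ} (hk : k < n) {u : AffineWindow n →₀ ℂ}
    (hu : u ∈ restrictedSpan n) : descProd (simpleOp n) k u ∈ restrictedSpan n := by
  induction k with
  | zero => exact hu
  | succ k ih => exact simpleOp_mem_restrictedSpan hk (ih (by lia))

theorem translation_mem_restrictedSpan {k : ℕ} (hk : k < n) {u : AffineWindow n →₀ ℂ}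
    (hu : u ∈ restrictedSpan n) :
    translation n (simpleOp n) (rotationOp 1) k u ∈ restrictedSpan n := by
  induction k generalizing u with
  | zero =>
    exact rotationOp_mem_restrictedSpan 1 (descProd_simpleOp_mem_restrictedSpan (by lia) hu)
  | succ k ih =>
    exact simpleOp_mem_restrictedSpan hk (ih (by lia) (simpleOp_mem_restrictedSpan hk hu))

theorem varOp_mem_restrictedSpan (a : Fin n ⊕ Fin n) {u : AffineWindow n →₀ ℂ}
    (hu : u ∈ restrictedSpan n) : varOp a u ∈ restrictedSpan n := by
  rcases a with i | i
  · exact coordinateOp_mem_restrictedSpan i hu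
  · exact translation_mem_restrictedSpan i.isLt hu

end RestrictedWindows

section CommutatorIdentities

variable {R A : Type*} [CommRing R] [Ring A] [Algebra R A]

theorem mul_mul_sub_eq_of_intertwines {S X X' W Y : A} {c : R} (h : S * X = X' * S + c • 1) :
    X' * (S * W) - S * W * Y = S * (X * W - W * Y) - c • W :=
  calc X' * (S * W) - S * W * Y = (X' * S + c • 1) * W - c • W - S * W * Y := by
        rw [add_mul, smul_mul_assoc, one_mul, add_sub_cancel_right, mul_assoc X']
    _ = S * (X * W - W * Y) - c • W := by
        rw [← h, mul_sub, mul_assoc, mul_assoc, sub_right_comm]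

theorem commutator_mul_of_intertwines {X X' Ω W : A} {c : R} (h : X * Ω = Ω * (X' + c • 1)) :
    X * (Ω * W) - Ω * W * X = Ω * (X' * W - W * X) + c • (Ω * W) :=
  calc X * (Ω * W) - Ω * W * X = Ω * (X' + c • 1) * W - Ω * W * X := by rw [← h, mul_assoc X]
    _ = Ω * (X' * W - W * X) + c • (Ω * W) := by
        simp only [mul_add, add_mul, mul_sub, mul_smul_comm, smul_mul_assoc, mul_one, mul_assoc]
        abel

theorem commutator_conj_of_intertwines {S X X' T : A} {c c' : R}
    (h : S * X' = X * S + c • 1) (h' : S * X = X' * S + c' • 1) :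
    X * (S * T * S) - S * T * S * X =
      S * (X' * T - T * X') * S - c • (T * S) - c' • (S * T) :=
  calc X * (S * T * S) - S * T * S * X =
        (X * S + c • 1) * T * S - c • (T * S) - S * T * (S * X) := by
        simp only [add_mul, smul_mul_assoc, one_mul, mul_assoc, add_sub_cancel_right]
    _ = S * (X' * T - T * X') * S - c • (T * S) - c' • (S * T) := by
        rw [← h, h']
        simp only [mul_add, mul_sub, sub_mul, mul_smul_comm, mul_one, mul_assoc]
        abel

end CommutatorIdentities

section Commutators

variable {n : ℕ} [NeZero n]

theorem hasDegreeLE_simpleOp {k : ℕ} (hk : k + 1 < n) :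
    HasDegreeLE varOp (signVector n) 0 (simpleOp n k) :=
  hasDegreeLE_zero_of_intertwines (simpleOp_signVector hk) (exists_simpleOp_mul_varOp hk)

theorem hasDegreeLE_coordinateOp (i : Fin n) :
    HasDegreeLE varOp (signVector n) 1 (coordinateOp i) := hasDegreeLE_generator (Sum.inl i)

theorem hasDegreeLE_translationOp (i : Fin n) :
    HasDegreeLE varOp (signVector n) 1 (translationOp i) := hasDegreeLE_generator (Sum.inr i)

theorem hasDegreeLE_descProd_simpleOp {k : ℕ} (hk : k < n) :
    HasDegreeLE varOp (signVector n) 0 (descProd (simpleOp n) k) := by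
  induction k with
  | zero => exact hasDegreeLE_zero_one
  | succ k ih => exact (hasDegreeLE_simpleOp hk).mul (ih (by lia))

theorem exists_descProd_simpleOp_mul_eq_one {k : ℕ} (hk : k < n) :
    ∃ B, HasDegreeLE varOp (signVector n) 0 B ∧ descProd (simpleOp n) k * B = 1 := by
  induction k with
  | zero => exact ⟨1, hasDegreeLE_zero_one, mul_one 1⟩
  | succ k ih =>
    obtain ⟨B, hB, hDB⟩ := ih (by lia)
    refine ⟨B * simpleOp n k, hB.mul (hasDegreeLE_simpleOp hk), ?_⟩
    rw [descProd, mul_assoc, ← mul_assoc (descProd _ k), hDB, one_mul, simpleOp_mul_self]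

theorem hasDegreeLE_rotationOp_one : HasDegreeLE varOp (signVector n) 1 (rotationOp 1) := by
  have hn := NeZero.pos n
  obtain ⟨B, hB, hDB⟩ := exists_descProd_simpleOp_mul_eq_one (n := n) (k := n - 1) (by lia)
  have hrot : rotationOp 1 = translationOp (Fin.ofNat n 0) * B := by
    rw [translationOp, val_ofNat_of_lt hn, translation, mul_assoc, hDB, mul_one]
  rw [hrot]
  exact (hasDegreeLE_translationOp _).mul hB

theorem hasDegreeLE_coordinateOp_mul_descProd_sub {k : ℕ} (hk : k < n) (i : Fin n) :
    HasDegreeLE varOp (signVector n) 0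
      (coordinateOp (descProd (simpleSwap n) k i) * descProd (simpleOp n) k -
        descProd (simpleOp n) k * coordinateOp i) := by
  induction k with
  | zero =>
    rw [descProd, descProd, mul_one, one_mul, Equiv.Perm.one_apply]
    exact (sub_self (coordinateOp i)).symm ▸ hasDegreeLE_zero 0
  | succ k ih =>
    obtain ⟨c, hc⟩ := exists_simpleOp_mul_coordinateOp hk (descProd (simpleSwap n) k i)
    rw [descProd, Equiv.Perm.mul_apply, descProd,
      mul_mul_sub_eq_of_intertwines (R := ℂ) (S := simpleOp n k) hc]
    exact ((hasDegreeLE_simpleOp hk).mul (ih (by lia))).sub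
      ((hasDegreeLE_descProd_simpleOp (by lia)).smul c)

theorem hasDegreeLE_commutator_coordinateOp_translation {k : ℕ} (hk : k < n) (i : Fin n) :
    HasDegreeLE varOp (signVector n) 1
      (coordinateOp i * translation n (simpleOp n) (rotationOp 1) k -
        translation n (simpleOp n) (rotationOp 1) k * coordinateOp i) := by
  induction k generalizing i with
  | zero =>
    have hdesc := hasDegreeLE_coordinateOp_mul_descProd_sub (Nat.sub_one_lt_of_lt hk) i
    rw [descProd_simpleSwap_last] at hdesc
    rw [translation, commutator_mul_of_intertwines (R := ℂ) (X := coordinateOp i)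
      (coordinateOp_mul_rotationOp i 1)]
    exact (hasDegreeLE_rotationOp_one.mul hdesc).add
      ((hasDegreeLE_rotationOp_one.mul (hasDegreeLE_descProd_simpleOp (by lia))).smul _)
  | succ k ih =>
    have hS := hasDegreeLE_simpleOp hk
    have hT := hasDegreeLE_translationOp (Fin.ofNat n k)
    rw [translationOp, val_ofNat_of_lt (by lia)] at hT
    obtain ⟨c, hc⟩ := exists_simpleOp_mul_coordinateOp hk (simpleSwap n k i)
    obtain ⟨c', hc'⟩ := exists_simpleOp_mul_coordinateOp hk i
    have involutive : simpleSwap n k (simpleSwap n k i) = i := Equiv.swap_apply_self ..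
    rw [involutive] at hc
    rw [translation, commutator_conj_of_intertwines (R := ℂ) (S := simpleOp n k) hc hc']
    exact (((hS.mul (ih (by lia) _)).mul hS).sub ((hT.mul hS).smul c)).sub ((hS.mul hT).smul c')

theorem hasDegreeLE_commutator_varOp (a b : Fin n ⊕ Fin n) :
    HasDegreeLE varOp (signVector n) 1 (varOp a * varOp b - varOp b * varOp a) := by
  rcases a with i | i <;> rcases b with j | j
  · exact sub_eq_zero.2 (commute_coordinateOp i j).eq ▸ hasDegreeLE_zero 1
  · exact hasDegreeLE_commutator_coordinateOp_translation j.isLt i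
  · exact neg_sub (varOp (.inl j) * varOp (.inr i)) _ ▸
      (hasDegreeLE_commutator_coordinateOp_translation i.isLt j).neg
  · exact sub_eq_zero.2 (commute_translationOp i j).eq ▸ hasDegreeLE_zero 1

end Commutators

section InvariantIdeal

theorem homogeneousComponent_succ_X_mul {ι R : Type*} [CommSemiring R] (j : ι) (d : ℕ)
    (f : MvPolynomial ι R) :
    homogeneousComponent (d + 1) (X j * f) = X j * homogeneousComponent d f := by
  suffices homogeneousComponent (d + 1) ∘ₗ LinearMap.mulLeft R (X j) =
      LinearMap.mulLeft R (X j : MvPolynomial ι R) ∘ₗ homogeneousComponent d from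
    LinearMap.congr_fun this f
  refine MvPolynomial.linearMap_ext fun m => LinearMap.ext_ring ?_
  have hm : (monomial m 1 : MvPolynomial ι R).IsHomogeneous m.degree :=
    isHomogeneous_monomial 1 rfl
  have hXm := (isHomogeneous_X R j).mul hm
  simp only [LinearMap.comp_apply, LinearMap.mulLeft_apply]
  rw [homogeneousComponent_of_mem hm, homogeneousComponent_of_mem hXm]
  by_cases h : d = m.degree
  · rw [if_pos h, if_pos (by lia)]
  · rw [if_neg h, if_neg (by lia), mul_zero]

theorem normalOrder_homogeneousComponent_mul_mem {R V ι : Type*} [CommRing R] [AddCommGroup V]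
    [Module R V] {O : ι → Module.End R V} {v : V}
    (hO : ∀ a b, HasDegreeLE O v 1 (O a * O b - O b * O a)) {f : MvPolynomial ι R}
    (hf : ∀ d, normalOrder O v (homogeneousComponent d f) ∈ wordSpan O v d)
    (p : MvPolynomial ι R) (d : ℕ) :
    normalOrder O v (homogeneousComponent d (p * f)) ∈ wordSpan O v d := by
  induction p using MvPolynomial.induction_on generalizing d with
  | C a =>
    rw [homogeneousComponent_C_mul, ← smul_eq_C_mul, map_smul]
    exact Submodule.smul_mem _ _ (hf d)
  | add p q hp hq =>
    rw [add_mul, map_add, map_add]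
    exact add_mem (hp d) (hq d)
  | mul_X p j hp =>
    rw [mul_comm p, mul_assoc]
    cases d with
    | zero =>
      rw [homogeneousComponent_zero, ← constantCoeff_eq, map_mul, constantCoeff_X, zero_mul, C_0,
        map_zero]
      exact zero_mem _
    | succ d =>
      rw [homogeneousComponent_succ_X_mul]
      have hX := normalOrder_X_mul_sub_mem hO j (homogeneousComponent_isHomogeneous d (p * f))
      exact (Submodule.sub_mem_iff_left _ (hasDegreeLE_generator j d _ (hp d))).1 hX

variable {n : ℕ} [NeZero n]

theorem normalOrder_homogeneousComponent_mem_of_invariant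
    {f : MvPolynomial (Fin n ⊕ Fin n) ℂ}
    (invariant : ∀ σ : Equiv.Perm (Fin n), rename (Sum.map σ σ) f = f)
    (constant : constantCoeff f = 0) (d : ℕ) :
    normalOrder varOp (signVector n) (homogeneousComponent d f) ∈
      wordSpan varOp (signVector n) d := by
  rcases Nat.eq_zero_or_pos d with rfl | hd
  · rw [homogeneousComponent_zero, ← constantCoeff_eq, constant, C_0, map_zero]
    exact zero_mem _
  obtain ⟨m, rfl⟩ : ∃ m, n = m + 1 := ⟨n - 1, by have := NeZero.pos n; lia⟩
  have signVector_mem : Submodule.span ℂ {signVector (m + 1)} ≤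
      wordSpan varOp (signVector (m + 1)) d :=
    (Submodule.span_singleton_le_iff_mem _ _).2 (wordVector_mem_wordSpan (l := []) hd)
  refine extendedAffineRelations_simpleOp.mem_of_apply_add_mem
    (fun k hk u hu => hasDegreeLE_simpleOp (by lia) d u hu)
    (fun k hk u hu => simpleOp_mem_restrictedSpan (by lia) hu)
    (fun u hu alternating => signVector_mem
      (mem_span_signVector_of_simpleOp_eq_neg hu fun k hk => alternating k (by lia)))
    (normalOrder_mem signVector_mem_restrictedSpan (fun a u => varOp_mem_restrictedSpan a) _)
    fun k hk => ?_
  have hrename := apply_normalOrder_add_mem hasDegreeLE_commutator_varOp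
    (simpleOp_signVector (by lia)) (exists_simpleOp_mul_varOp (k := k) (by lia))
    (homogeneousComponent_isHomogeneous d f)
  rwa [rename_homogeneousComponent, invariant] at hrename

theorem normalOrder_homogeneousComponent_mem_of_mem_invIdeal
    {f : MvPolynomial (Fin n ⊕ Fin n) ℂ} (hf : f ∈ invIdeal n) (d : ℕ) :
    normalOrder varOp (signVector n) (homogeneousComponent d f) ∈
      wordSpan varOp (signVector n) d := by
  induction hf using Submodule.span_induction generalizing d with
  | mem g hg => exact normalOrder_homogeneousComponent_mem_of_invariant hg.1 hg.2 d
  | zero =>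
    rw [map_zero, map_zero]
    exact zero_mem _
  | add x y _ _ hx hy =>
    rw [map_add, map_add]
    exact add_mem (hx d) (hy d)
  | smul p x _ hx =>
    exact normalOrder_homogeneousComponent_mul_mem hasDegreeLE_commutator_varOp hx p d

end InvariantIdeal

section Separation

theorem single_mem_of_forall_mul_mem {ι κ 𝕜 : Type*} [Field 𝕜] {f : ι → κ → 𝕜}
    (hf : Function.Injective fun w i => f i w) {X : ι → Module.End 𝕜 (κ →₀ 𝕜)}
    (hX : ∀ i u w, X i u w = f i w * u w) {U : Submodule 𝕜 (κ →₀ 𝕜)}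
    (hU : ∀ i, ∀ u ∈ U, X i u ∈ U) {u : κ →₀ 𝕜} (hu : u ∈ U) {w : κ} (hw : u w ≠ 0) :
    Finsupp.single w 1 ∈ U := by
  classical
  induction hN : #u.support using Nat.strong_induction_on generalizing u with
  | _ N ih =>
    by_cases hother : ∃ w', w' ≠ w ∧ u w' ≠ 0
    · obtain ⟨w', hne, hw'⟩ := hother
      obtain ⟨i, hi⟩ := Function.ne_iff.1 (hf.ne hne)
      have value (x : κ) : (X i u - f i w' • u) x = (f i x - f i w') * u x := by
        rw [Finsupp.sub_apply, Finsupp.smul_apply, hX, smul_eq_mul, sub_mul]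
      refine ih _ ?_ (sub_mem (hU i u hu) (U.smul_mem (f i w') hu)) ?_ rfl
      · rw [← hN]
        refine card_lt_card (Finset.ssubset_of_subset_of_ssubset (fun x hx => ?_)
          (erase_ssubset (Finsupp.mem_support_iff.2 hw')))
        rw [Finsupp.mem_support_iff, value] at hx
        exact mem_erase.2 ⟨fun hxw => left_ne_zero_of_mul hx (hxw ▸ sub_self _),
          Finsupp.mem_support_iff.2 (right_ne_zero_of_mul hx)⟩
      · rw [value]
        exact mul_ne_zero (sub_ne_zero.2 hi.symm) hw
    · push Not at hother
      refine (U.smul_mem_iff hw).1 ?_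
      convert hu using 1
      ext x
      rcases eq_or_ne x w with rfl | hx
      · simp
      · simp [hother x hx, hx]

theorem coordinateOp_apply {n : ℕ} (i : Fin n) (u : AffineWindow n →₀ ℂ) (w : AffineWindow n) :
    coordinateOp i u w = w i * u w := by
  classical
  induction u using Finsupp.induction_linear with
  | zero => simp
  | add u v hu hv => rw [map_add, Finsupp.add_apply, Finsupp.add_apply, hu, hv, mul_add]
  | single w' c =>
    rw [← mul_one c, ← smul_eq_mul, ← Finsupp.smul_single, map_smul, coordinateOp_single]
    by_cases h : w' = w
    · subst h; simp [mul_comm]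
    · simp [h]

end Separation

namespace AffineWindow

variable {n : ℕ}

/-- The squared displacement of a window, which the descent to the identity window decreases. -/
def energy (w : AffineWindow n) : ℤ := ∑ i : Fin n, (w i - i) ^ 2

theorem energy_nonneg (w : AffineWindow n) : 0 ≤ w.energy := sum_nonneg fun _ _ => sq_nonneg _

theorem energy_comp_swap_lt {w : AffineWindow n} {p q : Fin n} (hpq : (q : ℕ) = p + 1)
    (h : w q < w p) : (w.comp (Equiv.swap p q)).energy < w.energy := by
  have hne : p ≠ q := by rintro rfl; omega
  have reindex : (w.comp (Equiv.swap p q)).energy =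
      ∑ i, (w i - (Equiv.swap p q i : Fin n)) ^ 2 := by
    rw [energy, ← Equiv.sum_comp (Equiv.swap p q)]
    simp only [comp_apply, Equiv.swap_apply_self]
  have drop : w.energy - (w.comp (Equiv.swap p q)).energy = 2 * (w p - w q) := by
    rw [reindex, energy, ← sum_sub_distrib, sum_eq_add p q hne]
    · rw [Equiv.swap_apply_left, Equiv.swap_apply_right, hpq]
      push_cast
      ring
    · intro i _ hi
      rw [Equiv.swap_apply_of_ne_of_ne hi.1 hi.2, sub_self]
    · simp
    · simp
  linarith

theorem energy_rotate [NeZero n] (c : Fin n) (w : AffineWindow n) :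
    (w.rotate c).energy = w.energy := by
  rw [energy, energy, ← Equiv.sum_comp (Equiv.subRight c) fun i => (w i - i) ^ 2]
  refine sum_congr rfl fun i _ => ?_
  rw [rotate_apply, Equiv.subRight_apply]
  ring

variable {m : ℕ}

theorem eq_ofPerm_one_of_forall_le {w : AffineWindow (m + 1)}
    (hstep : ∀ i : Fin m, w i.castSucc ≤ w i.succ)
    (hlast : w (Fin.last m) ≤ w 0 + m + 1) : w = ofPerm 1 := by
  have hmono : Monotone fun i : Fin (m + 1) => w i - i := by
    refine Fin.monotone_iff_le_succ.2 fun i => ?_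
    have := (hstep i).lt_of_ne (w.injective.ne i.castSucc_lt_succ.ne)
    simp only [Fin.val_castSucc, Fin.val_succ]
    push_cast
    lia
  have hlast' : w (Fin.last m) - m ≤ w 0 := by
    have hne : w (Fin.last m) ≠ w 0 + m + 1 := fun h => by
      have hzero := w.eq_of_dvd_sub (i := Fin.last m) (j := 0) ⟨1, by push_cast; linarith⟩
      rw [hzero] at h
      lia
    lia
  refine eq_ofPerm_of_forall_eq_add (c := w 0) fun i => ?_
  have hlower := hmono (Fin.zero_le i)
  have hupper := hmono (Fin.le_last i)
  simp only [Fin.val_zero, Fin.val_last] at hlower hupper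
  rw [Equiv.Perm.one_apply]
  push_cast at hlower
  linarith

theorem exists_rotate_neg_one_lt {w : AffineWindow (m + 1)} (h : w 0 + m + 1 < w (Fin.last m)) :
    ∃ i : Fin m, w.rotate (-1) i.succ < w.rotate (-1) i.castSucc := by
  cases m with
  | zero =>
    change w 0 + 0 + 1 < w 0 at h
    lia
  | succ m =>
    refine ⟨Fin.last m, ?_⟩
    rw [rotate_apply, rotate_apply, sub_neg_eq_add, sub_neg_eq_add, Fin.coeSucc_eq_succ,
      Fin.succ_last, Fin.last_add_one]
    simp only [Fin.val_castSucc, Fin.val_last, Fin.val_zero]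
    push_cast at h ⊢
    linarith

end AffineWindow

section Descent

variable {n m : ℕ}

theorem single_mem_of_single_comp_swap_mem {U : Submodule ℂ (AffineWindow n →₀ ℂ)}
    {w : AffineWindow n} (hw : w.IsRestricted) {p q : Fin n} (hpq : (q : ℕ) = p + 1)
    (hU : ∀ u ∈ U, exchangeOp p q u ∈ U)
    (h : Finsupp.single (w.comp (Equiv.swap p q)) 1 ∈ U) : Finsupp.single w 1 ∈ U := by
  have himage := hU _ h
  rw [exchangeOp_single, w.comp_swap_swap, scattering_comp, Equiv.swap_apply_left,
    Equiv.swap_apply_right, scattering_swap w p q,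
    U.add_mem_iff_right (U.smul_mem _ h)] at himage
  refine (U.smul_mem_iff fun hzero => hw.ne_add hpq ?_).1 himage
  have hsub := coe_sub_coe_ne_zero w (p := p) (q := q) (by rintro rfl; omega)
  rw [scattering, ← sub_eq_add_neg, sub_eq_zero, eq_div_iff hsub, one_mul] at hzero
  have : (w p : ℂ) = w q + n + 1 := by linear_combination hzero
  exact_mod_cast this

theorem single_mem_of_isRestricted {U : Submodule ℂ (AffineWindow (m + 1) →₀ ℂ)}
    (hone : Finsupp.single (AffineWindow.ofPerm 1) 1 ∈ U)
    (hexchange : ∀ i : Fin m, ∀ u ∈ U, exchangeOp i.castSucc i.succ u ∈ U)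
    (hrotation : ∀ u ∈ U, rotationOp 1 u ∈ U) {w : AffineWindow (m + 1)} (hw : w.IsRestricted) :
    Finsupp.single w 1 ∈ U := by
  induction hN : w.energy.toNat using Nat.strong_induction_on generalizing w with
  | _ N ih =>
    have descend {v : AffineWindow (m + 1)} (hv : v.IsRestricted) (henergy : v.energy = w.energy)
        {i : Fin m} (hi : v i.succ < v i.castSucc) : Finsupp.single v 1 ∈ U := by
      have hswap : (v.comp (Equiv.swap i.castSucc i.succ)).IsRestricted := by
        by_contra hnot
        have := hv.eq_add_of_not_comp_swap rfl hnot
        lia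
      have hlt := AffineWindow.energy_comp_swap_lt rfl hi
      have hnonneg := (v.comp (Equiv.swap i.castSucc i.succ)).energy_nonneg
      exact single_mem_of_single_comp_swap_mem hv rfl (hexchange i)
        (ih _ (by lia) hswap rfl)
    by_cases hdescent : ∃ i : Fin m, w i.succ < w i.castSucc
    · exact descend hw rfl hdescent.choose_spec
    push Not at hdescent
    rcases le_or_gt (w (Fin.last m)) (w 0 + m + 1) with hlast | hlast
    · rw [AffineWindow.eq_ofPerm_one_of_forall_le hdescent hlast]
      exact hone
    · obtain ⟨i, hi⟩ := AffineWindow.exists_rotate_neg_one_lt hlast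
      have hmem := hrotation _ (descend (hw.rotate (-1)) (w.energy_rotate _) hi)
      rwa [rotationOp_single, AffineWindow.rotate_rotate, add_neg_cancel,
        AffineWindow.rotate_zero] at hmem

end Descent

section Generation

theorem HasDegreeLE.apply_mem_iSup_wordSpan {R V ι : Type*} [CommRing R] [AddCommGroup V]
    [Module R V] {O : ι → Module.End R V} {v : V} {k : ℕ} {A : Module.End R V}
    (hA : HasDegreeLE O v k A) {u : V} (hu : u ∈ ⨆ d, wordSpan O v d) :
    A u ∈ ⨆ d, wordSpan O v d :=
  (iSup_le fun d x hx => Submodule.mem_iSup_of_mem (d + k) (hA d x hx) :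
    ⨆ d, wordSpan O v d ≤ (⨆ d, wordSpan O v d).comap A) hu

variable {n : ℕ} [NeZero n]

theorem single_mem_iSup_wordSpan {w : AffineWindow n} (hw : w.IsRestricted) :
    Finsupp.single w 1 ∈ ⨆ d, wordSpan varOp (signVector n) d := by
  obtain ⟨m, rfl⟩ : ∃ m, n = m + 1 := ⟨n - 1, by have := NeZero.pos n; lia⟩
  refine single_mem_of_isRestricted ?_ (fun i u hu => ?_) (fun u hu => ?_) hw
  · refine single_mem_of_forall_mul_mem (X := coordinateOp) (f := fun i w => (w i : ℂ))
      (fun w w' h => AffineWindow.ext (funext fun i => Int.cast_injective (congrFun h i)))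
      coordinateOp_apply (fun i u hu => (hasDegreeLE_coordinateOp i).apply_mem_iSup_wordSpan hu)
      (Submodule.mem_iSup_of_mem 1 (wordVector_mem_wordSpan (l := []) one_pos)) ?_
    rw [wordVector, List.foldr_nil, signVector_ofPerm, Equiv.Perm.sign_one]
    simp
  · have hsimple : simpleOp (m + 1) i = exchangeOp i.castSucc i.succ := by
      rw [simpleOp]
      congr 1 <;> ext
      · exact val_ofNat_of_lt (by omega)
      · exact val_ofNat_of_lt (by omega)
    exact hsimple ▸ (hasDegreeLE_simpleOp (by omega)).apply_mem_iSup_wordSpan hu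
  · exact hasDegreeLE_rotationOp_one.apply_mem_iSup_wordSpan hu

theorem single_mem_span_image_normalOrder {B : Set (MvPolynomial (Fin n ⊕ Fin n) ℂ)}
    (hB : ∀ b ∈ B, ∃ d, b.IsHomogeneous d)
    (hIB : (invIdeal n).restrictScalars ℂ ⊔ Submodule.span ℂ B = ⊤) {w : AffineWindow n}
    (hw : w.IsRestricted) :
    Finsupp.single w 1 ∈ Submodule.span ℂ (normalOrder varOp (signVector n) '' B) :=
  iSup_le (wordSpan_le_span_image_normalOrder hasDegreeLE_commutator_varOp
    (fun _ hf => normalOrder_homogeneousComponent_mem_of_mem_invIdeal hf) hB hIB)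
    (single_mem_iSup_wordSpan hw)

end Generation

section ParkingWindows

variable {n : ℕ} {a b : Fin n → ℕ} {σ τ : Equiv.Perm (Fin n)}

/-- The window attached to a parking function: its `σ i`-th entry is `i + n * a i`, translated
so that the entries have the required sum. -/
def parkingWindow (a : Fin n → ℕ) (σ : Equiv.Perm (Fin n)) : AffineWindow n where
  toFun l := (σ.symm l : Fin n) + n * a (σ.symm l) - ∑ i, (a i : ℤ)
  eq_of_dvd_sub {k l} h := by
    obtain ⟨t, ht⟩ := h
    exact σ.symm.injective (fin_eq_of_dvd_sub ⟨t - a (σ.symm k) + a (σ.symm l), by linarith⟩)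
  sum_eq := by
    rw [Equiv.sum_comp σ.symm fun i => ((i : ℕ) : ℤ) + n * a i - ∑ i, (a i : ℤ), sum_sub_distrib,
      sum_add_distrib, ← mul_sum, sum_const, card_univ, Fintype.card_fin, nsmul_eq_mul,
      add_sub_cancel_right]

theorem parkingWindow_apply (a : Fin n → ℕ) (σ : Equiv.Perm (Fin n)) (i : Fin n) :
    parkingWindow a σ (σ i) = i + n * a i - ∑ i, (a i : ℤ) := by
  simp [parkingWindow]

theorem eq_add_one_or_eq_zero_of_dvd_add_one_sub {i j : Fin n} (h : (n : ℤ) ∣ (i : ℤ) + 1 - j) :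
    (j : ℕ) = i + 1 ∨ (j : ℕ) = 0 := by
  rcases Nat.lt_or_ge (i + 1) n with hi | hi
  · exact .inl (congrArg Fin.val (fin_eq_of_dvd_sub (l := ⟨i + 1, hi⟩) (by simpa using h))).symm
  · rw [show (i : ℤ) + 1 = n by omega, dvd_sub_right dvd_rfl, Int.natCast_dvd_natCast] at h
    exact .inr (Nat.eq_zero_of_dvd_of_lt h j.isLt)

theorem isRestricted_parkingWindow (h : IsParking a σ) :
    (parkingWindow a σ).IsRestricted := by
  intro x y hxy
  obtain ⟨i, rfl⟩ := σ.surjective x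
  obtain ⟨j, rfl⟩ := σ.surjective y
  have hi := (σ i).isLt
  rw [parkingWindow_apply, parkingWindow_apply] at hxy ⊢
  have hdvd : (n : ℤ) ∣ (i : ℤ) + 1 - j := by
    obtain ⟨t, ht⟩ := hxy
    exact ⟨t - a i + a j, by linarith⟩
  rcases eq_add_one_or_eq_zero_of_dvd_add_one_sub hdvd with hij | hj
  · rcases (h.1.2 i j hij).lt_or_eq with hlt | heq
    · have : (n : ℤ) * a j ≤ n * a i := by gcongr; omega
      rw [hij]
      push_cast
      linarith
    · have hσ : (σ i : ℕ) < σ j := h.2 i j hij heq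
      rw [heq, hij]
      push_cast
      linarith
  · rw [h.1.1 j hj]
    have : 0 ≤ (n : ℤ) * a i := by positivity
    push_cast
    linarith

theorem sum_le_sum_of_parkingWindow_eq [NeZero n] (ha : IsDyckArea a)
    (h : parkingWindow a σ = parkingWindow b τ) : ∑ i, (a i : ℤ) ≤ ∑ i, (b i : ℤ) := by
  obtain ⟨j, hj⟩ := τ.surjective (σ 0)
  have hentry : parkingWindow a σ (σ 0) = parkingWindow b τ (τ j) := by rw [h, hj]
  rw [parkingWindow_apply, parkingWindow_apply, ha.1 0 rfl, Fin.val_zero] at hentry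
  have : 0 ≤ (n : ℤ) * b j := by positivity
  push_cast at hentry
  linarith

theorem parkingWindow_inj [NeZero n] (ha : IsParking a σ) (hb : IsParking b τ)
    (h : parkingWindow a σ = parkingWindow b τ) : a = b ∧ σ = τ := by
  have hsum := (sum_le_sum_of_parkingWindow_eq ha.1 h).antisymm
    (sum_le_sum_of_parkingWindow_eq hb.1 h.symm)
  have hentry (l : Fin n) : ((σ.symm l : Fin n) : ℤ) + n * a (σ.symm l) =
      (τ.symm l : Fin n) + n * b (τ.symm l) := by
    have := congrArg (fun w : AffineWindow n => w l) h
    simp only [parkingWindow, hsum] at this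
    linarith
  obtain rfl : σ = τ := Equiv.symm_bijective.injective <| Equiv.ext fun l =>
    fin_eq_of_dvd_sub ⟨b (τ.symm l) - a (σ.symm l), by linarith [hentry l]⟩
  refine ⟨funext fun i => ?_, rfl⟩
  simpa [NeZero.ne n] using hentry (σ i)

end ParkingWindows

section Counting

variable {n : ℕ}

theorem le_of_isDyckArea {a : Fin n → ℕ} (h : IsDyckArea a) {k : ℕ} (hk : k < n) :
    a ⟨k, hk⟩ ≤ k := by
  induction k with
  | zero => exact (h.1 _ rfl).le
  | succ k ih => exact (h.2 ⟨k, by lia⟩ _ rfl).trans (Nat.succ_le_succ (ih _))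

instance : Finite {p : (Fin n → ℕ) × Equiv.Perm (Fin n) // IsParking p.1 p.2} :=
  ((Set.finite_Iic fun i : Fin n => (i : ℕ)).prod Set.finite_univ).subset
    (fun _ h => ⟨fun i => le_of_isDyckArea h.1 i.isLt, trivial⟩) |>.to_subtype

theorem isHomogeneous_parkMonomial (a : Fin n → ℕ) (σ : Equiv.Perm (Fin n)) :
    (parkMonomial a σ).IsHomogeneous (∑ i, (1 * dinvPark a σ i + 1 * a i)) :=
  .prod _ _ _ fun _ _ => ((isHomogeneous_X ..).pow _).mul ((isHomogeneous_X ..).pow _)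

theorem span_range_mk_eq_top_iff {R A ι : Type*} [CommRing R] [CommRing A] [Algebra R A]
    {I : Ideal A} {b : ι → A} :
    Submodule.span R (Set.range fun i => Ideal.Quotient.mk I (b i)) = ⊤ ↔
      I.restrictScalars R ⊔ Submodule.span R (Set.range b) = ⊤ := by
  have hrange : Set.range (fun i => Ideal.Quotient.mk I (b i)) =
      (Ideal.Quotient.mkₐ R I).toLinearMap '' Set.range b := Set.range_comp _ b
  have hker : LinearMap.ker (Ideal.Quotient.mkₐ R I).toLinearMap = I.restrictScalars R := by
    ext
    exact Ideal.Quotient.eq_zero_iff_mem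
  rw [hrange, ← Submodule.map_span, LinearMap.map_eq_top_iff
    (LinearMap.range_eq_top.2 Ideal.Quotient.mk_surjective), hker, sup_comm]

theorem linearIndependent_of_forall_card_le {ι K V : Type*} [DivisionRing K] [AddCommGroup V]
    [Module K V] [Finite ι] {v : ι → V}
    (h : ∀ s : Set ι, Submodule.span K (v '' s) = Submodule.span K (Set.range v) →
      Nat.card ι ≤ Nat.card s) : LinearIndependent K v := by
  obtain ⟨κ, f, hf, hspan, hindep⟩ := exists_linearIndependent' K v
  have hcard := h (Set.range f) (by rw [← Set.range_comp, hspan])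
  have hsurj : f.Surjective := Set.range_eq_univ.1 <| (Set.eq_univ_iff_ncard _).2 <|
    (Set.ncard_le_card _).antisymm hcard
  exact (linearIndependent_equiv (Equiv.ofBijective f ⟨hf, hsurj⟩)).1 hindep

theorem card_parking_le_of_sup_span_eq_top [NeZero n] {κ : Type*} [Finite κ]
    {b : κ → MvPolynomial (Fin n ⊕ Fin n) ℂ} (hb : ∀ k, ∃ d, (b k).IsHomogeneous d)
    (htop : (invIdeal n).restrictScalars ℂ ⊔ Submodule.span ℂ (Set.range b) = ⊤) :
    Nat.card {p : (Fin n → ℕ) × Equiv.Perm (Fin n) // IsParking p.1 p.2} ≤ Nat.card κ := by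
  have := Fintype.ofFinite κ
  have := Fintype.ofFinite {p : (Fin n → ℕ) × Equiv.Perm (Fin n) // IsParking p.1 p.2}
  let window (P : {p : (Fin n → ℕ) × Equiv.Perm (Fin n) // IsParking p.1 p.2}) :=
    parkingWindow P.1.1 P.1.2
  have hinj : window.Injective := fun P Q h =>
    Subtype.ext (Prod.ext_iff.2 (parkingWindow_inj P.2 Q.2 h))
  have hindep : LinearIndependent ℂ fun P => Finsupp.single (window P) (1 : ℂ) :=
    (Finsupp.linearIndependent_single_one ℂ _).comp window hinj
  have hle : Submodule.span ℂ (Set.range fun P => Finsupp.single (window P) (1 : ℂ)) ≤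
      Submodule.span ℂ (Set.range (normalOrder varOp (signVector n) ∘ b)) := by
    rw [Submodule.span_le, Set.range_subset_iff, Set.range_comp]
    exact fun P => single_mem_span_image_normalOrder (Set.forall_mem_range.2 hb) htop
      (isRestricted_parkingWindow P.2)
  rw [Nat.card_eq_fintype_card, Nat.card_eq_fintype_card, ← finrank_span_eq_card hindep]
  have := FiniteDimensional.span_of_finite ℂ
    (Set.finite_range (normalOrder varOp (signVector n) ∘ b))
  exact (Submodule.finrank_mono hle).trans (finrank_range_le_card _)

end Counting

end DiagonalCoinvariant

/-- The images in `DR_n` of the monomials `∏ i, x_{σ i}^{d_i(P)} y_{σ i}^{a_i}`,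
as `P = (a, σ)` ranges over all parking functions of semilength `n`, form a
`ℂ`-vector-space basis of `DR_n`: they are linearly independent and span. -/
theorem parkMonomial_basis (n : ℕ) (hn : 1 ≤ n) :
    LinearIndependent ℂ
      (fun P : {p : (Fin n → ℕ) × Equiv.Perm (Fin n) // IsParking p.1 p.2} =>
        Ideal.Quotient.mk (invIdeal n) (parkMonomial P.1.1 P.1.2)) ∧
    Submodule.span ℂ (Set.range
      (fun P : {p : (Fin n → ℕ) × Equiv.Perm (Fin n) // IsParking p.1 p.2} =>
        Ideal.Quotient.mk (invIdeal n) (parkMonomial P.1.1 P.1.2))) = ⊤ := by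
  have : NeZero n := ⟨Nat.one_le_iff_ne_zero.1 hn⟩
  have hspan := DiagonalCoinvariant.span_range_mk_eq_top_iff.2
    (DiagonalCoinvariant.sup_span_parkMonomial_eq_top n)
  refine ⟨DiagonalCoinvariant.linearIndependent_of_forall_card_le fun s hs => ?_, hspan⟩
  rw [hspan, Set.image_eq_range] at hs
  exact DiagonalCoinvariant.card_parking_le_of_sup_span_eq_top
    (fun P => ⟨_, DiagonalCoinvariant.isHomogeneous_parkMonomial P.1.1.1 P.1.1.2⟩)
    (DiagonalCoinvariant.span_range_mk_eq_top_iff.1 hs)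
end

section
/- The map sending a Dyck path π of semilength n to the bivariate Vandermonde determinant Δ_{X(π)}(x,y) ∈ ℂ[x_1,…,x_n,y_1,…,y_n], where X(π) = ((d_1,a_1),…,(d_n,a_n)) is the tuple of (dinv, area) pairs of π, is injective; consequently the set { Δ_{X(π)} : π a Dyck path of semilength n } has cardinality equal to the n-th Catalan number. -/
open MvPolynomial

/-- The dinv sequence of a Dyck path encoded by its area sequence:
`d i = #{ j > i | a j = a i or a j = a i - 1 }`. -/
def dinvSeq {n : ℕ} (a : Fin n → ℕ) (i : Fin n) : ℕ :=
  (Finset.univ.filter (fun j : Fin n => i < j ∧ (a j = a i ∨ a j + 1 = a i))).card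

/-- The bivariate Vandermonde determinant `Δ_X(x,y) = det (x_i^{α_j} y_i^{β_j})`
for a tuple `X = ((α_1,β_1),…,(α_n,β_n))`, a polynomial in
`ℂ[x_1,…,x_n,y_1,…,y_n]` where `x i = X (Sum.inl i)` and `y i = X (Sum.inr i)`. -/
noncomputable def biVandermonde (n : ℕ) (E : Fin n → ℕ × ℕ) :
    MvPolynomial (Fin n ⊕ Fin n) ℂ :=
  Matrix.det (Matrix.of fun i j : Fin n =>
    (X (Sum.inl i) : MvPolynomial (Fin n ⊕ Fin n) ℂ) ^ (E j).1 *
      (X (Sum.inr i) : MvPolynomial (Fin n ⊕ Fin n) ℂ) ^ (E j).2)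

/-! A Dyck path can be read off from its unordered set of (dinv, area) pairs one step at a time from
the end. The last area is the least `k` such that `(0, k + 1)` is not a pair: every `j ≤ k` is the
area of a row after which the path stays strictly above height `j`, and such a row has dinv `0`,
whereas a row of area `k + 1` has its dinv increased by the last row. Once `k` is known, removing
the last row lowers by one exactly the dinvs of the rows of area `k` or `k + 1`.

The determinant determines the set of pairs because these are pairwise distinct, so that no
cancellation occurs among the `n!` monomials of its expansion. Dyck paths are counted through their
first-return decomposition, which identifies them with binary trees. -/

section Vandermonde

variable {n : ℕ}

/-- The exponent vector of the monomial `∏ i, x_i ^ α_i * y_i ^ β_i`, where `E i = (α_i, β_i)`. -/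
noncomputable def biExponent (E : Fin n → ℕ × ℕ) : Fin n ⊕ Fin n →₀ ℕ :=
  Finsupp.equivFunOnFinite.symm (Sum.elim (Prod.fst ∘ E) (Prod.snd ∘ E))

theorem biExponent_injective : Function.Injective (biExponent (n := n)) := by
  intro E F h
  have h' := Finsupp.equivFunOnFinite.symm.injective h
  exact funext fun i => Prod.ext (congrFun h' (Sum.inl i)) (congrFun h' (Sum.inr i))

theorem monomial_biExponent {R : Type*} [CommSemiring R] (E : Fin n → ℕ × ℕ) :
    monomial (biExponent E) (1 : R) =
      ∏ i, X (Sum.inl i) ^ (E i).1 * X (Sum.inr i) ^ (E i).2 := by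
  rw [monomial_eq, Finsupp.prod_fintype _ _ fun _ => pow_zero _, Fintype.prod_sum_type,
    Finset.prod_mul_distrib]
  simp [biExponent]

theorem biVandermonde_eq_sum (E : Fin n → ℕ × ℕ) :
    biVandermonde n E =
      ∑ σ : Equiv.Perm (Fin n), σ.sign • monomial (biExponent (E ∘ σ)) (1 : ℂ) := by
  rw [biVandermonde, ← Matrix.det_transpose, Matrix.det_apply]
  simp only [monomial_biExponent, Matrix.transpose_apply, Matrix.of_apply, Function.comp_apply]

theorem coeff_biVandermonde (E F : Fin n → ℕ × ℕ) :
    coeff (biExponent F) (biVandermonde n E) =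
      ∑ σ ∈ {σ : Equiv.Perm (Fin n) | E ∘ σ = F}, ((σ.sign : ℤ) : ℂ) := by
  rw [biVandermonde_eq_sum, coeff_sum, Finset.sum_filter]
  refine Finset.sum_congr rfl fun σ _ => ?_
  rw [Units.smul_def, coeff_smul, coeff_monomial]
  simp [biExponent_injective.eq_iff]

theorem coeff_biVandermonde_self {E : Fin n → ℕ × ℕ} (hE : Function.Injective E) :
    coeff (biExponent E) (biVandermonde n E) = 1 := by
  have hstab : ∀ σ : Equiv.Perm (Fin n), E ∘ σ = E ↔ σ = 1 := fun σ =>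
    ⟨fun h => Equiv.ext fun i => hE (congrFun h i), fun h => h ▸ rfl⟩
  simp [coeff_biVandermonde, hstab, Finset.filter_eq']

theorem range_eq_of_biVandermonde_eq {E F : Fin n → ℕ × ℕ} (hE : Function.Injective E)
    (h : biVandermonde n E = biVandermonde n F) : Set.range E = Set.range F := by
  have hcoeff : coeff (biExponent E) (biVandermonde n F) ≠ 0 := by
    rw [← h, coeff_biVandermonde_self hE]
    exact one_ne_zero
  rw [coeff_biVandermonde] at hcoeff
  obtain ⟨σ, hσ, -⟩ := Finset.exists_ne_zero_of_sum_ne_zero hcoeff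
  rw [← (Finset.mem_filter.1 hσ).2, σ.surjective.range_comp]

end Vandermonde

section Reconstruction

variable {n : ℕ}

/-- The tuple `X(π)` of (dinv, area) pairs of the path with area sequence `a`. -/
def dinvArea (a : Fin n → ℕ) (i : Fin n) : ℕ × ℕ :=
  (dinvSeq a i, a i)

theorem dinvSeq_lt_of_lt_of_eq {a : Fin n → ℕ} {i j : Fin n} (hij : i < j) (h : a i = a j) :
    dinvSeq a j < dinvSeq a i := by
  refine Finset.card_lt_card (Finset.ssubset_iff_of_subset ?_ |>.2 ⟨j, ?_, ?_⟩)
  · intro m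
    simp only [Finset.mem_filter, Finset.mem_univ, true_and, h]
    exact And.imp_left hij.trans
  · simp [hij, h]
  · simp

theorem dinvArea_injective (a : Fin n → ℕ) : Function.Injective (dinvArea a) := by
  refine .of_lt_imp_ne fun i j hij h => ?_
  obtain ⟨hdinv, harea⟩ := Prod.mk.inj h
  exact (dinvSeq_lt_of_lt_of_eq hij harea).ne' hdinv

theorem dinvSeq_eq_zero_of_forall_lt {a : Fin n → ℕ} {i : Fin n} (h : ∀ j, i < j → a i < a j) :
    dinvSeq a i = 0 := by
  rw [dinvSeq, Finset.card_eq_zero, Finset.filter_eq_empty_iff]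
  intro j _ hj
  have := h j hj.1
  omega

theorem dinvSeq_castSucc (a : Fin (n + 1) → ℕ) (i : Fin n) :
    dinvSeq a i.castSucc = dinvSeq (Fin.init a) i +
      if a (Fin.last n) = a i.castSucc ∨ a (Fin.last n) + 1 = a i.castSucc then 1 else 0 := by
  rw [dinvSeq, dinvSeq, Finset.card_filter, Finset.card_filter, Fin.sum_univ_castSucc]
  simp only [Fin.castSucc_lt_castSucc_iff, Fin.castSucc_lt_last, true_and, Fin.init]
  rfl

/-- The effect on the (dinv, area) pairs of a path of appending a row of area `k`. -/
def dinvShift (k : ℕ) (p : ℕ × ℕ) : ℕ × ℕ :=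
  (p.1 + if k = p.2 ∨ k + 1 = p.2 then 1 else 0, p.2)

theorem dinvShift_injective (k : ℕ) : Function.Injective (dinvShift k) := by
  rintro ⟨d, j⟩ ⟨d', j'⟩ h
  obtain ⟨hd, rfl⟩ := Prod.mk.inj h
  exact congrArg (·, j) (Nat.add_right_cancel hd)

theorem dinvShift_ne_zero_self (k : ℕ) (p : ℕ × ℕ) : dinvShift k p ≠ (0, k) := by
  grind [dinvShift]

theorem dinvShift_ne_zero_succ (k : ℕ) (p : ℕ × ℕ) : dinvShift k p ≠ (0, k + 1) := by
  grind [dinvShift]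

theorem dinvArea_castSucc (a : Fin (n + 1) → ℕ) (i : Fin n) :
    dinvArea a i.castSucc = dinvShift (a (Fin.last n)) (dinvArea (Fin.init a) i) :=
  Prod.ext (dinvSeq_castSucc a i) rfl

theorem dinvArea_last (a : Fin (n + 1) → ℕ) :
    dinvArea a (Fin.last n) = (0, a (Fin.last n)) :=
  Prod.ext (dinvSeq_eq_zero_of_forall_lt fun j hj => absurd hj j.le_last.not_gt) rfl

theorem range_dinvArea_init (a : Fin (n + 1) → ℕ) :
    Set.range (dinvArea (Fin.init a)) =
      dinvShift (a (Fin.last n)) ⁻¹' Set.range (dinvArea a) := by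
  ext p
  simp [Fin.exists_fin_succ', dinvArea_castSucc, dinvArea_last, (dinvShift_injective _).eq_iff,
    (dinvShift_ne_zero_self _ _).symm]

theorem zero_last_succ_notMem_range_dinvArea (a : Fin (n + 1) → ℕ) :
    (0, a (Fin.last n) + 1) ∉ Set.range (dinvArea a) := by
  simp [Fin.exists_fin_succ', dinvArea_castSucc, dinvArea_last, dinvShift_ne_zero_succ]

theorem IsDyckArea.init {a : Fin (n + 1) → ℕ} (ha : IsDyckArea a) : IsDyckArea (Fin.init a) :=
  ⟨fun i hi => ha.1 i.castSucc hi, fun i j hij => ha.2 i.castSucc j.castSucc hij⟩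

theorem IsDyckArea.exists_eq_and_forall_lt {a : Fin (n + 1) → ℕ} (ha : IsDyckArea a) {k : ℕ}
    (hk : k ≤ a (Fin.last n)) : ∃ i, a i = k ∧ ∀ j, i < j → k < a j := by
  obtain ⟨i, hik, hmax⟩ := (Set.toFinite {i | a i ≤ k}).exists_maximal
    ⟨0, (ha.1 0 rfl).trans_le k.zero_le⟩
  have habove : ∀ j, i < j → k < a j := fun j hij =>
    not_le.1 fun hjk => (hmax hjk hij.le).not_gt hij
  refine ⟨i, le_antisymm hik ?_, habove⟩
  induction i using Fin.lastCases with
  | last => exact hk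
  | cast i =>
    have hnext := habove i.succ i.castSucc_lt_succ
    have hstep := ha.2 i.castSucc i.succ rfl
    omega

theorem IsDyckArea.zero_mem_range_dinvArea {a : Fin (n + 1) → ℕ} (ha : IsDyckArea a) {k : ℕ}
    (hk : k ≤ a (Fin.last n)) : (0, k) ∈ Set.range (dinvArea a) := by
  obtain ⟨i, rfl, habove⟩ := ha.exists_eq_and_forall_lt hk
  exact ⟨i, Prod.ext (dinvSeq_eq_zero_of_forall_lt habove) rfl⟩

theorem IsDyckArea.last_le_of_range_subset {a b : Fin (n + 1) → ℕ} (ha : IsDyckArea a)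
    (h : Set.range (dinvArea a) ⊆ Set.range (dinvArea b)) :
    a (Fin.last n) ≤ b (Fin.last n) := by
  by_contra! hlt
  exact zero_last_succ_notMem_range_dinvArea b (h (ha.zero_mem_range_dinvArea hlt))

theorem IsDyckArea.eq_of_range_dinvArea_eq {a b : Fin n → ℕ} (ha : IsDyckArea a)
    (hb : IsDyckArea b) (h : Set.range (dinvArea a) = Set.range (dinvArea b)) : a = b := by
  induction n with
  | zero => exact Subsingleton.elim a b
  | succ n ih =>
    have hlast : a (Fin.last n) = b (Fin.last n) :=
      (ha.last_le_of_range_subset h.subset).antisymm (hb.last_le_of_range_subset h.superset)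
    have hinit : Fin.init a = Fin.init b :=
      ih ha.init hb.init (by rw [range_dinvArea_init, range_dinvArea_init, h, hlast])
    rw [← Fin.snoc_init_self a, ← Fin.snoc_init_self b, hinit, hlast]

end Reconstruction

section Counting

/-- Area sequences of Dyck paths of arbitrary semilength, encoded as lists. -/
def IsDyckList (l : List ℕ) : Prop :=
  (∀ x ∈ l.head?, x = 0) ∧ l.IsChain (fun x y => y ≤ x + 1)

theorem isDyckList_ofFn {n : ℕ} {a : Fin n → ℕ} : IsDyckList (List.ofFn a) ↔ IsDyckArea a := by
  refine and_congr ?_ ?_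
  · cases n with
    | zero => simp
    | succ n => simp [List.ofFn_succ, Fin.val_eq_zero_iff]
  · rw [List.isChain_iff_getElem]
    simp only [List.getElem_ofFn, List.length_ofFn]
    constructor
    · rintro h i ⟨_, hj⟩ rfl
      exact h i hj
    · intro h i hi
      exact h _ _ rfl

theorem range_ofFn_isDyckArea (n : ℕ) :
    Set.range (fun π : {a : Fin n → ℕ // IsDyckArea a} => List.ofFn π.1) =
      {l | IsDyckList l ∧ l.length = n} := by
  ext l
  constructor
  · rintro ⟨π, rfl⟩
    exact ⟨isDyckList_ofFn.2 π.2, List.length_ofFn⟩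
  · rintro ⟨hl, rfl⟩
    exact ⟨⟨l.get, isDyckList_ofFn.1 (by rwa [List.ofFn_get])⟩, List.ofFn_get l⟩

theorem isDyckList_zero_cons_iff {l r : List ℕ} (hr : ∀ x ∈ r.head?, x = 0) :
    IsDyckList (0 :: (l.map (· + 1) ++ r)) ↔ IsDyckList l ∧ IsDyckList r := by
  have hstart : (∀ y ∈ (l.map (· + 1) ++ r).head?, y ≤ 0 + 1) ↔ ∀ x ∈ l.head?, x = 0 := by
    cases l with
    | nil => simpa using fun x hx => (hr x hx).trans_le zero_le_one
    | cons => simp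
  have hreturn : ∀ x ∈ (l.map (· + 1)).getLast?, ∀ y ∈ r.head?, y ≤ x + 1 :=
    fun x _ y hy => (hr y hy).trans_le (x + 1).zero_le
  have hlift : (l.map (· + 1)).IsChain (fun x y => y ≤ x + 1) ↔
      l.IsChain (fun x y => y ≤ x + 1) := by
    simp [List.isChain_map]
  have hhead : ∀ x ∈ (0 :: (l.map (· + 1) ++ r)).head?, x = 0 := by simp
  simp only [IsDyckList, List.isChain_cons, List.isChain_append, hstart, hlift]
  tauto

theorem exists_eq_map_succ_append (l : List ℕ) :
    ∃ u v : List ℕ, l = u.map (· + 1) ++ v ∧ ∀ x ∈ v.head?, x = 0 := by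
  induction l with
  | nil => exact ⟨[], [], by simp⟩
  | cons x l ih =>
    cases x with
    | zero => exact ⟨[], 0 :: l, by simp⟩
    | succ x =>
      obtain ⟨u, v, rfl, hv⟩ := ih
      exact ⟨x :: u, v, rfl, hv⟩

theorem takeWhile_map_succ_append (u : List ℕ) {v : List ℕ} (hv : ∀ x ∈ v.head?, x = 0) :
    (u.map (· + 1) ++ v).takeWhile (0 < ·) = u.map (· + 1) := by
  rw [List.takeWhile_append_of_pos (by simp)]
  cases v <;> simp_all

theorem map_succ_append_inj {u v u' v' : List ℕ} (hv : ∀ x ∈ v.head?, x = 0)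
    (hv' : ∀ x ∈ v'.head?, x = 0) (h : u.map (· + 1) ++ v = u'.map (· + 1) ++ v') :
    u = u' ∧ v = v' := by
  have hu : u.map (· + 1) = u'.map (· + 1) := by
    rw [← takeWhile_map_succ_append u hv, h, takeWhile_map_succ_append u' hv']
  exact ⟨(add_left_injective 1).list_map hu, List.append_cancel_left (hu ▸ h)⟩

/-- The area sequence of the Dyck path whose first-return decomposition is given by the two
subtrees: the left one is the part below the first return, raised by one, and the right one is the
part after it. -/
def treeArea : BinaryTree Unit → List ℕ
  | .nil => []
  | .node _ l r => 0 :: ((treeArea l).map (· + 1) ++ treeArea r)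

theorem length_treeArea (t : BinaryTree Unit) : (treeArea t).length = t.numNodes := by
  induction t with
  | nil => rfl
  | node _ l r ihl ihr => simp [treeArea, BinaryTree.numNodes, ihl, ihr]

theorem isDyckList_treeArea (t : BinaryTree Unit) : IsDyckList (treeArea t) := by
  induction t with
  | nil => simp [treeArea, IsDyckList]
  | node _ l r ihl ihr => exact (isDyckList_zero_cons_iff ihr.1).2 ⟨ihl, ihr⟩

theorem treeArea_injective : Function.Injective treeArea := by
  intro s
  induction s with
  | nil =>
    intro t h
    cases t with
    | nil => rfl
    | node => simp [treeArea] at h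
  | node _ l r ihl ihr =>
    intro t h
    cases t with
    | nil => simp [treeArea] at h
    | node _ l' r' =>
      obtain ⟨hl, hr⟩ := map_succ_append_inj (isDyckList_treeArea r).1 (isDyckList_treeArea r').1
        (List.tail_eq_of_cons_eq h)
      rw [ihl hl, ihr hr]

theorem IsDyckList.exists_treeArea_eq : ∀ {l : List ℕ}, IsDyckList l → ∃ t, treeArea t = l
  | [], _ => ⟨.nil, rfl⟩
  | x :: l, h => by
    obtain rfl : x = 0 := h.1 x rfl
    obtain ⟨u, v, rfl, hv⟩ := exists_eq_map_succ_append l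
    obtain ⟨hu, hv⟩ := (isDyckList_zero_cons_iff hv).1 h
    obtain ⟨s, rfl⟩ := hu.exists_treeArea_eq
    obtain ⟨t, rfl⟩ := hv.exists_treeArea_eq
    exact ⟨.node () s t, rfl⟩
termination_by l => l.length

theorem treeArea_image_treesOfNumNodesEq (n : ℕ) :
    treeArea '' (BinaryTree.treesOfNumNodesEq n) = {l | IsDyckList l ∧ l.length = n} := by
  ext l
  simp only [Set.mem_image, Finset.mem_coe, BinaryTree.mem_treesOfNumNodesEq]
  constructor
  · rintro ⟨t, rfl, rfl⟩
    exact ⟨isDyckList_treeArea t, length_treeArea t⟩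
  · rintro ⟨hl, rfl⟩
    obtain ⟨t, rfl⟩ := hl.exists_treeArea_eq
    exact ⟨t, (length_treeArea t).symm, rfl⟩

theorem card_isDyckArea (n : ℕ) : Nat.card {a : Fin n → ℕ // IsDyckArea a} = catalan n := by
  have hofFn : Function.Injective (fun π : {a : Fin n → ℕ // IsDyckArea a} => List.ofFn π.1) :=
    List.ofFn_injective.comp Subtype.val_injective
  rw [← Nat.card_range_of_injective hofFn, range_ofFn_isDyckArea,
    ← treeArea_image_treesOfNumNodesEq, Nat.card_coe_set_eq,
    Set.ncard_image_of_injective _ treeArea_injective, Set.ncard_coe_finset,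
    BinaryTree.treesOfNumNodesEq_card_eq_catalan]

end Counting

/-- The map `π ↦ Δ_{X(π)}` from Dyck paths of semilength `n` to bivariate
Vandermonde determinants is injective, and the resulting set of polynomials
has cardinality the `n`-th Catalan number. -/
theorem biVandermonde_dyck_injective_card (n : ℕ) :
    Function.Injective (fun π : {a : Fin n → ℕ // IsDyckArea a} =>
      biVandermonde n (fun i => (dinvSeq π.1 i, π.1 i))) ∧
    Nat.card (Set.range (fun π : {a : Fin n → ℕ // IsDyckArea a} =>
      biVandermonde n (fun i => (dinvSeq π.1 i, π.1 i)))) = catalan n := by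
  have hinj : Function.Injective (fun π : {a : Fin n → ℕ // IsDyckArea a} =>
      biVandermonde n (dinvArea π.1)) := fun π ρ h =>
    Subtype.ext <| π.2.eq_of_range_dinvArea_eq ρ.2 <|
      range_eq_of_biVandermonde_eq (dinvArea_injective π.1) h
  exact ⟨hinj, (Nat.card_range_of_injective hinj).trans (card_isDyckArea n)⟩
end

section
/- For n ≥ 1, the family of bivariate Vandermonde determinants (Δ_{X(π)})_π, indexed by the Dyck paths π of semilength n with X(π) = ((d_1,a_1),…,(d_n,a_n)) the tuple of (dinv, area) pairs of π, is linearly independent over ℂ in the polynomial ring ℂ[x_1,…,x_n,y_1,…,y_n]. -/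
/-!
Two facts give the independence. First, `Δ_X` with pairwise distinct pairs contains the monomial
`∏ x_i^{α_i} y_i^{β_i}` with coefficient `1`, and only monomials obtained from it by permuting the
pairs; so determinants whose multisets of pairs differ have disjoint supports. Second, the multiset
of (dinv, area) pairs determines the path. Indeed, among the entries of `a` lying in the window
`{l - 1, l}`, the dinv of an entry `l` counts those to its right, hence fixes how many are to its
left. Let `p` be the first position where `a` and `b` differ, say `a p < b p = l`, and let `q` be
the position in `a` of the entry matched with `b p`. Then equally many window entries of `a`
precede `p` and `q`. But `q < p` is impossible because `q` itself is such an entry, and `p < q` is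
impossible because `a` climbs by unit steps from below `l` at `p` to `l` at `q`, so it takes the
value `l - 1` at some position before `q` and not before `p`.
-/

open MvPolynomial

section UnitAscents

variable {α : Type*} [LinearOrder α]

/-- Sequences whose entries grow by at most one from each position to the next: the area sequences
of Dyck paths, without the condition on the first entry. -/
def HasUnitAscents (a : α → ℕ) : Prop :=
  ∀ ⦃i j⦄, i ⋖ j → a j ≤ a i + 1

theorem HasUnitAscents.exists_add_one_eq [LocallyFiniteOrder α] {a : α → ℕ}
    (ha : HasUnitAscents a) {p q : α} {l : ℕ} (hpq : p ≤ q) (hp : a p < l) (hq : l ≤ a q) :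
    ∃ r, p ≤ r ∧ r < q ∧ a r + 1 = l := by
  obtain ⟨r, hr⟩ := ((Finset.Icc p q).filter (a · < l)).exists_maximal
    ⟨p, by simp [hpq, hp]⟩
  obtain ⟨⟨hpr, hrq⟩, hrl⟩ : (p ≤ r ∧ r ≤ q) ∧ a r < l := by simpa using hr.prop
  have hrq' : r < q := hrq.lt_of_ne (by rintro rfl; omega)
  obtain ⟨s, hrs, hsq⟩ := exists_covBy_le_of_lt hrq'
  have hls : l ≤ a s := by
    by_contra! hsl
    exact hr.not_gt (by simp [hpr.trans hrs.le, hsq, hsl]) hrs.lt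
  exact ⟨r, hpr, hrq', by have := ha hrs; omega⟩

variable [LocallyFiniteOrderBot α]

/-- The number of entries equal to `l` or `l - 1` strictly before position `i`; for `l = a i` it is
the counterpart on the left of `i` of the dinv statistic. -/
def windowCount (a : α → ℕ) (l : ℕ) (i : α) : ℕ :=
  ((Finset.Iio i).filter fun j ↦ a j = l ∨ a j + 1 = l).card

theorem windowCount_lt_windowCount {a : α → ℕ} {l : ℕ} {i j r : α} (hir : i ≤ r) (hrj : r < j)
    (hr : a r = l ∨ a r + 1 = l) : windowCount a l i < windowCount a l j := by
  refine Finset.card_lt_card (Finset.ssubset_iff_of_subset ?_ |>.2 ⟨r, ?_, ?_⟩)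
  · gcongr
    exact (hir.trans_lt hrj).le
  · simp [hrj, hr]
  · simp [hir]

theorem windowCount_congr {a b : α → ℕ} {p : α} (hab : ∀ i < p, a i = b i) (l : ℕ) :
    windowCount a l p = windowCount b l p := by
  unfold windowCount
  congr 1
  exact Finset.filter_congr fun i hi ↦ by rw [hab i (Finset.mem_Iio.1 hi)]

theorem eq_of_windowCount_eq {a : α → ℕ} {i j : α} (hij : a i = a j)
    (hc : windowCount a (a i) i = windowCount a (a j) j) : i = j := by
  rw [hij] at hc
  rcases lt_trichotomy i j with h | h | h
  · exact absurd hc (windowCount_lt_windowCount le_rfl h (.inl hij)).ne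
  · exact h
  · exact absurd hc (windowCount_lt_windowCount le_rfl h (.inl rfl)).ne'

variable [LocallyFiniteOrder α] {a b : α → ℕ}

theorem HasUnitAscents.le_of_windowCount_comp_eq (ha : HasUnitAscents a) (σ : Equiv.Perm α)
    (hσ : ∀ i, b (σ i) = a i)
    (hc : ∀ i, windowCount b (b (σ i)) (σ i) = windowCount a (a i) i)
    {p : α} (hp : ∀ i < p, a i = b i) : b p ≤ a p := by
  obtain ⟨q, rfl⟩ := σ.surjective p
  by_contra! hlt
  have haq : a q = b (σ q) := (hσ q).symm
  -- `q` and `σ q` have the same number of window entries before them in `a`, yet some window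
  -- entry separates them.
  have hcount : windowCount a (b (σ q)) (σ q) = windowCount a (b (σ q)) q := by
    rw [windowCount_congr hp, hc, haq]
  rcases lt_trichotomy q (σ q) with h | h | h
  · exact (windowCount_lt_windowCount le_rfl h (.inl haq)).ne' hcount
  · rw [← haq, ← h] at hlt
    exact hlt.false
  · obtain ⟨r, hpr, hrq, hr⟩ := ha.exists_add_one_eq h.le hlt haq.ge
    exact (windowCount_lt_windowCount hpr hrq (.inr hr)).ne hcount

theorem HasUnitAscents.eq_of_windowCount_comp_eq (ha : HasUnitAscents a)
    (hb : HasUnitAscents b) (σ : Equiv.Perm α) (hσ : ∀ i, b (σ i) = a i)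
    (hc : ∀ i, windowCount b (b (σ i)) (σ i) = windowCount a (a i) i) : a = b := by
  have : WellFoundedLT α :=
    StrictMono.wellFoundedLT (f := fun i ↦ (Finset.Iio i).card) fun _ _ h ↦
      Finset.card_lt_card (Finset.Iio_ssubset_Iio h)
  funext p
  induction p using WellFoundedLT.induction with
  | ind p ih =>
    refine le_antisymm ?_ (ha.le_of_windowCount_comp_eq σ hσ hc ih)
    refine hb.le_of_windowCount_comp_eq σ.symm (fun i ↦ ?_) (fun i ↦ ?_) fun i hi ↦ (ih i hi).symm
    · simp [← hσ]
    · simpa using (hc (σ.symm i)).symm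

end UnitAscents

section Dinv

variable {n : ℕ}

theorem IsDyckArea.hasUnitAscents {a : Fin n → ℕ} (ha : IsDyckArea a) : HasUnitAscents a :=
  fun i j hij ↦ ha.2 i j (Nat.covBy_iff_add_one_eq.1 hij.coe_fin).symm

theorem windowCount_add_dinvSeq (a : Fin n → ℕ) (i : Fin n) :
    windowCount a (a i) i + (dinvSeq a i + 1) =
      (Finset.univ.filter fun j ↦ a j = a i ∨ a j + 1 = a i).card := by
  rw [← Finset.card_filter_add_card_filter_not (· < i), Finset.filter_filter, Finset.filter_filter,
    dinvSeq, ← Finset.card_insert_of_notMem (a := i) (by simp), windowCount]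
  congr 2 <;> ext j
  · simp [and_comm]
  · rcases lt_trichotomy i j with h | rfl | h
    · simp [h, h.le, h.ne']
    · simp
    · simp [h, h.not_gt, h.ne]

theorem injective_dinvSeq_area (a : Fin n → ℕ) : Function.Injective fun i ↦ (dinvSeq a i, a i) := by
  intro i j hij
  obtain ⟨hd, ha⟩ : dinvSeq a i = dinvSeq a j ∧ a i = a j := by simpa using hij
  refine eq_of_windowCount_eq ha ?_
  have hi := windowCount_add_dinvSeq a i
  have hj := windowCount_add_dinvSeq a j
  rw [ha] at hi ⊢
  omega

theorem windowCount_comp_eq {a b : Fin n → ℕ} {σ : Equiv.Perm (Fin n)}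
    (hσ : ∀ i, b (σ i) = a i) {i : Fin n} (hd : dinvSeq b (σ i) = dinvSeq a i) :
    windowCount b (b (σ i)) (σ i) = windowCount a (a i) i := by
  have hcard : (Finset.univ.filter fun j ↦ a j = a i ∨ a j + 1 = a i).card =
      (Finset.univ.filter fun j ↦ b j = b (σ i) ∨ b j + 1 = b (σ i)).card :=
    Finset.card_equiv σ (by simp [hσ])
  have ha := windowCount_add_dinvSeq a i
  have hb := windowCount_add_dinvSeq b (σ i)
  omega

theorem HasUnitAscents.eq_of_dinvSeq_area_comp_eq {a b : Fin n → ℕ} (ha : HasUnitAscents a)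
    (hb : HasUnitAscents b) (σ : Equiv.Perm (Fin n))
    (h : (fun i ↦ (dinvSeq b i, b i)) ∘ σ = fun i ↦ (dinvSeq a i, a i)) : a = b := by
  have hσ : ∀ i, b (σ i) = a i := fun i ↦ congrArg Prod.snd (congrFun h i)
  have hd : ∀ i, dinvSeq b (σ i) = dinvSeq a i := fun i ↦ congrArg Prod.fst (congrFun h i)
  exact ha.eq_of_windowCount_comp_eq hb σ hσ fun i ↦ windowCount_comp_eq hσ (hd i)

end Dinv

section BivariateVandermonde

variable (R : Type*) [CommRing R] {ι : Type*} [Fintype ι]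

/-- The exponent vector of the monomial `∏ i, x_i ^ (E i).1 * y_i ^ (E i).2`, in the variables
`x_i = X (Sum.inl i)` and `y_i = X (Sum.inr i)`. -/
noncomputable def pairExponent (E : ι → ℕ × ℕ) : ι ⊕ ι →₀ ℕ :=
  Finsupp.equivFunOnFinite.symm (Sum.elim (fun i ↦ (E i).1) fun i ↦ (E i).2)

theorem pairExponent_injective : Function.Injective (pairExponent (ι := ι)) := by
  intro E F h
  have h' := Finsupp.equivFunOnFinite.symm.injective h
  exact funext fun i ↦ Prod.ext (congrFun h' (Sum.inl i)) (congrFun h' (Sum.inr i))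

theorem prod_X_pow_mul_X_pow_eq_monomial (E : ι → ℕ × ℕ) :
    ∏ i, ((X (Sum.inl i) : MvPolynomial (ι ⊕ ι) R) ^ (E i).1 * X (Sum.inr i) ^ (E i).2) =
      monomial (pairExponent E) 1 := by
  rw [monomial_eq, Finsupp.prod_fintype _ _ (by simp), Fintype.prod_sum_type,
    Finset.prod_mul_distrib]
  simp [pairExponent]

variable [DecidableEq ι]

/-- The bivariate Vandermonde determinant `det (x_i ^ (E j).1 * y_i ^ (E j).2)` over an arbitrary
commutative ring and index type; `biVandermonde` is the case of `ℂ` and `Fin n`. -/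
noncomputable def bivariateVandermonde (E : ι → ℕ × ℕ) : MvPolynomial (ι ⊕ ι) R :=
  (Matrix.of fun i j ↦ X (Sum.inl i) ^ (E j).1 * X (Sum.inr i) ^ (E j).2).det

theorem coeff_bivariateVandermonde (E F : ι → ℕ × ℕ) :
    coeff (pairExponent F) (bivariateVandermonde R E) =
      ∑ σ : Equiv.Perm ι, if E ∘ σ = F then ((Equiv.Perm.sign σ : ℤ) : R) else 0 := by
  rw [bivariateVandermonde, ← Matrix.det_transpose, Matrix.det_apply', coeff_sum]
  refine Finset.sum_congr rfl fun σ _ ↦ ?_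
  have hprod := prod_X_pow_mul_X_pow_eq_monomial R (E ∘ σ)
  simp only [Function.comp_apply] at hprod
  simp only [Matrix.transpose_apply, Matrix.of_apply, hprod]
  rw [← map_intCast (C : R →+* MvPolynomial (ι ⊕ ι) R), coeff_C_mul, coeff_monomial]
  simp [pairExponent_injective.eq_iff]

theorem coeff_bivariateVandermonde_self {E : ι → ℕ × ℕ} (hE : Function.Injective E) :
    coeff (pairExponent E) (bivariateVandermonde R E) = 1 := by
  have hone : ∀ σ : Equiv.Perm ι, E ∘ σ = E ↔ σ = 1 := fun σ ↦
    ⟨fun h ↦ Equiv.ext fun i ↦ hE (congrFun h i), by rintro rfl; rfl⟩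
  simp [coeff_bivariateVandermonde, hone]

theorem linearIndependent_bivariateVandermonde {κ : Type*} {E : κ → ι → ℕ × ℕ}
    (hinj : ∀ k, Function.Injective (E k))
    (hperm : ∀ k l (σ : Equiv.Perm ι), E l ∘ σ = E k → k = l) :
    LinearIndependent R fun k ↦ bivariateVandermonde R (E k) := by
  refine .of_pairwise_dual_eq_zero_one _ (fun k ↦ lcoeff R (pairExponent (E k)))
    (fun k l hkl ↦ ?_) fun k ↦ coeff_bivariateVandermonde_self R (hinj k)
  have hne : ∀ σ : Equiv.Perm ι, E l ∘ σ ≠ E k := fun σ h ↦ hkl (hperm k l σ h)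
  simp [coeff_bivariateVandermonde, hne]

end BivariateVandermonde

theorem biVandermonde_dyck_linearIndependent_general (R : Type*) [CommRing R] (n : ℕ) :
    LinearIndependent R (fun a : {a : Fin n → ℕ // HasUnitAscents a} ↦
      bivariateVandermonde R (fun i ↦ (dinvSeq a.1 i, a.1 i))) :=
  linearIndependent_bivariateVandermonde R (fun a ↦ injective_dinvSeq_area a.1) fun a b σ h ↦
    Subtype.ext (a.2.eq_of_dinvSeq_area_comp_eq b.2 σ h)

/-- The family of bivariate Vandermonde determinants `Δ_{X(π)}`, indexed by
Dyck paths `π` of semilength `n`, is linearly independent over `ℂ` in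
`ℂ[x_1,…,x_n,y_1,…,y_n]`. -/
theorem biVandermonde_dyck_linearIndependent (n : ℕ) (hn : 1 ≤ n) :
    LinearIndependent ℂ (fun π : {a : Fin n → ℕ // IsDyckArea a} =>
      biVandermonde n (fun i => (dinvSeq π.1 i, π.1 i))) :=
  (biVandermonde_dyck_linearIndependent_general ℂ n).comp
    (Subtype.map id fun _ ↦ IsDyckArea.hasUnitAscents)
    (Subtype.map_injective _ Function.injective_id)
end
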